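/- There exist universal constants c, C > 0 such that the following holds. Let n ≥ 2, let X be an isotropic, log-concave random vector in ℝⁿ, and let G be a standard Gaussian random vector in ℝⁿ. Then for every gauge function ‖·‖ on ℝⁿ, (c/log(n+1))·E‖G‖ ≤ E‖X‖ ≤ C·log(n+1)·E‖G‖. Equivalently, X is sandwiched in the gauge order between a centered Gaussian with covariance (c/log²(n+1))·Id and a centered Gaussian with covariance C·log²(n+1)·Id. -/

import Mathlib

/-!
The comparison runs stochastic localization on `μ`, with all processes replaced by explicit
formulas. For a time `t` and a vector `θ` let `μ_{t,θ}` be the probability measure with density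
proportional to `exp (⟪θ, x⟫ - t ‖x‖² / 2)` with respect to `μ`; write `a` for its barycenter and
`A` for its covariance. If `θ_t = t X + √t G` with `X ∼ μ` and `G` an independent standard Gaussian,
then `μ_{t,θ_t}` is the law of `X` given `θ_t`, and the time derivative of `𝔼 F(t, θ_t)` is the
expectation of `∂ₜF + ΔF/2 + a·∇F`. This Kolmogorov equation (`Cmp.kolm`) takes the place of the
stochastic differential equation. The generator kills `a` and maps `A` to `-A²` (`Cmp.Gn_Am`), while
the spatial derivative of `A` is the tensor of third central moments.

*Poincaré inequality.* The measure `μ_{t,θ}` has a `t`-uniformly convex potential. If moreover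
`A ≤ α`, its Poincaré constant is at most `√(α / t)`, improving on the classical `1 / t`
(`lichnerowicz`, `BLC.lichnerowicz`). With `L` the Langevin generator, Bochner's formula
combined with `‖∫ ∇u‖² ≤ α ∫ (Lu)²` turns a Poincaré constant `C` into `(α + C) / (1 + t C)`, and
the best constant is therefore at most `√(α / t)`. Passing from `∫ |∇u|² ≤ C ∫ (Lu)²` to the Poincaré
inequality uses that `L` maps test functions onto a dense subspace of the mean-zero part of `L²`,
which rests on the Liouville property `weak_const`. General log-concave densities are reached by
smooth convex approximation of the potential.

*The covariance stays near the identity.* Applied to quadratic forms, the Poincaré inequality bounds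
the third moments (`LCM.third`). Consequently the functional `Ph`, built from the power sum
`Tr (A - 1)^q`, satisfies `Gn Ph ≤ C₁ q² t^{-1/2} Ph` (`LCM.Gn_Ph_le`), and Grönwall's inequality
(`LCM.Ph_growth`) controls its mean. Choosing `q` of order `t^{-1/2}` shows that, with overwhelming
probability, `A` is comparable to the identity as long as `t ≤ c / log² (n + 1)` (`LCM.decay`,
`LCM.trace_bounds`).

*Comparison of gauges.* Let `w` be a mollification of the gauge and
`J(s) = 𝔼 w (a_s + (r₀ + r₁ s) G)`. Its derivative is a Gaussian average of
`½ Tr (A² D²w) + r₁ (r₀ + r₁ s) Tr D²w`. In `LCM.Jw_lower` the covariance term absorbs a slow decrease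
of the Gaussian scale, from `√t / 2` to `√t / 4`; together with Jensen's inequality
`𝔼 w(a_t) ≤ 𝔼 w(X)` this yields `𝔼‖X‖ ≥ c √t 𝔼‖G‖` (`LCM.lower`). In `LCM.Jw_upper` the same
derivative is bounded above, whence `𝔼‖a_t‖ ≤ C √t 𝔼‖G‖`; the identity `θ_t = t X + √t G` compares
`X` with `a_t` at the cost of `2 𝔼‖G‖ / √t` (`Cmp.static`, `LCM.upper`). Taking `√t` of order
`1 / log (n + 1)` gives the two bounds.

All this is done for compactly supported `μ` with bounded density and covariance close to the
identity; an isotropic log-concave measure is the limit of such measures (`muk_tendsto`,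
`comparison`).
-/

open MeasureTheory Real Pointwise RealInnerProductSpace
open scoped ENNReal

noncomputable section

/-- A convex body: a compact convex set with non-empty interior. -/
def IsConvexBody {n : ℕ} (K : Set (EuclideanSpace ℝ (Fin n))) : Prop :=
  IsCompact K ∧ Convex ℝ K ∧ (interior K).Nonempty

/-- The uniform probability measure on a set `K`. -/
def unifOn {n : ℕ} (K : Set (EuclideanSpace ℝ (Fin n))) : Measure (EuclideanSpace ℝ (Fin n)) :=
  (volume K)⁻¹ • volume.restrict K

/-- A probability measure `μ` on `ℝⁿ` is isotropic: its barycenter vanishes and its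
covariance matrix is the identity. -/
def IsIsotropicMeasure {n : ℕ} (μ : Measure (EuclideanSpace ℝ (Fin n))) : Prop :=
  (∀ i, ∫ x, x i ∂μ = 0) ∧ ∀ i j, ∫ x, x i * x j ∂μ = if i = j then 1 else 0

/-- A convex body is in isotropic position if the uniform probability measure on it
is isotropic. -/
def IsIsotropicBody {n : ℕ} (K : Set (EuclideanSpace ℝ (Fin n))) : Prop :=
  IsIsotropicMeasure (unifOn K)

/-- A log-concave density: nonnegative, and multiplicatively convex. This is equivalent to:
`{p > 0}` is convex and `log (1/p)` is convex on it. -/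
def IsLogConcaveDensity {n : ℕ} (p : EuclideanSpace ℝ (Fin n) → ℝ) : Prop :=
  (∀ x, 0 ≤ p x) ∧ ∀ x y : EuclideanSpace ℝ (Fin n), ∀ t : ℝ, 0 ≤ t → t ≤ 1 →
    p x ^ t * p y ^ (1 - t) ≤ p (t • x + (1 - t) • y)

/-- A measure on `ℝⁿ` is log-concave if it has a log-concave density w.r.t. Lebesgue. -/
def IsLogConcaveMeasure {n : ℕ} (μ : Measure (EuclideanSpace ℝ (Fin n))) : Prop :=
  ∃ p : EuclideanSpace ℝ (Fin n) → ℝ, Measurable p ∧ IsLogConcaveDensity p ∧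
    μ = volume.withDensity fun x => ENNReal.ofReal (p x)

/-- The standard Gaussian probability measure on `ℝⁿ`. -/
def stdGaussian (n : ℕ) : Measure (EuclideanSpace ℝ (Fin n)) :=
  volume.withDensity fun x => ENNReal.ofReal ((2 * π) ^ (-(n : ℝ) / 2) * Real.exp (-‖x‖ ^ 2 / 2))

/-- The Poincaré constant of a measure: the least `A ≥ 0` such that
`Var f ≤ A ⬝ E |∇ f|²` for all locally Lipschitz `f`. -/
def poincareConst {n : ℕ} (μ : Measure (EuclideanSpace ℝ (Fin n))) : ℝ :=
  sInf {A : ℝ | 0 ≤ A ∧ ∀ f : EuclideanSpace ℝ (Fin n) → ℝ, LocallyLipschitz f →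
    ∫ x, (f x - ∫ y, f y ∂μ) ^ 2 ∂μ ≤ A * ∫ x, ‖gradient f x‖ ^ 2 ∂μ}

/-- The KLS constant `ψₙ`. -/
def KLSConst (n : ℕ) : ℝ :=
  sSup {s : ℝ | ∃ μ : Measure (EuclideanSpace ℝ (Fin n)), IsProbabilityMeasure μ ∧
    IsLogConcaveMeasure μ ∧ IsIsotropicMeasure μ ∧ s = Real.sqrt (poincareConst μ)}

/-- The Hilbert-Schmidt norm of a matrix. -/
def hsNorm {n : ℕ} (M : Matrix (Fin n) (Fin n) ℝ) : ℝ :=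
  Real.sqrt (∑ i, ∑ j, (M i j) ^ 2)

/-- The coefficient `κₙ`, the supremum of `‖E [X₁ (X ⊗ X)]‖_HS` over all isotropic
log-concave random vectors `X` in `ℝⁿ`. -/
def kappaConst (n : ℕ) : ℝ :=
  sSup {s : ℝ | ∃ μ : Measure (EuclideanSpace ℝ (Fin n)), IsProbabilityMeasure μ ∧
    IsLogConcaveMeasure μ ∧ IsIsotropicMeasure μ ∧ ∃ h : 0 < n,
    s = hsNorm (Matrix.of fun i j => ∫ x, x ⟨0, h⟩ * (x i * x j) ∂μ)}

/-- A gauge function on `ℝⁿ`: non-negative, convex, positively homogeneous. -/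
def IsGauge {n : ℕ} (f : EuclideanSpace ℝ (Fin n) → ℝ) : Prop :=
  (∀ x, 0 ≤ f x) ∧ ConvexOn ℝ Set.univ f ∧
    ∀ (c : ℝ), 0 ≤ c → ∀ x, f (c • x) = c * f x

/-- `M(K)`: the mean of the Minkowski functional of `K` over the unit sphere, w.r.t. the
uniform probability measure on the sphere. -/
def Mparam (n : ℕ) (K : Set (EuclideanSpace ℝ (Fin n))) : ℝ :=
  ∫ x : Metric.sphere (0 : EuclideanSpace ℝ (Fin n)) 1,
    gauge K x ∂(((volume : Measure (EuclideanSpace ℝ (Fin n))).toSphere Set.univ)⁻¹ •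
      (volume : Measure (EuclideanSpace ℝ (Fin n))).toSphere)

/-- The polar body. -/
def polarBody {n : ℕ} (K : Set (EuclideanSpace ℝ (Fin n))) : Set (EuclideanSpace ℝ (Fin n)) :=
  {x | ∀ y ∈ K, ⟪x, y⟫ ≤ 1}

/-- `R(K)`: the maximal Euclidean norm of a point of `K`. -/
def Rparam {n : ℕ} (K : Set (EuclideanSpace ℝ (Fin n))) : ℝ :=
  sSup {r : ℝ | ∃ x ∈ K, r = ‖x‖}

/-- The operator norm `‖A : K → T‖ = sup_{x ≠ 0} ‖Ax‖_T / ‖x‖_K` (Minkowski functionals). -/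
def mapNorm {n : ℕ} (K T : Set (EuclideanSpace ℝ (Fin n)))
    (A : Matrix (Fin n) (Fin n) ℝ) : ℝ :=
  sSup {r : ℝ | ∃ x : EuclideanSpace ℝ (Fin n), x ≠ 0 ∧
    r = gauge T (Matrix.toEuclideanLin A x) / gauge K x}

/-- The ℓ₂ operator norm of a matrix. -/
def matOpNorm {n : ℕ} (M : Matrix (Fin n) (Fin n) ℝ) : ℝ :=
  ‖LinearMap.toContinuousLinearMap (Matrix.toEuclideanLin M)‖

namespace GaugeLog
open scoped ContDiff

/-! ### Directional derivatives -/

/-- Euclidean space of dimension `n`. -/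
abbrev E (n : ℕ) : Type := EuclideanSpace ℝ (Fin n)

section Calc
variable {V : Type} [NormedAddCommGroup V] [NormedSpace ℝ V]

/-- The derivative of a scalar function in the fixed direction `v`. -/
def dd (v : V) (F : V → ℝ) : V → ℝ := fun x => fderiv ℝ F x v

/-- Smooth scalar functions. -/
abbrev Sm (F : V → ℝ) : Prop := ContDiff ℝ ∞ F

lemma Sm.differentiable {F : V → ℝ} (h : Sm F) : Differentiable ℝ F :=
  ContDiff.differentiable h (by simp)

lemma Sm.dd {F : V → ℝ} (h : Sm F) (v : V) : Sm (dd v F) :=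
  (h.fderiv_right (m := ∞) (by simp)).clm_apply contDiff_const

lemma dd_add {F G : V → ℝ} (hF : Sm F) (hG : Sm G) (v : V) :
    dd v (fun x => F x + G x) = fun x => dd v F x + dd v G x := by
  funext x
  simp [dd, fderiv_fun_add (hF.differentiable x) (hG.differentiable x)]

lemma dd_sub {F G : V → ℝ} (hF : Sm F) (hG : Sm G) (v : V) :
    dd v (fun x => F x - G x) = fun x => dd v F x - dd v G x := by
  funext x
  simp [dd, fderiv_fun_sub (hF.differentiable x) (hG.differentiable x)]

lemma dd_neg (F : V → ℝ) (v : V) :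
    dd v (fun x => - F x) = fun x => - dd v F x := by
  funext x
  simp [dd, fderiv_fun_neg]

lemma dd_mul {F G : V → ℝ} (hF : Sm F) (hG : Sm G) (v : V) :
    dd v (fun x => F x * G x) = fun x => dd v F x * G x + F x * dd v G x := by
  funext x
  simp [dd, fderiv_fun_mul (hF.differentiable x) (hG.differentiable x)]
  ring

lemma dd_const_mul {F : V → ℝ} (hF : Sm F) (c : ℝ) (v : V) :
    dd v (fun x => c * F x) = fun x => c * dd v F x := by
  funext x
  simp [dd, fderiv_const_mul (hF.differentiable x)]

lemma dd_const (c : ℝ) (v : V) : dd v (fun _ : V => c) = fun _ => 0 := by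
  funext x; simp [dd]

lemma dd_sum {ι : Type*} (s : Finset ι) {F : ι → V → ℝ} (hF : ∀ i, Sm (F i)) (v : V) :
    dd v (fun x => ∑ i ∈ s, F i x) = fun x => ∑ i ∈ s, dd v (F i) x := by
  funext x
  simp only [dd]
  rw [fderiv_fun_sum (fun i _ => (hF i).differentiable x)]
  simp

lemma dd_exp {F : V → ℝ} (hF : Sm F) (v : V) :
    dd v (fun x => Real.exp (F x)) = fun x => Real.exp (F x) * dd v F x := by
  funext x
  simp [dd, fderiv_exp (hF.differentiable x)]

lemma dd_comm {F : V → ℝ} (hF : Sm F) (v w : V) : dd v (dd w F) = dd w (dd v F) := by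
  funext x
  have h2 : IsSymmSndFDerivAt ℝ F x := by
    apply ContDiffAt.isSymmSndFDerivAt (n := ∞) hF.contDiffAt
    rw [minSmoothness_of_isRCLikeNormedField]
    exact WithTop.coe_le_coe.2 le_top
  have hd : DifferentiableAt ℝ (fderiv ℝ F) x :=
    ((hF.fderiv_right (m := ∞) (by simp)).differentiable (by simp)) x
  have key : ∀ a b : V, dd a (dd b F) x = fderiv ℝ (fderiv ℝ F) x a b := by
    intro a b
    change fderiv ℝ (fun y => fderiv ℝ F y b) x a = _
    rw [fderiv_clm_apply hd (differentiableAt_const b)]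
    simp
  rw [key, key]
  exact h2 v w

lemma dd_hasCompactSupport {F : V → ℝ} (hF : HasCompactSupport F) (v : V) :
    HasCompactSupport (dd v F) := hF.fderiv_apply ℝ v

variable [MeasurableSpace V] [BorelSpace V] [FiniteDimensional ℝ V]

/-- Integration by parts against a compactly supported function. -/
lemma integral_dd_mul (μ : Measure V) [μ.IsAddHaarMeasure] {F G : V → ℝ} (hF : Sm F) (hG : Sm G)
    (hc : HasCompactSupport G) (v : V) :
    ∫ x, dd v F x * G x ∂μ = - ∫ x, F x * dd v G x ∂μ := by
  have h := integral_mul_fderiv_eq_neg_fderiv_mul_of_integrable (μ := μ) (f := F) (g := G) (v := v)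
    ?_ ?_ ?_ (fun x _ => hF.differentiable x) (fun x _ => hG.differentiable x)
  · simp only [dd]; rw [h]; simp
  · exact ((hF.dd v).continuous.mul hG.continuous).integrable_of_hasCompactSupport hc.mul_left
  · exact (hF.continuous.mul (hG.dd v).continuous).integrable_of_hasCompactSupport
      (dd_hasCompactSupport hc v).mul_left
  · exact (hF.continuous.mul hG.continuous).integrable_of_hasCompactSupport hc.mul_left

end Calc
end GaugeLog

namespace GaugeLog
open scoped ContDiff

/-! ### Mollification -/

section Conv
variable {n : ℕ}

/-- The convolution of `g` with the kernel `φ`, with respect to Lebesgue measure. -/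
def cv (g φ : E n → ℝ) (x : E n) : ℝ := ∫ y, g y * φ (x - y)

lemma cv_eq (g φ : E n → ℝ) :
    cv g φ = convolution g φ (ContinuousLinearMap.mul ℝ ℝ) volume := by
  funext x; simp [cv, convolution_def]

lemma sm_cv {g φ : E n → ℝ} (hg : LocallyIntegrable g) (hφ : Sm φ) (hc : HasCompactSupport φ) :
    Sm (cv g φ) := by
  rw [cv_eq]
  exact hc.contDiff_convolution_right _ hg hφ

lemma dd_cv {g φ : E n → ℝ} (hg : LocallyIntegrable g) (hφ : Sm φ) (hc : HasCompactSupport φ)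
    (v : E n) : dd v (cv g φ) = cv g (dd v φ) := by
  funext x
  have h := hc.hasFDerivAt_convolution_right (ContinuousLinearMap.mul ℝ ℝ) hg
    (hφ.of_le (by simp)) x
  rw [← cv_eq] at h
  rw [dd, h.fderiv]
  rw [cv, convolution_def, ContinuousLinearMap.integral_apply]
  · simp [dd]
  · have := (hc.fderiv ℝ).convolutionExists_right ((ContinuousLinearMap.mul ℝ ℝ).precompR (E n)) hg
      (hφ.continuous_fderiv (by simp)) x
    exact this

lemma integrable_cv {g φ : E n → ℝ} (hg : LocallyIntegrable g) (hφ : Continuous φ)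
    (hc : HasCompactSupport φ) (x : E n) : Integrable (fun y => g y * φ (x - y)) := by
  have := hc.convolutionExists_right (ContinuousLinearMap.mul ℝ ℝ) hg hφ x
  exact this

/-- A mollifier of radius `ε`: a smooth, even, non-negative kernel of mass one. -/
structure Moll (n : ℕ) (ε : ℝ) where
  φ : E n → ℝ
  sm : Sm φ
  cs : HasCompactSupport φ
  nonneg : ∀ x, 0 ≤ φ x
  even : ∀ x, φ (-x) = φ x
  mass : ∫ x, φ x = 1
  supp : ∀ x, ε < ‖x‖ → φ x = 0

/-- The bump function with radii `ε / 2` and `ε`. -/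
def bump (n : ℕ) (ε : ℝ) (hε : 0 < ε) : ContDiffBump (0 : E n) :=
  ⟨ε / 2, ε, by linarith, by linarith⟩

/-- The standard mollifier. -/
def moll (n : ℕ) (ε : ℝ) (hε : 0 < ε) : Moll n ε where
  φ := (bump n ε hε).normed volume
  sm := (bump n ε hε).contDiff_normed
  cs := (bump n ε hε).hasCompactSupport_normed
  nonneg := (bump n ε hε).nonneg_normed
  even := (bump n ε hε).normed_neg
  mass := (bump n ε hε).integral_normed
  supp := by
    intro x hx
    by_contra h
    have : x ∈ Function.support ((bump n ε hε).normed volume) := h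
    rw [ContDiffBump.support_normed_eq] at this
    simp only [Metric.mem_ball, dist_zero_right, bump] at this
    linarith

variable {ε : ℝ} (M : Moll n ε)

lemma Moll.symm (x y : E n) : M.φ (x - y) = M.φ (y - x) := by
  rw [← M.even, neg_sub]

lemma Moll.integral_kernel (x : E n) : ∫ y, M.φ (x - y) = 1 := by
  rw [integral_sub_left_eq_self (fun y => M.φ y) volume x, M.mass]

lemma Moll.integrable_kernel (x : E n) : Integrable fun y => M.φ (x - y) :=
  (M.sm.continuous.integrable_of_hasCompactSupport M.cs).comp_sub_left x

lemma locallyIntegrable_abs {v : E n → ℝ} (hv : LocallyIntegrable v) :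
    LocallyIntegrable fun y => |v y| := fun x => (hv x).norm

/-- Jensen's inequality for a mollifier. -/
lemma Moll.jensen {v : E n → ℝ} (hv : LocallyIntegrable v)
    (hv2 : LocallyIntegrable fun y => v y ^ 2) (x : E n) :
    cv (fun y => |v y|) M.φ x ^ 2 ≤ cv (fun y => v y ^ 2) M.φ x := by
  set c := cv (fun y => |v y|) M.φ x with hc
  have i1 := integrable_cv (locallyIntegrable_abs hv) M.sm.continuous M.cs x
  have i2 := integrable_cv hv2 M.sm.continuous M.cs x
  have i3 := M.integrable_kernel x
  have h : ∫ y, (2 * c) * (|v y| * M.φ (x - y)) ≤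
      ∫ y, (v y ^ 2 * M.φ (x - y) + c ^ 2 * M.φ (x - y)) := by
    apply integral_mono
    · exact i1.const_mul _
    · exact i2.add (i3.const_mul _)
    · intro y
      have : 0 ≤ (|v y| - c) ^ 2 * M.φ (x - y) := mul_nonneg (sq_nonneg _) (M.nonneg _)
      have e : |v y| ^ 2 = v y ^ 2 := sq_abs _
      simp only
      rw [← e]
      nlinarith [this]
  rw [integral_const_mul, integral_add i2 (i3.const_mul _), integral_const_mul,
    M.integral_kernel] at h
  change (2 * c) * c ≤ cv (fun y => v y ^ 2) M.φ x + _ at h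
  nlinarith

lemma Moll.integrable_prod {h : E n → ℝ} (hh : Integrable h) :
    Integrable (fun z : E n × E n => h z.2 * M.φ (z.1 - z.2)) (volume.prod volume) := by
  have hφ : Integrable M.φ := M.sm.continuous.integrable_of_hasCompactSupport M.cs
  have := hh.convolution_integrand (ContinuousLinearMap.mul ℝ ℝ) hφ
  simpa using this

lemma Moll.integrable_cv {h : E n → ℝ} (hh : Integrable h) : Integrable (cv h M.φ) :=
  (M.integrable_prod hh).integral_prod_left

lemma Moll.integral_cv {h : E n → ℝ} (hh : Integrable h) : ∫ x, cv h M.φ x = ∫ x, h x := by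
  have := integral_integral_swap (f := fun x y : E n => h y * M.φ (x - y)) (M.integrable_prod hh)
  simp only [cv]
  rw [this]
  congr 1; funext y
  rw [integral_const_mul]
  have := integral_sub_right_eq_self (μ := (volume : Measure (E n))) (fun x => M.φ x) y
  rw [this, M.mass, mul_one]

/-- Mollification is symmetric. -/
lemma Moll.integral_cv_mul {h k : E n → ℝ} (hh : Integrable h) (hk : Continuous k)
    (hkc : HasCompactSupport k) :
    ∫ x, cv h M.φ x * k x = ∫ x, h x * cv k M.φ x := by
  have hb : ∃ C, ∀ x, ‖k x‖ ≤ C := hkc.exists_bound_of_continuous hk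
  obtain ⟨C, hC⟩ := hb
  have hInt : Integrable (fun z : E n × E n => h z.2 * M.φ (z.1 - z.2) * k z.1)
      (volume.prod volume) :=
    (M.integrable_prod hh).mul_bdd (c := C)
      (hk.comp continuous_fst).aestronglyMeasurable (Filter.Eventually.of_forall fun z => hC z.1)
  have := integral_integral_swap (f := fun x y : E n => h y * M.φ (x - y) * k x) hInt
  simp only [cv]
  simp_rw [← integral_mul_const, ← integral_const_mul]
  rw [this]
  congr 1; funext y
  congr 1; funext x
  rw [M.symm]; ring

/-- The mollification is close to the function when the latter oscillates little. -/
lemma Moll.abs_cv_sub_le {k : E n → ℝ} (hk : LocallyIntegrable k) (x : E n) {δ : ℝ}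
    (h : ∀ y, ‖x - y‖ ≤ ε → |k y - k x| ≤ δ) : |cv k M.φ x - k x| ≤ δ := by
  have i1 := GaugeLog.integrable_cv hk M.sm.continuous M.cs x
  have i3 := M.integrable_kernel x
  have e : cv k M.φ x - k x = ∫ y, (k y - k x) * M.φ (x - y) := by
    simp_rw [sub_mul]
    rw [integral_sub i1 (i3.const_mul _), integral_const_mul, M.integral_kernel, mul_one]; rfl
  rw [e]
  have : ∀ y, ‖(k y - k x) * M.φ (x - y)‖ ≤ δ * M.φ (x - y) := by
    intro y
    rw [norm_mul, Real.norm_eq_abs, Real.norm_of_nonneg (M.nonneg _)]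
    rcases le_or_gt ‖x - y‖ ε with hy | hy
    · exact mul_le_mul_of_nonneg_right (h y hy) (M.nonneg _)
    · rw [M.supp _ hy]; simp
  have := norm_integral_le_of_norm_le (i3.const_mul δ) (Filter.Eventually.of_forall this)
  rw [integral_const_mul, M.integral_kernel, mul_one] at this
  exact this

end Conv
end GaugeLog

namespace GaugeLog
open scoped ContDiff

/-! ### Weakly harmonic functions are constant -/

section Orth
variable {n : ℕ}

/-- The standard basis vectors. -/
def ei (i : Fin n) : E n := EuclideanSpace.single i (1 : ℝ)

/-- The generator `-Δ + ∇U·∇` of the Langevin dynamics with potential `U`. -/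
def Lop (U u : E n → ℝ) (x : E n) : ℝ :=
  -(∑ i, dd (ei i) (dd (ei i) u) x) + ∑ i, dd (ei i) U x * dd (ei i) u x

lemma dd_comp_sub {φ : E n → ℝ} (hφ : Sm φ) (x v : E n) :
    dd v (fun y => φ (x - y)) = fun y => - dd v φ (x - y) := by
  funext y
  have h : HasFDerivAt (fun y => φ (x - y))
      ((fderiv ℝ φ (x - y)).comp (-(ContinuousLinearMap.id ℝ (E n)))) y :=
    HasFDerivAt.comp y (hφ.differentiable (x - y)).hasFDerivAt
      ((hasFDerivAt_id y).const_sub x)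
  simp [dd, h.fderiv]

lemma sm_comp_sub {φ : E n → ℝ} (hφ : Sm φ) (x : E n) : Sm fun y => φ (x - y) :=
  ContDiff.comp hφ (contDiff_const.sub contDiff_id)

lemma cs_comp_sub {φ : E n → ℝ} (hφ : HasCompactSupport φ) (x : E n) :
    HasCompactSupport fun y => φ (x - y) :=
  hφ.comp_homeomorph (Homeomorph.subLeft x)

variable {U w : E n → ℝ}

lemma locInt_mul {v g : E n → ℝ} (hv : LocallyIntegrable v) (hg : Continuous g) :
    LocallyIntegrable fun x => v x * g x := by
  have := hv.smul_continuous hg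
  refine this.congr ?_
  filter_upwards with x
  simp

/-- The mollified flux of a weak solution is divergence free. -/
lemma div_flux {ε : ℝ} (M : Moll n ε) (hU : Sm U) {v : E n → ℝ} (hv : LocallyIntegrable v)
    (H : ∀ u, Sm u → HasCompactSupport u → ∫ x, v x * Lop U u x = 0) (x : E n) :
    ∑ i, dd (ei i) (fun z => dd (ei i) (cv v M.φ) z + cv (fun y => v y * dd (ei i) U y) M.φ z) x
      = 0 := by
  have h := H (fun y => M.φ (x - y)) (sm_comp_sub M.sm x) (cs_comp_sub M.cs x)
  have hl : ∀ i, LocallyIntegrable fun y => v y * dd (ei i) U y :=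
    fun i => locInt_mul hv (hU.dd _).continuous
  have hcs := fun i => dd_hasCompactSupport M.cs (ei i)
  have hcs2 := fun i => dd_hasCompactSupport (hcs i) (ei i)
  have e1 : ∀ i, dd (ei i) (fun z => dd (ei i) (cv v M.φ) z +
      cv (fun y => v y * dd (ei i) U y) M.φ z) x =
      cv v (dd (ei i) (dd (ei i) M.φ)) x + cv (fun y => v y * dd (ei i) U y) (dd (ei i) M.φ) x := by
    intro i
    rw [dd_add ((sm_cv hv M.sm M.cs).dd _) (sm_cv (hl i) M.sm M.cs)]
    rw [dd_cv hv M.sm M.cs, dd_cv hv (M.sm.dd _) (hcs i), dd_cv (hl i) M.sm M.cs]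
  simp_rw [e1]
  have e2 : ∀ y, v y * Lop U (fun y => M.φ (x - y)) y =
      - ∑ i, (v y * dd (ei i) (dd (ei i) M.φ) (x - y) +
        v y * dd (ei i) U y * dd (ei i) M.φ (x - y)) := by
    intro y
    rw [Lop]
    simp_rw [dd_comp_sub M.sm, dd_neg, dd_comp_sub (M.sm.dd _)]
    rw [Finset.sum_add_distrib, neg_add, mul_add]
    simp only [neg_neg, mul_neg, Finset.mul_sum, Finset.sum_neg_distrib, mul_assoc]
  simp_rw [e2] at h
  have i1 := fun i => integrable_cv hv ((M.sm.dd (ei i)).dd (ei i)).continuous (hcs2 i) x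
  have i2 := fun i => integrable_cv (hl i) (M.sm.dd (ei i)).continuous (hcs i) x
  rw [integral_neg, integral_finsetSum _ (fun i _ => (i1 i).fun_add (i2 i))] at h
  simp_rw [fun i => integral_add (i1 i) (i2 i)] at h
  simpa [cv] using h

/-- Caccioppoli's estimate for the mollification of a weak solution `w`, in terms of the
oscillation of the potential at scale `ε`. -/
lemma caccioppoli {ε : ℝ} (M : Moll n ε) (hU : Sm U) (hw : LocallyIntegrable w)
    (hh : Integrable fun x => w x ^ 2 * exp (-U x))
    (H : ∀ u, Sm u → HasCompactSupport u → ∫ x, w x * exp (-U x) * Lop U u x = 0)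
    {χ : E n → ℝ} (hχ : Sm χ) (hχc : HasCompactSupport χ) (hχ1 : ∀ x, |χ x| ≤ 1)
    {G τ : ℝ} (hG : ∀ i x, |dd (ei i) χ x| ≤ G)
    (hτ : ∀ x ∈ tsupport χ, ∀ y, ‖x - y‖ ≤ ε → ∀ i, |dd (ei i) U y - dd (ei i) U x| ≤ τ)
    (h2 : ∀ x ∈ tsupport χ, ∀ y, ‖x - y‖ ≤ ε → exp (U x) ≤ 2 * exp (U y)) :
    ∑ i, ∫ x, χ x ^ 2 *
        dd (ei i) (fun z => exp (U z) * cv (fun y => w y * exp (-U y)) M.φ z) x ^ 2 * exp (-U x) ≤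
      n * (20 * G ^ 2 + 8 * τ ^ 2) * ∫ x, w x ^ 2 * exp (-U x) := by
  set v : E n → ℝ := fun y => w y * exp (-U y) with hvdef
  set h : E n → ℝ := fun x => w x ^ 2 * exp (-U x) with hhdef
  have hUn : Continuous fun y => exp (-U y) := by fun_prop
  have hv : LocallyIntegrable v := locInt_mul hw hUn
  have hv2 : LocallyIntegrable fun y => v y ^ 2 := by
    refine (locInt_mul hh.locallyIntegrable hUn).congr ?_
    filter_upwards with y
    simp only [hvdef, hhdef]; ring
  set vε := cv v M.φ with hvε
  have svε : Sm vε := sm_cv hv M.sm M.cs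
  have seU : Sm fun z => exp (U z) := hU.exp
  have seU' : Sm fun z => exp (-U z) := hU.neg.exp
  set wε : E n → ℝ := fun z => exp (U z) * vε z with hwε
  have swε : Sm wε := seU.mul svε
  have hl : ∀ i, LocallyIntegrable fun y => v y * dd (ei i) U y :=
    fun i => locInt_mul hv (hU.dd _).continuous
  set Y : Fin n → E n → ℝ := fun i z => dd (ei i) vε z + cv (fun y => v y * dd (ei i) U y) M.φ z
    with hY
  have sY : ∀ i, Sm (Y i) := fun i => (svε.dd _).add (sm_cv (hl i) M.sm M.cs)
  set ψ : E n → ℝ := fun x => χ x ^ 2 * wε x with hψ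
  have sψ : Sm ψ := (hχ.pow 2).mul swε
  have cψ : HasCompactSupport ψ := by
    refine hχc.mono ?_
    intro x hx
    simp only [Function.mem_support, hψ] at hx ⊢
    intro h0; apply hx; simp [h0]
  have hdiv : ∑ i, ∫ x, Y i x * dd (ei i) ψ x = 0 := by
    have e : ∀ i, ∫ x, Y i x * dd (ei i) ψ x = - ∫ x, dd (ei i) (Y i) x * ψ x := by
      intro i; rw [integral_dd_mul volume (sY i) sψ cψ, neg_neg]
    simp_rw [e]
    rw [Finset.sum_neg_distrib, ← integral_finsetSum, integral_eq_zero_of_ae, neg_zero]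
    · filter_upwards with x
      rw [← Finset.sum_mul, div_flux M hU hv H x]; simp
    · intro i _
      exact (((sY i).dd _).continuous.mul sψ.continuous).integrable_of_hasCompactSupport
        cψ.mul_left
  set Q : E n → ℝ := cv h M.φ with hQ
  have hQ0 : ∀ x, 0 ≤ Q x := by
    intro x
    apply integral_nonneg
    intro y
    have := M.nonneg (x - y)
    simp only [hhdef]
    positivity
  have iv := fun x => integrable_cv hv M.sm.continuous M.cs x
  have iav := fun x => integrable_cv (locallyIntegrable_abs hv) M.sm.continuous M.cs x
  have iv2 := fun x => integrable_cv hv2 M.sm.continuous M.cs x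
  have ih := fun x => integrable_cv hh.locallyIntegrable M.sm.continuous M.cs x
  have hK : ∀ x ∈ tsupport χ, exp (U x) * cv (fun y => |v y|) M.φ x ^ 2 ≤ 2 * Q x := by
    intro x hx
    refine (mul_le_mul_of_nonneg_left (M.jensen hv hv2 x) (exp_pos _).le).trans ?_
    simp only [cv, hQ]
    rw [← integral_const_mul, ← integral_const_mul]
    apply integral_mono ((iv2 x).const_mul _) ((ih x).const_mul _)
    intro y
    rcases le_or_gt ‖x - y‖ ε with hy | hy
    · have h3 := h2 x hx y hy
      have e : h y = v y ^ 2 * exp (U y) := by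
        simp only [hvdef, hhdef]
        rw [mul_pow, ← Real.exp_nat_mul, mul_assoc, ← Real.exp_add]
        congr 2; push_cast; ring
      simp only [e]
      have : 0 ≤ v y ^ 2 * M.φ (x - y) := mul_nonneg (sq_nonneg _) (M.nonneg _)
      nlinarith
    · simp [M.supp _ hy]
  have hvle : ∀ x, |vε x| ≤ cv (fun y => |v y|) M.φ x := by
    intro x
    refine (norm_integral_le_integral_norm (fun y => v y * M.φ (x - y))).trans (le_of_eq ?_)
    simp only [cv, norm_mul, Real.norm_eq_abs, abs_of_nonneg (M.nonneg _)]
  have hRle : ∀ i, ∀ x ∈ tsupport χ,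
      |cv (fun y => v y * dd (ei i) U y) M.φ x - dd (ei i) U x * vε x| ≤
        τ * cv (fun y => |v y|) M.φ x := by
    intro i x hx
    have i2 := integrable_cv (hl i) M.sm.continuous M.cs x
    have e : cv (fun y => v y * dd (ei i) U y) M.φ x - dd (ei i) U x * vε x =
        ∫ y, (v y * dd (ei i) U y * M.φ (x - y) - dd (ei i) U x * (v y * M.φ (x - y))) := by
      rw [integral_sub i2 ((iv x).const_mul _), integral_const_mul]; rfl
    rw [e]
    have hb : ∀ y, ‖v y * dd (ei i) U y * M.φ (x - y) - dd (ei i) U x * (v y * M.φ (x - y))‖ ≤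
        τ * (|v y| * M.φ (x - y)) := by
      intro y
      rw [show v y * dd (ei i) U y * M.φ (x - y) - dd (ei i) U x * (v y * M.φ (x - y)) =
        (dd (ei i) U y - dd (ei i) U x) * (v y * M.φ (x - y)) by ring, norm_mul, norm_mul,
        Real.norm_eq_abs, Real.norm_eq_abs, Real.norm_eq_abs, abs_of_nonneg (M.nonneg _)]
      rcases le_or_gt ‖x - y‖ ε with hy | hy
      · exact mul_le_mul_of_nonneg_right (hτ x hx y hy i)
          (mul_nonneg (abs_nonneg _) (M.nonneg _))
      · simp [M.supp _ hy]
    have := norm_integral_le_of_norm_le ((iav x).const_mul τ) (Filter.Eventually.of_forall hb)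
    rw [integral_const_mul] at this
    exact this
  have dψ : ∀ i x, dd (ei i) ψ x =
      χ x * (χ x * dd (ei i) wε x + 2 * (dd (ei i) χ x * wε x)) := by
    intro i x
    have e : ψ = fun x => (χ x * χ x) * wε x := by funext x; simp only [hψ]; ring
    rw [e, dd_mul (hχ.mul hχ) swε, dd_mul hχ hχ]
    ring
  have hYe : ∀ i x, Y i x = exp (-U x) * (dd (ei i) wε x +
      exp (U x) * (cv (fun y => v y * dd (ei i) U y) M.φ x - dd (ei i) U x * vε x)) := by
    intro i x
    have e : dd (ei i) wε x = exp (U x) * dd (ei i) U x * vε x + exp (U x) * dd (ei i) vε x := by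
      rw [hwε, dd_mul seU svε, dd_exp hU]
    have e3 : exp (-U x) * exp (U x) = 1 := by rw [← Real.exp_add]; simp
    rw [e]
    simp only [hY]
    linear_combination (-(dd (ei i) vε x + cv (fun y => v y * dd (ei i) U y) M.φ x)) * e3
  have key : ∀ i x, χ x ^ 2 * dd (ei i) wε x ^ 2 * exp (-U x) ≤
      2 * (Y i x * dd (ei i) ψ x) + (20 * G ^ 2 + 8 * τ ^ 2) * Q x := by
    intro i x
    by_cases hx : x ∈ tsupport χ
    · set c := cv (fun y => |v y|) M.φ x with hc
      set R := cv (fun y => v y * dd (ei i) U y) M.φ x - dd (ei i) U x * vε x with hR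
      have h4 := hK x hx
      have h5 := hRle i x hx
      have h6 := hvle x
      have h7 := hG i x
      have h8 := hχ1 x
      have hc0 : 0 ≤ c := (abs_nonneg _).trans h6
      have e3 : exp (-U x) * exp (U x) = 1 := by rw [← Real.exp_add]; simp
      rw [dψ, hYe]
      have hb : (dd (ei i) χ x * wε x) ^ 2 * exp (-U x) ≤ G ^ 2 * (2 * Q x) := by
        have e : (dd (ei i) χ x * wε x) ^ 2 * exp (-U x) =
            dd (ei i) χ x ^ 2 * (exp (U x) * vε x ^ 2) := by
          simp only [hwε]
          linear_combination (dd (ei i) χ x ^ 2 * exp (U x) * vε x ^ 2) * e3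
        rw [e]
        apply mul_le_mul (sq_le_sq' (by linarith [abs_le.1 h7]) (abs_le.1 h7).2) ?_
          (by positivity) (sq_nonneg _)
        refine le_trans ?_ h4
        exact mul_le_mul_of_nonneg_left (sq_le_sq' (by linarith [abs_le.1 h6]) (abs_le.1 h6).2)
          (exp_pos _).le
      have hr : (χ x * (exp (U x) * R)) ^ 2 * exp (-U x) ≤ τ ^ 2 * (2 * Q x) := by
        have e : (χ x * (exp (U x) * R)) ^ 2 * exp (-U x) = χ x ^ 2 * (exp (U x) * R ^ 2) := by
          linear_combination (χ x ^ 2 * exp (U x) * R ^ 2) * e3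
        rw [e]
        have hR2 : R ^ 2 ≤ (τ * c) ^ 2 :=
          sq_le_sq' (by linarith [abs_le.1 h5]) (abs_le.1 h5).2
        have hχ2 : χ x ^ 2 ≤ 1 := by nlinarith [abs_le.1 h8]
        calc χ x ^ 2 * (exp (U x) * R ^ 2) ≤ 1 * (exp (U x) * (τ * c) ^ 2) := by gcongr
          _ = τ ^ 2 * (exp (U x) * c ^ 2) := by ring
          _ ≤ _ := by gcongr
      set a := χ x * dd (ei i) wε x with ha
      set b := dd (ei i) χ x * wε x with hb'
      set r := χ x * (exp (U x) * R) with hr'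
      have e5 : exp (-U x) * (dd (ei i) wε x + exp (U x) * R) * (χ x * (a + 2 * b)) =
          ((a + r) * (a + 2 * b)) * exp (-U x) := by rw [ha, hr']; ring
      rw [e5, ← mul_pow, ← ha]
      have h9 : a ^ 2 ≤ 2 * ((a + r) * (a + 2 * b)) + 10 * b ^ 2 + 4 * r ^ 2 := by
        nlinarith [sq_nonneg (a / 2 + 2 * b), sq_nonneg (a / 2 + r), sq_nonneg (r + b)]
      have h10 := mul_le_mul_of_nonneg_right h9 (exp_pos (-U x)).le
      nlinarith
    · have h0 : χ x = 0 := image_eq_zero_of_notMem_tsupport hx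
      rw [dψ, h0]
      have := hQ0 x
      have : 0 ≤ (20 * G ^ 2 + 8 * τ ^ 2) * Q x := by positivity
      simpa using this
  have iQ : Integrable Q := M.integrable_cv hh
  have hfin : ∀ i, ∫ x, χ x ^ 2 * dd (ei i) wε x ^ 2 * exp (-U x) ≤
      2 * (∫ x, Y i x * dd (ei i) ψ x) + (20 * G ^ 2 + 8 * τ ^ 2) * ∫ x, h x := by
    intro i
    have i1 : Integrable fun x => Y i x * dd (ei i) ψ x :=
      ((sY i).continuous.mul (sψ.dd _).continuous).integrable_of_hasCompactSupport
        (dd_hasCompactSupport cψ _).mul_left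
    have i0 : Integrable fun x => χ x ^ 2 * dd (ei i) wε x ^ 2 * exp (-U x) := by
      apply Continuous.integrable_of_hasCompactSupport
      · exact (((hχ.continuous.pow 2).mul ((swε.dd _).continuous.pow 2))).mul hUn
      · refine hχc.mono ?_
        intro x hx
        simp only [Function.mem_support] at hx ⊢
        intro h0; apply hx; simp [h0]
    have := integral_mono i0 ((i1.const_mul 2).add (iQ.const_mul _)) (key i)
    rw [integral_add' (i1.const_mul 2) (iQ.const_mul _), integral_const_mul,
      integral_const_mul, M.integral_cv hh] at this
    exact this
  refine (Finset.sum_le_sum fun i _ => hfin i).trans (le_of_eq ?_)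
  rw [Finset.sum_add_distrib, ← Finset.mul_sum, hdiv]
  simp; ring

end Orth
end GaugeLog

namespace GaugeLog
open scoped ContDiff

section Orth2
variable {n : ℕ} {U w : E n → ℝ}

lemma unif_cont_compact {K : Set (E n)} (hK : IsCompact K) {F : E n → ℝ} (hF : Continuous F)
    {δ : ℝ} (hδ : 0 < δ) :
    ∃ ε > 0, ∀ x ∈ K, ∀ y, ‖x - y‖ ≤ ε → |F y - F x| ≤ δ := by
  have := hK.uniformContinuousAt_of_continuousAt F (fun a _ => hF.continuousAt)
    (Metric.dist_mem_uniformity hδ)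
  obtain ⟨ε, hε, h⟩ := Metric.mem_uniformity_dist.1 this
  refine ⟨ε / 2, by positivity, fun x hx y hy => ?_⟩
  have h1 := @h (x, y).1 (x, y).2 (by rw [dist_eq_norm]; exact lt_of_le_of_lt hy (by linarith)) hx
  have h2 : dist (F x) (F y) < δ := h1
  rw [dist_comm, Real.dist_eq] at h2
  exact h2.le

/-- Smooth cutoffs equal to one on large balls and with small gradient. -/
lemma exists_cutoff (n : ℕ) : ∃ C : ℝ, 0 ≤ C ∧ ∀ R : ℝ, 0 < R → ∃ χ : E n → ℝ, Sm χ ∧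
    HasCompactSupport χ ∧ (∀ x, |χ x| ≤ 1) ∧ (∀ x, ‖x‖ ≤ R → χ x = 1) ∧
    (∀ i x, |dd (ei i) χ x| ≤ C / R) := by
  let b : ContDiffBump (0 : E n) := ⟨1, 2, by norm_num, by norm_num⟩
  have hb : Sm (b : E n → ℝ) := b.contDiff
  have : ∀ i, ∃ C, ∀ x, ‖dd (ei i) b x‖ ≤ C := fun i =>
    (dd_hasCompactSupport b.hasCompactSupport (ei i)).exists_bound_of_continuous
      (hb.dd _).continuous
  choose C hC using this
  refine ⟨∑ i, |C i|, Finset.sum_nonneg fun i _ => abs_nonneg _, fun R hR => ?_⟩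
  have hs : Sm fun x : E n => b (R⁻¹ • x) := ContDiff.comp (g := fun x => b x) hb (contDiff_const_smul _)
  refine ⟨fun x => b (R⁻¹ • x), hs, ?_, ?_, ?_, ?_⟩
  · exact b.hasCompactSupport.comp_smul (inv_ne_zero hR.ne')
  · intro x
    rw [abs_of_nonneg b.nonneg]; exact b.le_one
  · intro x hx
    apply b.one_of_mem_closedBall
    simp only [Metric.mem_closedBall, dist_zero_right, norm_smul, norm_inv, Real.norm_eq_abs,
      abs_of_pos hR]
    rw [inv_mul_le_iff₀ hR]; simpa [b] using hx
  · intro i x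
    have h : HasFDerivAt (fun x : E n => b (R⁻¹ • x))
        ((fderiv ℝ b (R⁻¹ • x)).comp (R⁻¹ • (ContinuousLinearMap.id ℝ (E n)))) x :=
      HasFDerivAt.comp (g := fun x => b x) x (hb.differentiable _).hasFDerivAt ((hasFDerivAt_id x).const_smul R⁻¹)
    have e : dd (ei i) (fun x : E n => b (R⁻¹ • x)) x = R⁻¹ * dd (ei i) b (R⁻¹ • x) := by
      simp [dd, h.fderiv]
    rw [e, abs_mul, abs_of_pos (inv_pos.2 hR), div_eq_inv_mul]
    gcongr
    have h1 := hC i (R⁻¹ • x)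
    rw [Real.norm_eq_abs] at h1
    exact h1.trans ((le_abs_self _).trans
      (Finset.single_le_sum (f := fun i => |C i|) (fun j _ => abs_nonneg _) (Finset.mem_univ i)))

/-- A square integrable weak solution of `Lw = 0` has vanishing distributional gradient. -/
lemma weak_grad (hU : Sm U) (hw : LocallyIntegrable w)
    (hv : Integrable fun x => w x * exp (-U x))
    (hh : Integrable fun x => w x ^ 2 * exp (-U x))
    (H : ∀ u, Sm u → HasCompactSupport u → ∫ x, w x * exp (-U x) * Lop U u x = 0)
    {ψ : E n → ℝ} (sψ : Sm ψ) (cψ : HasCompactSupport ψ) (i : Fin n) :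
    ∫ x, w x * dd (ei i) ψ x = 0 := by
  set v : E n → ℝ := fun x => w x * exp (-U x) with hvdef
  set N := ∫ x, w x ^ 2 * exp (-U x) with hN
  have hN0 : 0 ≤ N := integral_nonneg fun x => by positivity
  set Mψ := ∫ x, ψ x ^ 2 * exp (U x) with hMψ
  set k : E n → ℝ := fun x => exp (U x) * dd (ei i) ψ x with hk
  have ck : Continuous k := (Real.continuous_exp.comp hU.continuous).mul (sψ.dd _).continuous
  have kc : HasCompactSupport k := (dd_hasCompactSupport cψ _).mul_left
  have ewk : ∀ x, w x * dd (ei i) ψ x = v x * k x := by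
    intro x
    have e3 : exp (-U x) * exp (U x) = 1 := by rw [← Real.exp_add]; simp
    simp only [hvdef, hk]
    linear_combination (-(w x * dd (ei i) ψ x)) * e3
  obtain ⟨C0, hC0, hcut⟩ := exists_cutoff n
  obtain ⟨R0, hR0⟩ := cψ.isCompact.isBounded.subset_closedBall 0
  obtain ⟨R1, hR1⟩ := kc.isCompact.isBounded.subset_closedBall 0
  have main : ∀ δ : ℝ, 0 < δ → |∫ x, w x * dd (ei i) ψ x| ≤
      δ * ((∫ x, |v x|) + 14 * n * N + Mψ) := by
    intro δ hδ
    set R := max (max R0 1) (C0 / δ) with hR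
    have hRpos : 0 < R := lt_of_lt_of_le one_pos ((le_max_right _ _).trans (le_max_left _ _))
    obtain ⟨χ, hχ, hχc, hχ1, hχR, hχG⟩ := hcut R hRpos
    have hG : ∀ j x, |dd (ei j) χ x| ≤ δ := by
      intro j x
      refine (hχG j x).trans ?_
      rw [div_le_iff₀ hRpos, ← div_le_iff₀' hδ]
      exact le_max_right _ _
    have hK : IsCompact (tsupport χ) := hχc
    have h1 : ∀ j, ∃ ε > 0, ∀ x ∈ tsupport χ, ∀ y, ‖x - y‖ ≤ ε →
        |dd (ei j) U y - dd (ei j) U x| ≤ δ := fun j =>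
      unif_cont_compact hK (hU.dd _).continuous hδ
    choose ε1 hε1 h1 using h1
    obtain ⟨ε2, hε2, h2⟩ := unif_cont_compact hK hU.continuous (Real.log_pos one_lt_two)
    obtain ⟨ε3, hε3, h3⟩ := Metric.uniformContinuous_iff.1 (ck.uniformContinuous_of_tendsto_cocompact
      (x := 0) (by simpa using kc.is_zero_at_infty)) δ hδ
    have : Nonempty (Fin n) := ⟨i⟩
    obtain ⟨j0, hj0⟩ := Finite.exists_min ε1
    set ε := min (min (ε1 j0) ε2) (ε3 / 2) with hε
    have hεpos : 0 < ε := by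
      have := hε1 j0
      positivity
    let M := moll n ε hεpos
    have cac := caccioppoli M hU hw hh H hχ hχc hχ1 (G := δ) (τ := δ) hG
      (fun x hx y hy j => h1 j x hx y (hy.trans
        (((min_le_left _ _).trans (min_le_left _ _)).trans (hj0 j))))
      (fun x hx y hy => by
        have := h2 x hx y (hy.trans ((min_le_left _ _).trans (min_le_right _ _)))
        have h' : U x ≤ Real.log 2 + U y := by linarith [(abs_le.1 this).1]
        calc exp (U x) ≤ exp (Real.log 2 + U y) := exp_le_exp.2 h'
          _ = 2 * exp (U y) := by rw [Real.exp_add, Real.exp_log two_pos])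
    set vε := cv v M.φ with hvε
    have svε : Sm vε := sm_cv hv.locallyIntegrable M.sm M.cs
    set wε : E n → ℝ := fun z => exp (U z) * vε z with hwε
    have swε : Sm wε := ContDiff.mul hU.exp svε
    have st1 : |(∫ x, v x * k x) - ∫ x, vε x * k x| ≤ δ * ∫ x, |v x| := by
      rw [hvε, M.integral_cv_mul hv ck kc]
      have hb : ∀ x, |cv k M.φ x - k x| ≤ δ := fun x => by
        apply M.abs_cv_sub_le ck.locallyIntegrable
        intro y hy
        have := @h3 y x (by
          rw [dist_comm, dist_eq_norm]
          exact lt_of_le_of_lt (hy.trans (min_le_right _ _)) (by linarith))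
        exact this.le
      obtain ⟨Ck, hCk⟩ := kc.exists_bound_of_continuous ck
      have i1 : Integrable fun x => v x * k x :=
        hv.mul_bdd (c := Ck) ck.aestronglyMeasurable (Filter.Eventually.of_forall hCk)
      have i2 : Integrable fun x => v x * cv k M.φ x := by
        refine hv.mul_bdd (c := Ck + δ)
          (sm_cv ck.locallyIntegrable M.sm M.cs).continuous.aestronglyMeasurable
          (Filter.Eventually.of_forall fun x => ?_)
        have a1 := hb x
        have a2 := hCk x
        rw [Real.norm_eq_abs] at a2 ⊢
        have := abs_add_le (cv k M.φ x - k x) (k x)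
        simp only [sub_add_cancel] at this
        linarith
      rw [← integral_sub i1 i2, ← integral_const_mul, ← Real.norm_eq_abs]
      refine norm_integral_le_of_norm_le (hv.abs.const_mul δ) (Filter.Eventually.of_forall ?_)
      intro x
      rw [← mul_sub, norm_mul, mul_comm, Real.norm_eq_abs, Real.norm_eq_abs, abs_sub_comm]
      exact mul_le_mul_of_nonneg_right (hb x) (abs_nonneg _)
    have st2 : ∫ x, vε x * k x = - ∫ x, dd (ei i) wε x * ψ x := by
      rw [integral_dd_mul volume swε sψ cψ, neg_neg]
      congr 1; funext x; simp only [hk, hwε]; ring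
    have st3 : |∫ x, dd (ei i) wε x * ψ x| ≤ δ * (14 * n * N + Mψ) := by
      have i0 : Integrable fun x => χ x ^ 2 * dd (ei i) wε x ^ 2 * exp (-U x) := by
        apply Continuous.integrable_of_hasCompactSupport
        · exact (((hχ.continuous.pow 2).mul ((swε.dd _).continuous.pow 2))).mul (by fun_prop)
        · refine hχc.mono ?_
          intro x hx
          simp only [Function.mem_support] at hx ⊢
          intro h0; apply hx; simp [h0]
      have i1 : Integrable fun x => ψ x ^ 2 * exp (U x) := by
        apply Continuous.integrable_of_hasCompactSupport
        · exact (sψ.continuous.pow 2).mul (by fun_prop)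
        · refine cψ.mono ?_
          intro x hx
          simp only [Function.mem_support] at hx ⊢
          intro h0; apply hx; simp [h0]
      have hb : ∀ x, ‖dd (ei i) wε x * ψ x‖ ≤
          (2 * δ)⁻¹ * (χ x ^ 2 * dd (ei i) wε x ^ 2 * exp (-U x)) +
            δ / 2 * (ψ x ^ 2 * exp (U x)) := by
        intro x
        by_cases hx : ψ x = 0
        · simp only [hx]
          simp
          positivity
        · have hxR : χ x = 1 := by
            apply hχR
            have := hR0 (subset_tsupport ψ hx)
            simp only [Metric.mem_closedBall, dist_zero_right] at this
            exact this.trans ((le_max_left _ _).trans (le_max_left _ _))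
          rw [hxR, norm_mul, Real.norm_eq_abs, Real.norm_eq_abs]
          have e1 : exp (-U x) = exp (-U x / 2) ^ 2 := by
            rw [← Real.exp_nat_mul]; congr 1; push_cast; ring
          have e2 : exp (U x) = exp (U x / 2) ^ 2 := by
            rw [← Real.exp_nat_mul]; congr 1; push_cast; ring
          have e3 : exp (-U x / 2) * exp (U x / 2) = 1 := by
            rw [← Real.exp_add]; simp [← add_div]
          rw [e1, e2]
          set p := |dd (ei i) wε x| * exp (-U x / 2) with hp
          set q := |ψ x| * exp (U x / 2) with hq
          have f1 : |dd (ei i) wε x| * |ψ x| = p * q := by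
            rw [hp, hq]; linear_combination (-(|dd (ei i) wε x| * |ψ x|)) * e3
          have f2 : (1:ℝ) ^ 2 * dd (ei i) wε x ^ 2 * exp (-U x / 2) ^ 2 = p ^ 2 := by
            rw [hp, mul_pow, sq_abs]; ring
          have f3 : ψ x ^ 2 * exp (U x / 2) ^ 2 = q ^ 2 := by
            rw [hq, mul_pow, sq_abs]
          rw [f1, f2, f3]
          have : (2 * δ)⁻¹ * p ^ 2 + δ / 2 * q ^ 2 - p * q = (2 * δ)⁻¹ * (p - δ * q) ^ 2 := by
            field_simp; ring
          have : 0 ≤ (2 * δ)⁻¹ * (p - δ * q) ^ 2 := by positivity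
          linarith
      have hi := norm_integral_le_of_norm_le ((i0.const_mul (2 * δ)⁻¹).add (i1.const_mul (δ / 2)))
        (Filter.Eventually.of_forall hb)
      rw [integral_add' (i0.const_mul (2 * δ)⁻¹) (i1.const_mul (δ / 2)), integral_const_mul,
        integral_const_mul] at hi
      have hle : ∫ x, χ x ^ 2 * dd (ei i) wε x ^ 2 * exp (-U x) ≤ n * (28 * δ ^ 2) * N := by
        refine le_trans (Finset.single_le_sum (f := fun i =>
          ∫ x, χ x ^ 2 * dd (ei i) wε x ^ 2 * exp (-U x))
          (fun j _ => integral_nonneg fun x => by positivity) (Finset.mem_univ i)) ?_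
        refine cac.trans (le_of_eq ?_)
        ring
      have hM0 : 0 ≤ Mψ := integral_nonneg fun x => by positivity
      calc _ ≤ _ := hi
        _ ≤ (2 * δ)⁻¹ * (n * (28 * δ ^ 2) * N) + δ / 2 * Mψ := by gcongr
        _ = δ * (14 * n * N) + δ / 2 * Mψ := by field_simp; ring
        _ ≤ _ := by nlinarith
    simp_rw [ewk]
    rw [st2] at st1
    have := abs_le.1 st1
    have := abs_le.1 st3
    apply abs_le.2
    constructor <;> nlinarith
  by_contra hne
  have hpos : 0 < |∫ x, w x * dd (ei i) ψ x| := abs_pos.2 hne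
  set A := (∫ x, |v x|) + 14 * n * N + Mψ with hA
  have hA0 : 0 ≤ A := by
    have : 0 ≤ ∫ x, |v x| := integral_nonneg fun x => abs_nonneg _
    have : 0 ≤ Mψ := integral_nonneg fun x => by positivity
    positivity
  have := main (|∫ x, w x * dd (ei i) ψ x| / (2 * (A + 1))) (by positivity)
  rw [div_mul_eq_mul_div, le_div_iff₀ (by positivity)] at this
  nlinarith

/-- A square integrable weak solution of `Lw = 0` is constant. -/
lemma weak_const (hU : Sm U) (hw : LocallyIntegrable w)
    (hv : Integrable fun x => w x * exp (-U x))
    (hh : Integrable fun x => w x ^ 2 * exp (-U x))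
    (H : ∀ u, Sm u → HasCompactSupport u → ∫ x, w x * exp (-U x) * Lop U u x = 0) :
    ∃ c : ℝ, w =ᵐ[volume] fun _ => c := by
  have hε : ∀ m : ℕ, (0 : ℝ) < 1 / ((m : ℝ) + 1) := fun m => by positivity
  have hconst : ∀ m : ℕ, ∀ x, cv w (moll n _ (hε m)).φ x = cv w (moll n _ (hε m)).φ 0 := by
    intro m
    set M := moll n _ (hε m) with hM
    have hs := sm_cv hw M.sm M.cs
    have hz : ∀ i x, fderiv ℝ (cv w M.φ) x (ei i) = 0 := by
      intro i x
      change dd (ei i) (cv w M.φ) x = 0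
      rw [dd_cv hw M.sm M.cs]
      have := weak_grad hU hw hv hh H (sm_comp_sub M.sm x) (cs_comp_sub M.cs x) i
      rw [dd_comp_sub M.sm] at this
      simp only [mul_neg, integral_neg, neg_eq_zero] at this
      exact this
    have hz' : ∀ x, fderiv ℝ (cv w M.φ) x = 0 := by
      intro x
      have : ((fderiv ℝ (cv w M.φ) x : E n →L[ℝ] ℝ) : E n →ₗ[ℝ] ℝ) = 0 := by
        refine (EuclideanSpace.basisFun (Fin n) ℝ).toBasis.ext fun i => ?_
        simpa [ei] using hz i x
      ext y
      exact congrArg (fun f : E n →ₗ[ℝ] ℝ => f y) this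
    intro x
    exact is_const_of_fderiv_eq_zero hs.differentiable hz' x 0
  have hlim := ContDiffBump.ae_convolution_tendsto_right_of_locallyIntegrable
    (μ := (volume : Measure (E n))) (φ := fun m : ℕ => bump n _ (hε m)) (l := Filter.atTop)
    (K := 2) (g := w) (by
      simp only [bump]
      exact tendsto_one_div_add_atTop_nhds_zero_nat) (by
      filter_upwards with m
      simp only [bump]
      linarith) hw
  have e : ∀ m x, convolution ((bump n _ (hε m)).normed volume) w
      (ContinuousLinearMap.lsmul ℝ ℝ) volume x = cv w (moll n _ (hε m)).φ 0 := by
    intro m x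
    rw [← hconst m x]
    rw [← convolution_flip, convolution_def]
    simp [cv, moll, mul_comm]
  simp_rw [e] at hlim
  obtain ⟨x0, hx0⟩ := hlim.exists
  refine ⟨w x0, ?_⟩
  filter_upwards [hlim] with x hx
  exact tendsto_nhds_unique hx hx0

end Orth2
end GaugeLog

namespace GaugeLog
open scoped ContDiff

/-! ### The improved Lichnerowicz inequality for smooth potentials -/

section Poin
variable {n : ℕ} {U : E n → ℝ}

/-- The measure with density `exp (-U)`. -/
def nu (U : E n → ℝ) : Measure (E n) := volume.withDensity fun x => ENNReal.ofReal (exp (-U x))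

lemma int_nu (hU : Continuous U) (f : E n → ℝ) : ∫ x, f x ∂(nu U) = ∫ x, f x * exp (-U x) := by
  rw [nu, integral_withDensity_eq_integral_toReal_smul (by fun_prop) (by simp)]
  congr 1; funext x
  rw [ENNReal.toReal_ofReal (exp_pos _).le, smul_eq_mul, mul_comm]

lemma integrable_nu (hU : Continuous U) (f : E n → ℝ) :
    Integrable f (nu U) ↔ Integrable fun x => f x * exp (-U x) := by
  rw [nu, integrable_withDensity_iff (by fun_prop) (by simp)]
  simp_rw [fun x => ENNReal.toReal_ofReal (exp_pos (-U x)).le]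

/-- Smooth functions with compact support. -/
structure Tst (u : E n → ℝ) : Prop where
  sm : Sm u
  cs : HasCompactSupport u

lemma Tst.dd {u : E n → ℝ} (h : Tst u) (v : E n) : Tst (dd v u) :=
  ⟨h.sm.dd v, dd_hasCompactSupport h.cs v⟩

lemma Tst.mul {u g : E n → ℝ} (h : Tst u) (hg : Sm g) : Tst (fun x => g x * u x) :=
  ⟨hg.mul h.sm, h.cs.mul_left⟩

lemma Tst.sum {ι : Type*} (s : Finset ι) {u : ι → E n → ℝ} (h : ∀ i, Tst (u i)) :
    Tst (fun x => ∑ i ∈ s, u i x) := by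
  classical
  refine ⟨ContDiff.sum fun i _ => (h i).sm, ?_⟩
  induction s using Finset.induction_on with
  | empty =>
    simp only [Finset.sum_empty]
    exact HasCompactSupport.zero
  | insert a s ha ih =>
    simp_rw [Finset.sum_insert ha]
    exact (h a).cs.add ih

lemma Tst.add {u g : E n → ℝ} (h : Tst u) (hg : Tst g) : Tst (fun x => u x + g x) :=
  ⟨h.sm.add hg.sm, h.cs.add hg.cs⟩

lemma Tst.neg {u : E n → ℝ} (h : Tst u) : Tst (fun x => - u x) := by
  have := h.mul (g := fun _ => -1) contDiff_const
  simpa using this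

lemma Tst.Lop {u : E n → ℝ} (h : Tst u) (hU : Sm U) : Tst (Lop U u) :=
  (Tst.neg (Tst.sum _ fun i => (h.dd (ei i)).dd (ei i))).add
    (Tst.sum _ fun i => (h.dd (ei i)).mul (hU.dd (ei i)))

lemma Tst.integrable {u : E n → ℝ} (h : Tst u) (hU : Sm U) : Integrable u (nu U) := by
  rw [integrable_nu hU.continuous]
  exact (h.sm.continuous.mul (by fun_prop)).integrable_of_hasCompactSupport h.cs.mul_right

lemma Tst.int_mul {u g : E n → ℝ} (h : Tst u) (hg : Sm g) (hU : Sm U) :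
    Integrable (fun x => g x * u x) (nu U) := (h.mul hg).integrable hU

lemma Tst.memLp {u : E n → ℝ} (h : Tst u) (hU : Sm U) : MemLp u 2 (nu U) := by
  rw [memLp_two_iff_integrable_sq h.sm.continuous.aestronglyMeasurable]
  have := h.int_mul h.sm hU
  simpa [sq] using this

lemma ibp_one (hU : Sm U) {h G : E n → ℝ} (hh : Sm h) (hG : Tst G) (v : E n) :
    ∫ x, h x * (dd v G x - dd v U x * G x) ∂(nu U) = - ∫ x, dd v h x * G x ∂(nu U) := by
  rw [int_nu hU.continuous, int_nu hU.continuous]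
  have hT : Tst fun x => exp (-U x) * G x := hG.mul hU.neg.exp
  have := integral_dd_mul volume hh hT.sm hT.cs v
  rw [dd_mul (F := fun x => exp (-U x)) hU.neg.exp hG.sm, dd_exp (F := fun x => -U x) hU.neg,
    dd_neg] at this
  rw [show (∫ x, dd v h x * G x * exp (-U x)) = ∫ x, dd v h x * (exp (-U x) * G x) by
    congr 1; funext x; ring, this, neg_neg]
  congr 1; funext x; ring

/-- Integration by parts for the Langevin generator. -/
lemma ibp_L (hU : Sm U) {h u : E n → ℝ} (hh : Sm h) (hu : Tst u) :
    ∫ x, h x * Lop U u x ∂(nu U) = ∑ i, ∫ x, dd (ei i) h x * dd (ei i) u x ∂(nu U) := by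
  have e : ∀ x, h x * Lop U u x = ∑ i, -(h x * (dd (ei i) (dd (ei i) u) x -
      dd (ei i) U x * dd (ei i) u x)) := by
    intro x
    rw [Lop, Finset.sum_neg_distrib, ← Finset.mul_sum, Finset.sum_sub_distrib]; ring
  simp_rw [e]
  rw [integral_finsetSum]
  · congr 1; funext i
    rw [integral_neg, ibp_one hU hh (hu.dd _), neg_neg]
  · intro i _
    have : Tst fun x => -(h x * (dd (ei i) (dd (ei i) u) x -
      dd (ei i) U x * dd (ei i) u x)) := by
      have := (((hu.dd (ei i)).dd (ei i)).add ((hu.dd (ei i)).mul (hU.dd (ei i))).neg).mul hh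
      simpa [sub_eq_add_neg] using this.neg
    exact this.integrable hU

lemma dd_Lop (hU : Sm U) {u : E n → ℝ} (hu : Tst u) (i : Fin n) (x : E n) :
    dd (ei i) (Lop U u) x = Lop U (dd (ei i) u) x +
      ∑ j, dd (ei i) (dd (ei j) U) x * dd (ei j) u x := by
  have s1 : ∀ j, Sm (dd (ei j) (dd (ei j) u)) := fun j => (hu.sm.dd _).dd _
  have s2 : ∀ j, Sm (fun x => dd (ei j) U x * dd (ei j) u x) :=
    fun j => (hU.dd _).mul (hu.sm.dd _)
  have e : Lop U u = fun x => -(∑ j, dd (ei j) (dd (ei j) u) x) +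
      ∑ j, dd (ei j) U x * dd (ei j) u x := rfl
  rw [e, dd_add (ContDiff.sum fun j _ => s1 j).neg (ContDiff.sum fun j _ => s2 j), dd_neg,
    dd_sum _ s1, dd_sum _ s2]
  simp_rw [fun j => dd_mul (hU.dd (ei j)) (hu.sm.dd (ei j)) (ei i)]
  rw [Finset.sum_add_distrib, Lop]
  have c1 : ∀ j, dd (ei i) (dd (ei j) (dd (ei j) u)) = dd (ei j) (dd (ei j) (dd (ei i) u)) := by
    intro j
    rw [dd_comm (hu.sm.dd _), dd_comm hu.sm]
  simp_rw [c1, fun j => dd_comm hu.sm (ei i) (ei j)]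
  ring

/-- Bochner's formula, as an inequality under a lower bound on the Hessian of the potential. -/
lemma bochner (hU : Sm U) {t : ℝ} (hess : ∀ (x : E n) (ξ : Fin n → ℝ),
      t * ∑ i, ξ i ^ 2 ≤ ∑ i, ∑ j, dd (ei i) (dd (ei j) U) x * ξ j * ξ i)
    {u : E n → ℝ} (hu : Tst u) :
    (∑ i, ∑ j, ∫ x, dd (ei j) (dd (ei i) u) x ^ 2 ∂(nu U)) +
      t * ∑ i, ∫ x, dd (ei i) u x ^ 2 ∂(nu U) ≤ ∫ x, Lop U u x ^ 2 ∂(nu U) := by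
  have h1 := ibp_L hU (hu.Lop hU).sm hu
  have h2 : ∀ i, ∫ x, dd (ei i) u x * Lop U (dd (ei i) u) x ∂(nu U) =
      ∑ j, ∫ x, dd (ei j) (dd (ei i) u) x ^ 2 ∂(nu U) := by
    intro i
    rw [ibp_L hU (hu.dd (ei i)).sm (hu.dd (ei i))]
    simp [sq]
  have i1 : ∀ i, Integrable (fun x => dd (ei i) u x * Lop U (dd (ei i) u) x) (nu U) := fun i =>
    (((hu.dd (ei i)).Lop hU).mul (hu.dd (ei i)).sm).integrable hU
  have T3 : ∀ i, Tst (fun x => ∑ j, dd (ei i) (dd (ei j) U) x * dd (ei j) u x * dd (ei i) u x) :=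
    fun i => Tst.sum _ fun j => (hu.dd (ei i)).mul (((hU.dd _).dd _).mul (hu.dd (ei j)).sm)
  have h3 : ∀ i, ∫ x, dd (ei i) (Lop U u) x * dd (ei i) u x ∂(nu U) =
      (∑ j, ∫ x, dd (ei j) (dd (ei i) u) x ^ 2 ∂(nu U)) +
      ∫ x, ∑ j, dd (ei i) (dd (ei j) U) x * dd (ei j) u x * dd (ei i) u x ∂(nu U) := by
    intro i
    rw [← h2, ← integral_add (i1 i) ((T3 i).integrable hU)]
    congr 1; funext x
    rw [dd_Lop hU hu, add_mul, Finset.sum_mul, mul_comm (Lop U _ x)]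
  have h4 : ∫ x, Lop U u x ^ 2 ∂(nu U) = ∫ x, Lop U u x * Lop U u x ∂(nu U) := by simp [sq]
  rw [h4, h1]
  simp_rw [h3]
  rw [Finset.sum_add_distrib]
  gcongr
  have i5 : ∀ i, Integrable (fun x => dd (ei i) u x ^ 2) (nu U) := fun i => by
    simpa [sq] using (hu.dd (ei i)).int_mul (hu.dd (ei i)).sm hU
  rw [← integral_finsetSum _ (fun i _ => i5 i), ← integral_const_mul,
    ← integral_finsetSum _ (fun i _ => (T3 i).integrable hU)]
  exact integral_mono ((integrable_finsetSum _ fun i _ => i5 i).const_mul t)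
    (integrable_finsetSum _ fun i _ => (T3 i).integrable hU)
    (fun x => hess x fun i => dd (ei i) u x)

end Poin
end GaugeLog

namespace GaugeLog
open scoped ContDiff

section Poin2
variable {n : ℕ} {U : E n → ℝ}

lemma Lop_add {u g : E n → ℝ} (hu : Tst u) (hg : Tst g) (x : E n) :
    Lop U (fun x => u x + g x) x = Lop U u x + Lop U g x := by
  simp only [Lop]
  simp_rw [dd_add hu.sm hg.sm, fun i => dd_add (hu.dd (ei i)).sm (hg.dd (ei i)).sm (ei i), mul_add,
    Finset.sum_add_distrib]
  ring

lemma Lop_smul {u : E n → ℝ} (hu : Tst u) (c : ℝ) (x : E n) :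
    Lop U (fun x => c * u x) x = c * Lop U u x := by
  simp only [Lop]
  simp_rw [dd_const_mul hu.sm, fun i => dd_const_mul (hu.dd (ei i)).sm c (ei i)]
  rw [mul_add, mul_neg, Finset.mul_sum, Finset.mul_sum]
  congr 1
  exact Finset.sum_congr rfl fun i _ => by ring

lemma ac_nu (hU : Sm U) : (volume : Measure (E n)) ≪ nu U := by
  apply withDensity_absolutelyContinuous'
  · have := hU.continuous
    exact (by fun_prop : Measurable fun x => ENNReal.ofReal (exp (-U x))).aemeasurable
  · filter_upwards with x
    simp [exp_pos]

lemma ac_nu' : nu U ≪ (volume : Measure (E n)) := withDensity_absolutelyContinuous _ _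

lemma int_Lop (hU : Sm U) {u : E n → ℝ} (hu : Tst u) : ∫ x, Lop U u x ∂(nu U) = 0 := by
  have := ibp_L hU (h := fun _ => 1) contDiff_const hu
  simpa [dd_const] using this

variable [IsProbabilityMeasure (nu U)]

/-- The functions `L u + c` with `u` a test function, as a subspace of `L²`. -/
def rangeL (U : E n → ℝ) [IsProbabilityMeasure (nu U)] : Submodule ℝ (Lp ℝ 2 (nu U)) where
  carrier := {g | ∃ u, Tst u ∧ ∃ c : ℝ, g =ᵐ[nu U] fun x => Lop U u x + c}
  add_mem' := by
    rintro a b ⟨u, hu, c, h⟩ ⟨u', hu', c', h'⟩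
    refine ⟨_, hu.add hu', c + c', ?_⟩
    filter_upwards [h, h', Lp.coeFn_add a b] with x h1 h2 h3
    rw [h3, Pi.add_apply, h1, h2, Lop_add hu hu']; ring
  zero_mem' := by
    refine ⟨fun _ => 0, ⟨contDiff_const, HasCompactSupport.zero⟩, 0, ?_⟩
    filter_upwards [Lp.coeFn_zero ℝ 2 (nu U)] with x h
    rw [h]; simp [Lop, dd_const]
  smul_mem' := by
    rintro r a ⟨u, hu, c, h⟩
    refine ⟨_, hu.mul (g := fun _ => r) contDiff_const, r * c, ?_⟩
    filter_upwards [h, Lp.coeFn_smul r a] with x h1 h3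
    rw [h3, Pi.smul_apply, h1, Lop_smul hu, smul_eq_mul]; ring

lemma memLp_Lop_add (hU : Sm U) {u : E n → ℝ} (hu : Tst u) (c : ℝ) :
    MemLp (fun x => Lop U u x + c) 2 (nu U) :=
  ((hu.Lop hU).memLp hU).add (memLp_const c)

lemma rangeL_orth (hU : Sm U) : (rangeL U)ᗮ = ⊥ := by
  rw [Submodule.eq_bot_iff]
  intro w hw
  have hw' : ∀ u, Tst u → ∀ c : ℝ, ∫ x, w x * (Lop U u x + c) ∂(nu U) = 0 := by
    intro u hu c
    have hm : (memLp_Lop_add hU hu c).toLp ∈ rangeL U := ⟨u, hu, c, MemLp.coeFn_toLp _⟩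
    have h1 := hw _ hm
    rw [L2.inner_def] at h1
    rw [← h1]
    apply integral_congr_ae
    filter_upwards [(memLp_Lop_add hU hu c).coeFn_toLp] with x hx
    rw [hx]; simp
  have hL2 : MemLp w 2 (nu U) := Lp.memLp w
  have h1 : Integrable (w : E n → ℝ) (nu U) := hL2.integrable (by norm_num)
  have h2 : Integrable (fun x => w x ^ 2) (nu U) := hL2.integrable_sq
  have h1' := (integrable_nu hU.continuous _).1 h1
  have h2' := (integrable_nu hU.continuous _).1 h2
  have hloc : LocallyIntegrable (w : E n → ℝ) := by
    refine (locInt_mul h1'.locallyIntegrable (g := fun x => exp (U x)) (by fun_prop)).congr ?_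
    filter_upwards with x
    rw [mul_assoc, ← Real.exp_add]; simp
  obtain ⟨c, hc⟩ := weak_const hU hloc h1' h2' (fun u su cu => by
    have := hw' u ⟨su, cu⟩ 0
    rw [int_nu hU.continuous] at this
    rw [← this]
    congr 1; funext x; ring)
  have hc' : w =ᵐ[nu U] fun _ => c := ac_nu' hc
  have h0 := hw' (fun _ => 0) ⟨contDiff_const, HasCompactSupport.zero⟩ 1
  have : ∫ x, w x * (Lop U (fun _ => 0) x + 1) ∂(nu U) = c := by
    rw [integral_congr_ae (g := fun _ => c)]
    · simp
    · filter_upwards [hc'] with x hx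
      simp [Lop, dd_const, hx]
  rw [this] at h0
  rw [h0] at hc'
  apply Lp.ext
  filter_upwards [hc', Lp.coeFn_zero ℝ 2 (nu U)] with x h1 h2
  rw [h1, h2]; rfl

/-- The images `Lu` of test functions are dense among centered square integrable functions. -/
lemma dense_L (hU : Sm U) {f : E n → ℝ} (hf : MemLp f 2 (nu U)) (h0 : ∫ x, f x ∂(nu U) = 0)
    {δ : ℝ} (hδ : 0 < δ) : ∃ u, Tst u ∧ ∫ x, (f x - Lop U u x) ^ 2 ∂(nu U) ≤ δ := by
  have hd : (rangeL U).topologicalClosure = ⊤ :=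
    Submodule.topologicalClosure_eq_top_iff.2 (rangeL_orth hU)
  have hmem : hf.toLp ∈ closure (rangeL U : Set (Lp ℝ 2 (nu U))) := by
    rw [← Submodule.topologicalClosure_coe, hd]; trivial
  obtain ⟨g, ⟨u, hu, c, hg⟩, hdist⟩ := Metric.mem_closure_iff.1 hmem (Real.sqrt δ) (by positivity)
  refine ⟨u, hu, ?_⟩
  have hn : ∫ x, (f x - (Lop U u x + c)) ^ 2 ∂(nu U) ≤ δ := by
    rw [dist_eq_norm] at hdist
    have h1 : ‖hf.toLp - g‖ ^ 2 ≤ δ := by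
      rw [← Real.sq_sqrt hδ.le]
      exact pow_le_pow_left₀ (norm_nonneg _) hdist.le 2
    rw [← real_inner_self_eq_norm_sq, L2.inner_def] at h1
    refine le_trans (le_of_eq ?_) h1
    apply integral_congr_ae
    filter_upwards [Lp.coeFn_sub hf.toLp g, hf.coeFn_toLp, hg] with x a1 a2 a3
    rw [a1, Pi.sub_apply, a2, a3]; simp [sq]
  have m1 : MemLp (fun x => f x - Lop U u x) 2 (nu U) := hf.sub ((hu.Lop hU).memLp hU)
  have i1 : Integrable (fun x => f x - Lop U u x) (nu U) := m1.integrable (by norm_num)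
  have i2 := m1.integrable_sq
  have e : ∫ x, (f x - (Lop U u x + c)) ^ 2 ∂(nu U) =
      ∫ x, (f x - Lop U u x) ^ 2 ∂(nu U) + c ^ 2 := by
    have e1 : ∀ x, (f x - (Lop U u x + c)) ^ 2 =
        (f x - Lop U u x) ^ 2 + (-(2 * c) * (f x - Lop U u x) + c ^ 2) := by intro x; ring
    simp_rw [e1]
    rw [integral_add i2 ((i1.const_mul _).fun_add (integrable_const _)),
      integral_add (i1.const_mul _) (integrable_const _), integral_const_mul,
      integral_sub (hf.integrable (by norm_num)) ((hu.Lop hU).integrable hU), h0, int_Lop hU hu]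
    simp
  rw [e] at hn
  nlinarith [sq_nonneg c]

/-- By duality, a bound on the gradient of `u` by `Lu` gives a Poincaré inequality. -/
lemma poincare_of_grad (hU : Sm U) {C : ℝ} (hC : 0 ≤ C)
    (hG : ∀ u, Tst u → ∑ i, ∫ x, dd (ei i) u x ^ 2 ∂(nu U) ≤ C * ∫ x, Lop U u x ^ 2 ∂(nu U))
    {f : E n → ℝ} (hf : Sm f) (hf2 : MemLp f 2 (nu U)) (hfi : ∀ i, MemLp (dd (ei i) f) 2 (nu U)) :
    ∫ x, f x ^ 2 ∂(nu U) - (∫ x, f x ∂(nu U)) ^ 2 ≤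
      C * ∑ i, ∫ x, dd (ei i) f x ^ 2 ∂(nu U) := by
  set a := ∫ x, f x ∂(nu U) with ha
  set D := ∑ i, ∫ x, dd (ei i) f x ^ 2 ∂(nu U) with hD
  have iF : Integrable f (nu U) := hf2.integrable (by norm_num)
  have hvar : ∫ x, (f x - a) ^ 2 ∂(nu U) = ∫ x, f x ^ 2 ∂(nu U) - a ^ 2 := by
    have e1 : ∀ x, (f x - a) ^ 2 = f x ^ 2 + (-(2 * a) * f x + a ^ 2) := by intro x; ring
    simp_rw [e1]
    rw [integral_add hf2.integrable_sq ((iF.const_mul _).fun_add (integrable_const _)),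
      integral_add (iF.const_mul _) (integrable_const _), integral_const_mul, ← ha]
    simp; ring
  rw [← hvar]
  have m0 : MemLp (fun x => f x - a) 2 (nu U) := hf2.sub (memLp_const a)
  have z0 : ∫ x, (f x - a) ∂(nu U) = 0 := by
    rw [integral_sub iF (integrable_const _)]; simp [← ha]
  have hfa : Sm fun x => f x - a := hf.sub contDiff_const
  have da : ∀ i, dd (ei i) (fun x => f x - a) = dd (ei i) f := by
    intro i
    rw [dd_sub hf contDiff_const, dd_const]; simp
  have main : ∀ C' δ : ℝ, C < C' → 0 < δ → ∫ x, (f x - a) ^ 2 ∂(nu U) ≤ C' * D + δ := by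
    intro C' δ hC' hδ
    have hC'0 : 0 < C' := lt_of_le_of_lt hC hC'
    obtain ⟨u, hu, hu2⟩ := dense_L hU m0 z0 hδ
    have hT := hu.Lop hU
    have mL := hT.memLp hU
    have j : Integrable (fun x => (f x - a) * Lop U u x) (nu U) := m0.integrable_mul mL
    have e : ∫ x, (f x - a - Lop U u x) ^ 2 ∂(nu U) = ∫ x, (f x - a) ^ 2 ∂(nu U) -
        2 * ∑ i, ∫ x, dd (ei i) f x * dd (ei i) u x ∂(nu U) + ∫ x, Lop U u x ^ 2 ∂(nu U) := by
      have := ibp_L hU hfa hu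
      simp_rw [da] at this
      rw [← this]
      have e1 : ∀ x, (f x - a - Lop U u x) ^ 2 = (f x - a) ^ 2 +
          (-2 * ((f x - a) * Lop U u x) + Lop U u x ^ 2) := by intro x; ring
      simp_rw [e1]
      rw [integral_add m0.integrable_sq ((j.const_mul _).fun_add mL.integrable_sq),
        integral_add (j.const_mul _) mL.integrable_sq, integral_const_mul]
      ring
    have hb : ∀ i, 2 * ∫ x, dd (ei i) f x * dd (ei i) u x ∂(nu U) ≤
        C' * (∫ x, dd (ei i) f x ^ 2 ∂(nu U)) + C'⁻¹ * ∫ x, dd (ei i) u x ^ 2 ∂(nu U) := by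
      intro i
      have mu := (hu.dd (ei i)).memLp hU
      have j2 := (hfi i).integrable_mul mu
      rw [← integral_const_mul, ← integral_const_mul, ← integral_const_mul,
        ← integral_add ((hfi i).integrable_sq.const_mul _) (mu.integrable_sq.const_mul _)]
      apply integral_mono (j2.const_mul 2)
        (((hfi i).integrable_sq.const_mul _).add (mu.integrable_sq.const_mul _))
      intro x
      simp only [Pi.mul_apply, Pi.add_apply]
      have : C' * dd (ei i) f x ^ 2 + C'⁻¹ * dd (ei i) u x ^ 2 -
        2 * (dd (ei i) f x * dd (ei i) u x) = C'⁻¹ * (C' * dd (ei i) f x - dd (ei i) u x) ^ 2 := by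
        field_simp; ring
      have : 0 ≤ C'⁻¹ * (C' * dd (ei i) f x - dd (ei i) u x) ^ 2 := by positivity
      linarith
    have hs := Finset.sum_le_sum fun i (_ : i ∈ Finset.univ) => hb i
    rw [← Finset.mul_sum, Finset.sum_add_distrib, ← Finset.mul_sum, ← Finset.mul_sum, ← hD] at hs
    have hg := hG u hu
    have hL0 : 0 ≤ ∫ x, Lop U u x ^ 2 ∂(nu U) := integral_nonneg fun x => sq_nonneg _
    have hg2 : C'⁻¹ * ∑ i, ∫ x, dd (ei i) u x ^ 2 ∂(nu U) ≤ ∫ x, Lop U u x ^ 2 ∂(nu U) := by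
      rw [inv_mul_le_iff₀ hC'0]
      exact hg.trans (mul_le_mul_of_nonneg_right hC'.le hL0)
    rw [e] at hu2
    linarith
  have hD0 : 0 ≤ D := Finset.sum_nonneg fun i _ => integral_nonneg fun x => sq_nonneg _
  refine le_of_forall_pos_le_add fun δ hδ => ?_
  have := main (C + δ / (2 * (D + 1))) (δ / 2) (by simp; positivity) (by positivity)
  refine this.trans ?_
  have : δ / (2 * (D + 1)) * D ≤ δ / 2 := by
    rw [div_mul_eq_mul_div, div_le_div_iff₀ (by positivity) (by positivity)]
    nlinarith
  nlinarith

lemma dd_inner (b v : E n) : dd v (fun x : E n => ⟪b, x⟫) = fun _ => ⟪b, v⟫ := by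
  funext x
  have : HasFDerivAt (fun x : E n => ⟪b, x⟫) (innerSL ℝ b) x := (innerSL ℝ b).hasFDerivAt
  simp [dd, this.fderiv]

lemma inner_ei (b : E n) (i : Fin n) : ⟪b, ei i⟫ = b i := by
  simp [ei, EuclideanSpace.inner_single_right]

lemma sm_inner (b : E n) : Sm fun x : E n => ⟪b, x⟫ := (innerSL ℝ b).contDiff

lemma memLp_inner {U : E n → ℝ} (hm : Integrable (fun x => ‖x‖ ^ 2) (nu U)) (b : E n) :
    MemLp (fun x : E n => ⟪b, x⟫) 2 (nu U) := by
  have : MemLp (fun x : E n => x) 2 (nu U) := by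
    have h := (memLp_two_iff_integrable_sq (f := fun x : E n => ‖x‖) (μ := nu U)
      continuous_norm.aestronglyMeasurable).2 hm
    exact (memLp_norm_iff continuous_id.aestronglyMeasurable).1 h
  exact this.const_inner b

/-- The averaged gradient of `u` is controlled by `Lu` and the covariance. -/
lemma mean_grad (hU : Sm U) (hm : Integrable (fun x => ‖x‖ ^ 2) (nu U)) {α : ℝ} (hα : 0 < α)
    (hcov : ∀ b : E n, ∫ x, ⟪b, x⟫ ^ 2 ∂(nu U) - (∫ x, ⟪b, x⟫ ∂(nu U)) ^ 2 ≤ α * ‖b‖ ^ 2)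
    {u : E n → ℝ} (hu : Tst u) :
    ∑ i, (∫ x, dd (ei i) u x ∂(nu U)) ^ 2 ≤ α * ∫ x, Lop U u x ^ 2 ∂(nu U) := by
  set b : E n := WithLp.toLp 2 fun i => ∫ x, dd (ei i) u x ∂(nu U) with hb
  have hbi : ∀ i, b i = ∫ x, dd (ei i) u x ∂(nu U) := fun i => rfl
  have hnb : ‖b‖ ^ 2 = ∑ i, (∫ x, dd (ei i) u x ∂(nu U)) ^ 2 := by
    rw [EuclideanSpace.norm_sq_eq]; simp [hb]
  rw [← hnb]
  set c := ∫ x, ⟪b, x⟫ ∂(nu U) with hc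
  have h1 := ibp_L hU (h := fun x => ⟪b, x⟫) (sm_inner b) hu
  simp_rw [dd_inner, inner_ei, integral_const_mul] at h1
  have h2 : ∫ x, ⟪b, x⟫ * Lop U u x ∂(nu U) = ‖b‖ ^ 2 := by
    rw [h1, hnb]
    exact Finset.sum_congr rfl fun i _ => by rw [hbi]; ring
  have mb := memLp_inner hm b
  have mL := (hu.Lop hU).memLp hU
  have m0 : MemLp (fun x : E n => ⟪b, x⟫ - c) 2 (nu U) := mb.sub (memLp_const c)
  have h3 : ∫ x, (⟪b, x⟫ - c) * Lop U u x ∂(nu U) = ‖b‖ ^ 2 := by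
    simp_rw [sub_mul]
    have j : Integrable (fun x => ⟪b, x⟫ * Lop U u x) (nu U) := mb.integrable_mul mL
    rw [integral_sub j (((hu.Lop hU).integrable hU).const_mul c), h2, integral_const_mul,
      int_Lop hU hu]
    simp
  have h4 : ∫ x, (⟪b, x⟫ - c) ^ 2 ∂(nu U) ≤ α * ‖b‖ ^ 2 := by
    refine le_trans (le_of_eq ?_) (hcov b)
    have e1 : ∀ x : E n, (⟪b, x⟫ - c) ^ 2 = ⟪b, x⟫ ^ 2 + (-(2 * c) * ⟪b, x⟫ + c ^ 2) := by
      intro x; ring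
    have iF : Integrable (fun x : E n => ⟪b, x⟫) (nu U) := mb.integrable (by norm_num)
    simp_rw [e1]
    rw [integral_add mb.integrable_sq ((iF.const_mul _).fun_add (integrable_const _)),
      integral_add (iF.const_mul _) (integrable_const _), integral_const_mul, ← hc]
    simp; ring
  have h5 : ∫ x, 2 * ((⟪b, x⟫ - c) * Lop U u x) ∂(nu U) ≤
      ∫ x, (α⁻¹ * (⟪b, x⟫ - c) ^ 2 + α * Lop U u x ^ 2) ∂(nu U) := by
    have j : Integrable (fun x => (⟪b, x⟫ - c) * Lop U u x) (nu U) := m0.integrable_mul mL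
    apply integral_mono (j.const_mul 2)
      ((m0.integrable_sq.const_mul _).fun_add (mL.integrable_sq.const_mul _))
    intro x
    have : α⁻¹ * (⟪b, x⟫ - c) ^ 2 + α * Lop U u x ^ 2 - 2 * ((⟪b, x⟫ - c) * Lop U u x) =
      α⁻¹ * ((⟪b, x⟫ - c) - α * Lop U u x) ^ 2 := by field_simp; ring
    have : 0 ≤ α⁻¹ * ((⟪b, x⟫ - c) - α * Lop U u x) ^ 2 := by positivity
    simp only
    linarith
  rw [integral_const_mul, h3, integral_add (m0.integrable_sq.const_mul _)
    (mL.integrable_sq.const_mul _), integral_const_mul, integral_const_mul] at h5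
  have h6 : α⁻¹ * ∫ x, (⟪b, x⟫ - c) ^ 2 ∂(nu U) ≤ ‖b‖ ^ 2 := by
    rw [inv_mul_le_iff₀ hα]; exact h4
  linarith

/-- The improved Lichnerowicz inequality: if the potential is `t`-uniformly convex and the
covariance is at most `α`, then the Poincaré constant is at most `√(α / t)`. -/
theorem lichnerowicz (hU : Sm U) (hm : Integrable (fun x => ‖x‖ ^ 2) (nu U)) {α t : ℝ}
    (hα : 0 < α) (ht : 0 < t)
    (hcov : ∀ b : E n, ∫ x, ⟪b, x⟫ ^ 2 ∂(nu U) - (∫ x, ⟪b, x⟫ ∂(nu U)) ^ 2 ≤ α * ‖b‖ ^ 2)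
    (hess : ∀ (x : E n) (ξ : Fin n → ℝ),
      t * ∑ i, ξ i ^ 2 ≤ ∑ i, ∑ j, dd (ei i) (dd (ei j) U) x * ξ j * ξ i)
    {f : E n → ℝ} (hf : Sm f) (hf2 : MemLp f 2 (nu U)) (hfi : ∀ i, MemLp (dd (ei i) f) 2 (nu U)) :
    ∫ x, f x ^ 2 ∂(nu U) - (∫ x, f x ∂(nu U)) ^ 2 ≤
      Real.sqrt (α / t) * ∑ i, ∫ x, dd (ei i) f x ^ 2 ∂(nu U) := by
  let S : Set ℝ := {C | 0 ≤ C ∧ ∀ u, Tst u →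
    ∑ i, ∫ x, dd (ei i) u x ^ 2 ∂(nu U) ≤ C * ∫ x, Lop U u x ^ 2 ∂(nu U)}
  have hne : S.Nonempty := by
    refine ⟨1 / t, by positivity, fun u hu => ?_⟩
    have := bochner hU hess hu
    have h0 : 0 ≤ ∑ i, ∑ j, ∫ x, dd (ei j) (dd (ei i) u) x ^ 2 ∂(nu U) :=
      Finset.sum_nonneg fun i _ => Finset.sum_nonneg fun j _ => integral_nonneg fun x => sq_nonneg _
    rw [one_div, ← div_eq_inv_mul, le_div_iff₀ ht]
    linarith
  have hbdd : BddBelow S := ⟨0, fun C hC => hC.1⟩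
  set C := sInf S with hC
  have hC0 : 0 ≤ C := le_csInf hne fun C hC => hC.1
  have hCS : C ∈ S := by
    refine ⟨hC0, fun u hu => ?_⟩
    have hL0 : 0 ≤ ∫ x, Lop U u x ^ 2 ∂(nu U) := integral_nonneg fun x => sq_nonneg _
    rcases hL0.eq_or_lt with h0 | h0
    · obtain ⟨C', h1, h2⟩ := hne
      have := h2 u hu
      rw [← h0] at this ⊢
      simpa using this
    · rw [← div_le_iff₀ h0]
      refine le_csInf hne fun C' h => ?_
      rw [div_le_iff₀ h0]
      exact h.2 u hu
  have hP := fun {f : E n → ℝ} => poincare_of_grad (f := f) hU hC0 hCS.2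
  -- Bochner, with the Poincaré inequality of constant `C` applied to each partial derivative
  have hnew : (α + C) / (1 + t * C) ∈ S := by
    refine ⟨by positivity, fun u hu => ?_⟩
    have hb := bochner hU hess hu
    have hmean := mean_grad hU hm hα hcov hu
    have hv : ∀ i, ∫ x, dd (ei i) u x ^ 2 ∂(nu U) - (∫ x, dd (ei i) u x ∂(nu U)) ^ 2 ≤
        C * ∑ j, ∫ x, dd (ei j) (dd (ei i) u) x ^ 2 ∂(nu U) := fun i =>
      hP (hu.dd _).sm ((hu.dd _).memLp hU) fun j => ((hu.dd _).dd _).memLp hU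
    have hs := Finset.sum_le_sum fun i (_ : i ∈ Finset.univ) => hv i
    rw [Finset.sum_sub_distrib, ← Finset.mul_sum] at hs
    rw [div_mul_eq_mul_div, le_div_iff₀ (by positivity)]
    nlinarith [mul_le_mul_of_nonneg_left hb hC0]
  have hle : C ≤ (α + C) / (1 + t * C) := csInf_le hbdd hnew
  rw [le_div_iff₀ (by positivity)] at hle
  have hC2 : C ≤ Real.sqrt (α / t) := by
    apply Real.le_sqrt_of_sq_le
    rw [le_div_iff₀ ht]
    nlinarith
  refine (hP hf hf2 hfi).trans (mul_le_mul_of_nonneg_right hC2 ?_)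
  exact Finset.sum_nonneg fun i _ => integral_nonneg fun x => sq_nonneg _

end Poin2
end GaugeLog

namespace GaugeLog
open scoped ContDiff

/-! ### Smooth convex functions -/

section Cvx
variable {n : ℕ}

lemma hasDerivAt_line {F : E n → ℝ} (hF : Sm F) (x v : E n) (s : ℝ) :
    HasDerivAt (fun r : ℝ => F (x + r • v)) (dd v F (x + s • v)) s := by
  have h1 : HasDerivAt (fun r : ℝ => x + r • v) v s := by
    simpa using ((hasDerivAt_id s).smul_const v).const_add x
  have := (hF.differentiable (x + s • v)).hasFDerivAt.comp_hasDerivAt s h1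
  exact this

lemma convexOn_line {F : E n → ℝ} (hF : ConvexOn ℝ Set.univ F) (x v : E n) :
    ConvexOn ℝ Set.univ (fun r : ℝ => F (x + r • v)) := by
  refine ⟨convex_univ, fun a _ b _ s t hs ht hst => ?_⟩
  have := hF.2 (Set.mem_univ (x + a • v)) (Set.mem_univ (x + b • v)) hs ht hst
  have e : x + (s • a + t • b) • v = s • (x + a • v) + t • (x + b • v) := by
    have : x = (s + t) • x := by rw [hst, one_smul]
    conv_lhs => rw [this]
    simp only [smul_eq_mul]
    module
  simp only
  rw [e]
  exact this

lemma convex_hess {F : E n → ℝ} (hF : Sm F) (hc : ConvexOn ℝ Set.univ F) (v x : E n) :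
    0 ≤ dd v (dd v F) x := by
  have hm := (convexOn_line hc x v).monotoneOn_deriv
    (fun r _ => (hasDerivAt_line hF x v r).differentiableAt)
  have e : deriv (fun r : ℝ => F (x + r • v)) = fun r => dd v F (x + r • v) :=
    funext fun r => (hasDerivAt_line hF x v r).deriv
  rw [e, monotoneOn_univ] at hm
  have h2 := (hasDerivAt_line (hF.dd v) x v 0).deriv
  have h3 : 0 ≤ deriv (fun r : ℝ => dd v F (x + r • v)) 0 := hm.deriv_nonneg
  rw [h2] at h3
  simpa using h3

/-- The gradient inequality for convex functions. -/
lemma convex_grad {F : E n → ℝ} (hF : Sm F) (hc : ConvexOn ℝ Set.univ F) (x v : E n) :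
    F x + dd v F x ≤ F (x + v) := by
  have h := (convexOn_line hc x v).deriv_le_slope (Set.mem_univ 0) (Set.mem_univ 1) zero_lt_one
    (hasDerivAt_line hF x v 0).differentiableAt
  rw [(hasDerivAt_line hF x v 0).deriv] at h
  simp [slope_def_field] at h
  linarith

lemma eq_sum_ei (ξ : E n) : ξ = ∑ i, ξ i • ei i := by
  ext j
  simp [ei, Finset.sum_apply, Pi.single_apply]

lemma dd_eq_sum (F : E n → ℝ) (ξ x : E n) : dd ξ F x = ∑ i, ξ i * dd (ei i) F x := by
  conv_lhs => rw [eq_sum_ei ξ]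
  simp [dd, map_sum]

lemma hess_eq {F : E n → ℝ} (hF : Sm F) (x ξ : E n) :
    ∑ i, ∑ j, dd (ei i) (dd (ei j) F) x * ξ j * ξ i = dd ξ (dd ξ F) x := by
  have e : dd ξ F = fun x => ∑ j, ξ j * dd (ei j) F x := funext fun x => dd_eq_sum F ξ x
  rw [dd_eq_sum (dd ξ F)]
  refine Finset.sum_congr rfl fun i _ => ?_
  rw [e, dd_sum _ (fun j => contDiff_const.mul (hF.dd (ei j)))]
  rw [Finset.mul_sum]
  refine Finset.sum_congr rfl fun j _ => ?_
  rw [dd_const_mul (hF.dd _)]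
  ring

lemma cv_eq' (g φ : E n → ℝ) (x : E n) : cv g φ x = ∫ y, g (x - y) * φ y := by
  rw [cv]
  have := integral_sub_left_eq_self (μ := (volume : Measure (E n)))
    (fun y => g (x - y) * φ y) x
  rw [← this]
  simp

lemma convex_cv {g : E n → ℝ} (hg : ConvexOn ℝ Set.univ g) (hc : Continuous g) {ε : ℝ}
    (M : Moll n ε) : ConvexOn ℝ Set.univ (cv g M.φ) := by
  have hi : ∀ x : E n, Integrable fun y => g (x - y) * M.φ y := fun x =>
    ((hc.comp (continuous_const.sub continuous_id)).mul
      M.sm.continuous).integrable_of_hasCompactSupport M.cs.mul_left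
  refine ⟨convex_univ, fun x _ z _ s t hs ht hst => ?_⟩
  simp only [cv_eq', smul_eq_mul]
  rw [← integral_const_mul, ← integral_const_mul, ← integral_add ((hi x).const_mul s)
    ((hi z).const_mul t)]
  refine integral_mono (hi _) (((hi x).const_mul s).add ((hi z).const_mul t)) fun y => ?_
  have := hg.2 (Set.mem_univ (x - y)) (Set.mem_univ (z - y)) hs ht hst
  have e : s • x + t • z - y = s • (x - y) + t • (z - y) := by
    have : y = (s + t) • y := by rw [hst, one_smul]
    conv_lhs => rw [this]
    module
  simp only [smul_eq_mul] at this
  simp only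
  rw [e]
  nlinarith [M.nonneg y, mul_le_mul_of_nonneg_right this (M.nonneg y)]

end Cvx
end GaugeLog

namespace GaugeLog
open scoped ContDiff

/-! ### Lipschitz regularisation of a log-concave density -/

section Inf
variable {n : ℕ} {p : E n → ℝ} {M k : ℝ}

/-- The infimal convolution of `-log p` (taken as `+∞` off the support of `p`) with `k‖·‖`. -/
def Vk (p : E n → ℝ) (k : ℝ) (x : E n) : ℝ :=
  ⨅ y : {y // 0 < p y}, (-log (p y) + k * ‖x - y‖)

/-- A bounded log-concave density which is not identically zero. -/
structure BLC (p : E n → ℝ) (M : ℝ) : Prop where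
  meas : Measurable p
  lc : IsLogConcaveDensity p
  le : ∀ x, p x ≤ M
  ne : ∃ x, 0 < p x

lemma BLC.Mpos (h : BLC p M) : 0 < M := by
  obtain ⟨x, hx⟩ := h.ne
  exact hx.trans_le (h.le x)

lemma BLC.log_ge (h : BLC p M) {y : E n} (hy : 0 < p y) : -log M ≤ -log (p y) :=
  neg_le_neg (Real.log_le_log hy (h.le y))

lemma BLC.bdd (h : BLC p M) (hk : 0 ≤ k) (x : E n) :
    BddBelow (Set.range fun y : {y // 0 < p y} => (-log (p y) + k * ‖x - y‖)) := by
  refine ⟨-log M, ?_⟩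
  rintro _ ⟨y, rfl⟩
  have := h.log_ge y.2
  have := mul_nonneg hk (norm_nonneg (x - y))
  simp only
  linarith

lemma BLC.Vk_le (h : BLC p M) (hk : 0 ≤ k) (x : E n) {y : E n} (hy : 0 < p y) :
    Vk p k x ≤ -log (p y) + k * ‖x - y‖ :=
  ciInf_le (h.bdd hk x) (⟨y, hy⟩ : {y // 0 < p y})

lemma BLC.exists_lt (h : BLC p M) (x : E n) {c : ℝ} (hc : Vk p k x < c) :
    ∃ y, 0 < p y ∧ -log (p y) + k * ‖x - y‖ < c := by
  have : Nonempty {y // 0 < p y} := by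
    obtain ⟨y, hy⟩ := h.ne
    exact ⟨⟨y, hy⟩⟩
  obtain ⟨y, hy⟩ := exists_lt_of_ciInf_lt hc
  exact ⟨y, y.2, hy⟩

lemma BLC.le_Vk (h : BLC p M) (x : E n) {c : ℝ}
    (hc : ∀ y, 0 < p y → c ≤ -log (p y) + k * ‖x - y‖) : c ≤ Vk p k x := by
  by_contra! hlt
  obtain ⟨y, hy, h2⟩ := h.exists_lt x hlt
  linarith [hc y hy]

lemma BLC.Vk_ge (h : BLC p M) (hk : 0 ≤ k) (x : E n) : -log M ≤ Vk p k x :=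
  h.le_Vk x fun y hy => by
    have := h.log_ge hy
    have := mul_nonneg hk (norm_nonneg (x - y))
    linarith

lemma BLC.Vk_lip (h : BLC p M) (hk : 0 ≤ k) (x z : E n) : Vk p k x ≤ Vk p k z + k * ‖x - z‖ := by
  rw [← sub_le_iff_le_add]
  refine h.le_Vk z fun y hy => ?_
  have h1 := h.Vk_le hk x hy
  have h2 : ‖x - y‖ ≤ ‖x - z‖ + ‖z - y‖ := by
    have := norm_add_le (x - z) (z - y)
    simpa using this
  nlinarith

lemma BLC.Vk_abs (h : BLC p M) (hk : 0 ≤ k) (x z : E n) :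
    |Vk p k x - Vk p k z| ≤ k * ‖x - z‖ := by
  rw [abs_le]
  have h1 := h.Vk_lip hk x z
  have h2 := h.Vk_lip hk z x
  rw [norm_sub_rev] at h2
  constructor <;> linarith

lemma BLC.Vk_cont (h : BLC p M) (hk : 0 ≤ k) : Continuous (Vk p k) := by
  have : LipschitzWith (Real.toNNReal k) (Vk p k) := LipschitzWith.of_dist_le_mul fun x z => by
    rw [Real.dist_eq, dist_eq_norm, Real.coe_toNNReal _ hk]
    exact h.Vk_abs hk x z
  exact this.continuous

lemma lc_pos (h : IsLogConcaveDensity p) {x y : E n} (hx : 0 < p x) (hy : 0 < p y) {s t : ℝ}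
    (hs : 0 ≤ s) (ht : 0 ≤ t) (hst : s + t = 1) :
    0 < p (s • x + t • y) ∧ s * log (p x) + t * log (p y) ≤ log (p (s • x + t • y)) := by
  have h1 := h.2 x y s hs (by linarith)
  have e : 1 - s = t := by linarith
  rw [e] at h1
  have h2 : 0 < p x ^ s * p y ^ t := mul_pos (rpow_pos_of_pos hx _) (rpow_pos_of_pos hy _)
  refine ⟨h2.trans_le h1, ?_⟩
  have := Real.log_le_log h2 h1
  rwa [Real.log_mul (rpow_pos_of_pos hx _).ne' (rpow_pos_of_pos hy _).ne', Real.log_rpow hx,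
    Real.log_rpow hy] at this

lemma lc_convex (h : IsLogConcaveDensity p) : Convex ℝ {x | 0 < p x} :=
  fun _ hx _ hy _ _ hs ht hst => (lc_pos h hx hy hs ht hst).1

lemma lc_concave (h : IsLogConcaveDensity p) : ConcaveOn ℝ {x | 0 < p x} fun x => log (p x) :=
  ⟨lc_convex h, fun _ hx _ hy _ _ hs ht hst => (lc_pos h hx hy hs ht hst).2⟩

lemma BLC.Vk_convex (h : BLC p M) (hk : 0 ≤ k) : ConvexOn ℝ Set.univ (Vk p k) := by
  refine ⟨convex_univ, fun x _ z _ s t hs ht hst => ?_⟩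
  simp only [smul_eq_mul]
  refine le_of_forall_pos_le_add fun ε hε => ?_
  obtain ⟨y, hy, hy2⟩ := h.exists_lt (k := k) x (lt_add_of_pos_right _ hε)
  obtain ⟨w, hw, hw2⟩ := h.exists_lt (k := k) z (lt_add_of_pos_right _ hε)
  obtain ⟨h1, h2⟩ := lc_pos h.lc hy hw hs ht hst
  have h3 := h.Vk_le hk (s • x + t • z) h1
  have h4 : ‖s • x + t • z - (s • y + t • w)‖ ≤ s * ‖x - y‖ + t * ‖z - w‖ := by
    have e : s • x + t • z - (s • y + t • w) = s • (x - y) + t • (z - w) := by module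
    rw [e]
    refine (norm_add_le _ _).trans ?_
    rw [norm_smul, norm_smul, Real.norm_of_nonneg hs, Real.norm_of_nonneg ht]
  have h5 := mul_le_mul_of_nonneg_left h4 hk
  have h6 := mul_le_mul_of_nonneg_left hy2.le hs
  have h7 := mul_le_mul_of_nonneg_left hw2.le ht
  have : s * ε + t * ε = ε := by rw [← add_mul, hst, one_mul]
  nlinarith

/-- As `k → ∞` the regularised densities converge to `p` off the boundary of its support. -/
lemma BLC.tendsto (h : BLC p M) {x : E n} (hx : x ∉ frontier {x | 0 < p x}) :
    Filter.Tendsto (fun k : ℕ => exp (-Vk p k x)) Filter.atTop (nhds (p x)) := by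
  rw [frontier, Set.mem_sdiff, not_and, not_not] at hx
  by_cases hcl : x ∈ closure {x | 0 < p x}
  · have hInt := hx hcl
    have hp : 0 < p x := interior_subset (s := {x | 0 < p x}) hInt
    have hcont : ContinuousAt (fun x => log (p x)) x :=
      (lc_concave h.lc).continuousOn_interior.continuousAt (isOpen_interior.mem_nhds hInt)
    suffices hs : Filter.Tendsto (fun k : ℕ => Vk p k x) Filter.atTop (nhds (-log (p x))) by
      have := (Real.continuous_exp.tendsto _).comp hs.neg
      simpa [Function.comp_def, Real.exp_log hp] using this
    rw [Metric.tendsto_atTop]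
    intro ε hε
    obtain ⟨δ, hδ, hd⟩ := Metric.continuousAt_iff.1 hcont (ε / 2) (by positivity)
    obtain ⟨N, hN⟩ := exists_nat_gt ((ε - log (p x) + log M) / δ)
    refine ⟨N, fun k hk => ?_⟩
    have hk' : (N : ℝ) ≤ k := by exact_mod_cast hk
    have h1 := h.Vk_le (Nat.cast_nonneg k) x hp
    simp only [sub_self, norm_zero, mul_zero, add_zero] at h1
    rw [Real.dist_eq, abs_lt]
    refine ⟨?_, by linarith⟩
    obtain ⟨y, hy, hy2⟩ := h.exists_lt (k := (k : ℝ)) x (lt_add_of_pos_right _ (half_pos hε))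
    have h2 := h.log_ge hy
    have h3 : ‖x - y‖ < δ := by
      by_contra! hge
      rw [div_lt_iff₀ hδ] at hN
      have : (k : ℝ) * ‖x - y‖ ≥ N * δ := mul_le_mul hk' hge hδ.le (Nat.cast_nonneg k)
      linarith
    have h4 := hd (x := y) (by rw [dist_comm, dist_eq_norm]; exact h3)
    rw [Real.dist_eq, abs_lt] at h4
    have h5 : 0 ≤ (k : ℝ) * ‖x - y‖ := by positivity
    linarith
  · have hp : p x = 0 := by
      by_contra hne
      exact hcl (subset_closure (lt_of_le_of_ne (h.lc.1 x) (Ne.symm hne)))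
    rw [hp]
    obtain ⟨δ, hδ, hd⟩ := Metric.isOpen_iff.1 isClosed_closure.isOpen_compl x hcl
    have hb : ∀ k : ℕ, exp (-Vk p k x) ≤ M * exp (-δ * k) := by
      intro k
      have : -log M + k * δ ≤ Vk p k x := by
        refine h.le_Vk x fun y hy => ?_
        have h1 := h.log_ge hy
        have h2 : δ ≤ ‖x - y‖ := by
          by_contra! hlt
          have : y ∈ Metric.ball x δ := by rwa [Metric.mem_ball, dist_comm, dist_eq_norm]
          exact hd this (subset_closure hy)
        have := mul_le_mul_of_nonneg_left h2 (Nat.cast_nonneg (α := ℝ) k)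
        linarith
      calc exp (-Vk p k x) ≤ exp (log M + -δ * k) := Real.exp_le_exp.2 (by linarith)
        _ = _ := by rw [Real.exp_add, Real.exp_log h.Mpos]
    refine squeeze_zero (fun k => (exp_pos _).le) hb ?_
    have : Filter.Tendsto (fun k : ℕ => exp (-δ * k)) Filter.atTop (nhds 0) := by
      apply Real.tendsto_exp_atBot.comp
      exact tendsto_natCast_atTop_atTop.const_mul_atTop_of_neg (by linarith)
    simpa using this.const_mul M

end Inf
end GaugeLog

namespace GaugeLog
open scoped ContDiff

/-! ### The improved Lichnerowicz inequality for tilted log-concave densities -/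

section App
variable {n : ℕ} {p : E n → ℝ} {M t : ℝ} {θ : E n}

/-- The Gaussian tilt `exp (⟪θ, x⟫ - t ‖x‖² / 2)`. -/
def gw (t : ℝ) (θ x : E n) : ℝ := exp (⟪θ, x⟫ - t * ‖x‖ ^ 2 / 2)

lemma gw_pos (t : ℝ) (θ x : E n) : 0 < gw t θ x := exp_pos _

lemma gw_cont (t : ℝ) (θ : E n) : Continuous (gw t θ) := by unfold gw; fun_prop

/-- The mean of `g` with respect to the probability density proportional to `w`. -/
def mw (w g : E n → ℝ) : ℝ := (∫ x, g x * w x) / ∫ x, w x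

lemma integrable_gw (ht : 0 < t) (θ : E n) : Integrable (gw t θ) := by
  have h := (GaussianFourier.integrable_cexp_neg_mul_sq_norm_add (V := E n) (b := (t / 2 : ℝ))
    (by simpa using ht) 1 θ).re
  refine h.congr (Filter.Eventually.of_forall fun x => ?_)
  simp only [gw]
  rw [show (-((t / 2 : ℝ) : ℂ) * (‖x‖ : ℂ) ^ 2 + 1 * ((⟪θ, x⟫ : ℝ) : ℂ))
    = ((⟪θ, x⟫ - t * ‖x‖ ^ 2 / 2 : ℝ) : ℂ) by push_cast; ring]
  exact Complex.exp_ofReal_re _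

/-- Continuous functions growing at most like `‖x‖ ^ (2 * j)`. -/
def Gr (j : ℕ) (g : E n → ℝ) : Prop :=
  Continuous g ∧ ∃ C : ℝ, 0 ≤ C ∧ ∀ x, |g x| ≤ C * (1 + ‖x‖ ^ 2) ^ j

lemma Gr.mul {i j : ℕ} {f g : E n → ℝ} (hf : Gr i f) (hg : Gr j g) :
    Gr (i + j) (fun x => f x * g x) := by
  obtain ⟨hf, C, hC, h1⟩ := hf
  obtain ⟨hg, D, hD, h2⟩ := hg
  refine ⟨hf.mul hg, C * D, by positivity, fun x => ?_⟩
  rw [abs_mul, pow_add]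
  calc |f x| * |g x| ≤ (C * (1 + ‖x‖ ^ 2) ^ i) * (D * (1 + ‖x‖ ^ 2) ^ j) :=
        mul_le_mul (h1 x) (h2 x) (abs_nonneg _) (by positivity)
    _ = _ := by ring

lemma Gr.sq {f : E n → ℝ} (hf : Gr 1 f) : Gr 2 (fun x => f x ^ 2) := by
  simpa only [pow_two] using hf.mul hf

lemma Gr.up {f : E n → ℝ} (hf : Gr 1 f) : Gr 2 f := by
  have : Gr 1 (fun _ : E n => (1 : ℝ)) :=
    ⟨continuous_const, 1, zero_le_one, fun x => by simp⟩
  simpa using hf.mul this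

lemma Gr.one : Gr 2 (fun _ : E n => (1 : ℝ)) :=
  ⟨continuous_const, 1, zero_le_one, fun x => by
    simp only [abs_one, one_mul]; exact one_le_pow₀ (by nlinarith [sq_nonneg ‖x‖])⟩

lemma Gr.inner (b : E n) : Gr 1 (fun x : E n => ⟪b, x⟫) := by
  refine ⟨by fun_prop, ‖b‖, norm_nonneg _, fun x => (abs_real_inner_le_norm b x).trans ?_⟩
  rw [pow_one]
  exact mul_le_mul_of_nonneg_left (by nlinarith [sq_nonneg (‖x‖ - 1)]) (norm_nonneg _)

lemma Gr.coord (i : Fin n) : Gr 1 (fun x : E n => x i) := by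
  have := Gr.inner (ei i)
  simpa [real_inner_comm, inner_ei] using this

lemma sq_le_exp (ht : 0 < t) : ∃ C : ℝ, 0 ≤ C ∧ ∀ r : ℝ, (1 + r ^ 2) ^ 2 ≤ C * exp (t * r ^ 2 / 4) := by
  refine ⟨2 + 64 / t ^ 2, by positivity, fun r => ?_⟩
  have h1 : 1 ≤ exp (t * r ^ 2 / 4) := Real.one_le_exp (by positivity)
  have h2 := Real.pow_div_factorial_le_exp (x := t * r ^ 2 / 4) (by positivity) 2
  have h3 : r ^ 4 ≤ 32 / t ^ 2 * exp (t * r ^ 2 / 4) := by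
    rw [div_mul_eq_mul_div, le_div_iff₀ (by positivity)]
    norm_num [Nat.factorial] at h2
    nlinarith
  have h4 : 64 / t ^ 2 = 2 * (32 / t ^ 2) := by ring
  rw [h4]
  nlinarith [sq_nonneg (r ^ 2 - 1)]

lemma integrable_gr (ht : 0 < t) (θ : E n) : Integrable fun x : E n => (1 + ‖x‖ ^ 2) ^ 2 * gw t θ x := by
  obtain ⟨C, hC, h⟩ := sq_le_exp ht
  refine ((integrable_gw (half_pos ht) θ).const_mul C).mono'
    ((by fun_prop : Continuous fun x : E n => (1 + ‖x‖ ^ 2) ^ 2).mul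
      (gw_cont t θ)).aestronglyMeasurable (Filter.Eventually.of_forall fun x => ?_)
  have hg := gw_pos t θ x
  rw [Real.norm_of_nonneg (by positivity)]
  calc (1 + ‖x‖ ^ 2) ^ 2 * gw t θ x ≤ C * exp (t * ‖x‖ ^ 2 / 4) * gw t θ x :=
        mul_le_mul_of_nonneg_right (h _) hg.le
    _ = C * gw (t / 2) θ x := by
      rw [mul_assoc, gw, gw, ← Real.exp_add]; congr 2; ring

lemma integrable_wt (ht : 0 < t) (θ : E n) {q : E n → ℝ} {K : ℝ} (hq : Measurable q)
    (hb : ∀ x, |q x| ≤ K) {g : E n → ℝ} (hg : Gr 2 g) :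
    Integrable fun x => g x * (gw t θ x * q x) := by
  obtain ⟨hgc, C, hC, h⟩ := hg
  have hK : 0 ≤ K := (abs_nonneg _).trans (hb 0)
  refine ((integrable_gr ht θ).const_mul (C * K)).mono'
    (hgc.aestronglyMeasurable.mul ((gw_cont t θ).aestronglyMeasurable.mul
      hq.aestronglyMeasurable)) (Filter.Eventually.of_forall fun x => ?_)
  have hg := gw_pos t θ x
  rw [Real.norm_eq_abs, abs_mul, abs_mul, abs_of_pos hg]
  calc |g x| * (gw t θ x * |q x|) ≤ (C * (1 + ‖x‖ ^ 2) ^ 2) * (gw t θ x * K) := by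
        gcongr
        · exact h x
        · exact hb x
    _ = _ := by ring

/-- Smooth convex approximations of `-log p`. -/
def Wk (p : E n → ℝ) (k : ℕ) : E n → ℝ :=
  cv (Vk p ((k + 1 : ℕ) : ℝ)) (moll n (1 / ((k + 1 : ℕ) : ℝ) ^ 2) (by positivity)).φ

lemma BLC.Wk_sm (h : BLC p M) (k : ℕ) : Sm (Wk p k) :=
  sm_cv (h.Vk_cont (Nat.cast_nonneg _)).locallyIntegrable (moll n _ _).sm (moll n _ _).cs

lemma BLC.Wk_convex (h : BLC p M) (k : ℕ) : ConvexOn ℝ Set.univ (Wk p k) :=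
  convex_cv (h.Vk_convex (Nat.cast_nonneg _)) (h.Vk_cont (Nat.cast_nonneg _)) _

lemma BLC.Wk_sub (h : BLC p M) (k : ℕ) (x : E n) :
    |Wk p k x - Vk p ((k + 1 : ℕ) : ℝ) x| ≤ 1 / ((k : ℝ) + 1) := by
  refine Moll.abs_cv_sub_le _ (h.Vk_cont (Nat.cast_nonneg _)).locallyIntegrable x fun y hy => ?_
  refine (h.Vk_abs (Nat.cast_nonneg _) y x).trans ?_
  rw [norm_sub_rev]
  refine (mul_le_mul_of_nonneg_left hy (Nat.cast_nonneg _)).trans_eq ?_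
  push_cast
  field_simp

lemma BLC.exp_Wk_le (h : BLC p M) (k : ℕ) (x : E n) : |exp (-Wk p k x)| ≤ exp 1 * M := by
  have h1 := abs_le.1 (h.Wk_sub k x)
  have h2 := h.Vk_ge (k := ((k + 1 : ℕ) : ℝ)) (Nat.cast_nonneg _) x
  have h3 : 1 / ((k : ℝ) + 1) ≤ 1 := by
    rw [div_le_one (by positivity)]; linarith [(Nat.cast_nonneg k : (0 : ℝ) ≤ k)]
  rw [abs_of_pos (exp_pos _), ← Real.exp_log h.Mpos, ← Real.exp_add, Real.exp_le_exp]
  linarith [h1.1]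

lemma BLC.exp_Wk_tendsto (h : BLC p M) {x : E n} (hx : x ∉ frontier {x | 0 < p x}) :
    Filter.Tendsto (fun k : ℕ => exp (-Wk p k x)) Filter.atTop (nhds (p x)) := by
  have h1 := (h.tendsto hx).comp (Filter.tendsto_add_atTop_nat 1)
  have h2 : Filter.Tendsto (fun k : ℕ => Wk p k x - Vk p ((k + 1 : ℕ) : ℝ) x) Filter.atTop
      (nhds 0) :=
    squeeze_zero_norm (fun k => h.Wk_sub k x) tendsto_one_div_add_atTop_nhds_zero_nat
  have h3 := ((Real.continuous_exp.tendsto _).comp h2.neg).mul h1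
  simp only [neg_zero, Real.exp_zero, one_mul] at h3
  refine h3.congr fun k => ?_
  simp only [Function.comp]
  rw [← Real.exp_add]
  congr 1; ring

lemma BLC.int_tendsto (h : BLC p M) (ht : 0 < t) (θ : E n) {g : E n → ℝ} (hg : Gr 2 g) :
    Filter.Tendsto (fun k : ℕ => ∫ x, g x * (gw t θ x * exp (-Wk p k x))) Filter.atTop
      (nhds (∫ x, g x * (gw t θ x * p x))) := by
  have hb := integrable_wt (q := fun _ => exp 1 * M) ht θ measurable_const (fun x => le_rfl)
    (g := fun x => |g x|) ⟨hg.1.abs, by simpa using hg.2⟩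
  have hM := h.Mpos
  refine tendsto_integral_of_dominated_convergence _ (fun k => ?_) hb (fun k => ?_) ?_
  · exact (hg.1.mul ((gw_cont t θ).mul
      (Real.continuous_exp.comp (h.Wk_sm k).continuous.neg))).aestronglyMeasurable
  · refine Filter.Eventually.of_forall fun x => ?_
    rw [Real.norm_eq_abs, abs_mul, abs_mul, abs_of_pos (gw_pos _ _ _)]
    gcongr
    · exact (gw_pos _ _ _).le
    · exact h.exp_Wk_le k x
  · have hn : volume (frontier {x | 0 < p x}) = 0 := (lc_convex h.lc).addHaar_frontier volume
    have : ∀ᵐ x, x ∉ frontier {x | 0 < p x} := measure_eq_zero_iff_ae_notMem.1 hn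
    filter_upwards [this] with x hx
    exact ((h.exp_Wk_tendsto hx).const_mul _).const_mul _

lemma BLC.mw_tendsto (h : BLC p M) (ht : 0 < t) (θ : E n) (hZ : 0 < ∫ x, gw t θ x * p x)
    {g : E n → ℝ} (hg : Gr 2 g) :
    Filter.Tendsto (fun k : ℕ => mw (fun x => gw t θ x * exp (-Wk p k x)) g) Filter.atTop
      (nhds (mw (fun x => gw t θ x * p x) g)) := by
  refine (h.int_tendsto ht θ hg).div ?_ hZ.ne'
  simpa using h.int_tendsto ht θ Gr.one

end App
end GaugeLog

namespace GaugeLog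
open scoped ContDiff

section App2
variable {n : ℕ} {p : E n → ℝ} {M t : ℝ} {θ : E n}

/-- The covariance entries of the probability density proportional to `w`. -/
def cw (w : E n → ℝ) (i j : Fin n) : ℝ :=
  mw w (fun x => x i * x j) - mw w (fun x => x i) * mw w (fun x => x j)

lemma mw_sum {w : E n → ℝ} {ι : Type*} (s : Finset ι) (c : ι → ℝ) (g : ι → E n → ℝ)
    (hg : ∀ i, Integrable fun x => g i x * w x) :
    mw w (fun x => ∑ i ∈ s, c i * g i x) = ∑ i ∈ s, c i * mw w (g i) := by
  simp only [mw, Finset.sum_mul, mul_assoc]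
  rw [integral_finsetSum _ fun i _ => (hg i).const_mul (c i), Finset.sum_div]
  simp only [integral_const_mul, mul_div_assoc]

lemma inner_eq_sum (b x : E n) : ⟪b, x⟫ = ∑ i, b i * x i := by
  simp [PiLp.inner_apply, mul_comm]

lemma mw_inner {w : E n → ℝ} (h1 : ∀ i, Integrable fun x : E n => x i * w x) (b : E n) :
    mw w (fun x => ⟪b, x⟫) = ∑ i, b i * mw w (fun x => x i) := by
  simp_rw [inner_eq_sum]
  exact mw_sum _ _ _ h1

lemma mw_inner_sq {w : E n → ℝ} (h2 : ∀ i j, Integrable fun x : E n => x i * x j * w x) (b : E n) :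
    mw w (fun x => ⟪b, x⟫ ^ 2) = ∑ i, ∑ j, b i * b j * mw w (fun x => x i * x j) := by
  have e : (fun x : E n => ⟪b, x⟫ ^ 2)
      = fun x => ∑ q : Fin n × Fin n, (b q.1 * b q.2) * (x q.1 * x q.2) := by
    funext x
    rw [inner_eq_sum, pow_two, Finset.sum_mul_sum, Fintype.sum_prod_type]
    refine Finset.sum_congr rfl fun i _ => Finset.sum_congr rfl fun j _ => by ring
  rw [e, mw_sum Finset.univ (fun q : Fin n × Fin n => b q.1 * b q.2)
    (fun q x => x q.1 * x q.2) fun q => h2 q.1 q.2, Fintype.sum_prod_type]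

lemma mw_var {w : E n → ℝ} (h1 : ∀ i, Integrable fun x : E n => x i * w x)
    (h2 : ∀ i j, Integrable fun x : E n => x i * x j * w x) (b : E n) :
    mw w (fun x => ⟪b, x⟫ ^ 2) - mw w (fun x => ⟪b, x⟫) ^ 2 = ∑ i, ∑ j, b i * b j * cw w i j := by
  rw [mw_inner h1, mw_inner_sq h2, pow_two, Finset.sum_mul_sum, ← Finset.sum_sub_distrib]
  refine Finset.sum_congr rfl fun i _ => ?_
  rw [← Finset.sum_sub_distrib]
  refine Finset.sum_congr rfl fun j _ => ?_
  rw [cw]; ring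

lemma abs_coord_le (b : E n) (i : Fin n) : |b i| ≤ ‖b‖ := by
  have := PiLp.norm_apply_le (p := 2) b i
  simpa using this

lemma quad_sub_le (b : E n) (c d : Fin n → Fin n → ℝ) :
    ∑ i, ∑ j, b i * b j * c i j ≤ (∑ i, ∑ j, b i * b j * d i j)
      + (∑ i, ∑ j, |c i j - d i j|) * ‖b‖ ^ 2 := by
  simp_rw [Finset.sum_mul, ← Finset.sum_add_distrib]
  refine Finset.sum_le_sum fun i _ => Finset.sum_le_sum fun j _ => ?_
  have h1 : b i * b j * (c i j - d i j) ≤ |c i j - d i j| * ‖b‖ ^ 2 := by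
    refine (le_abs_self _).trans ?_
    rw [abs_mul, abs_mul, mul_comm, pow_two]
    exact mul_le_mul_of_nonneg_left (mul_le_mul (abs_coord_le b i) (abs_coord_le b j)
      (abs_nonneg _) (norm_nonneg _)) (abs_nonneg _)
  nlinarith

lemma dd_sq_norm (v : E n) : dd v (fun x : E n => ‖x‖ ^ 2) = fun x => 2 * ⟪v, x⟫ := by
  funext x
  simp only [dd]
  have : HasFDerivAt (fun x : E n => ‖x‖ ^ 2) (2 • (innerSL ℝ x)) x := by
    simpa using (hasStrictFDerivAt_norm_sq x).hasFDerivAt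
  rw [this.fderiv]
  simp [real_inner_comm]

/-- The potential of the approximating probability densities, `c` being the normalisation. -/
def Uk (p : E n → ℝ) (t : ℝ) (θ : E n) (k : ℕ) (c : ℝ) (x : E n) : ℝ :=
  Wk p k x + (t / 2 * ‖x‖ ^ 2 + (c - ⟪θ, x⟫))

lemma BLC.Uk_sm (h : BLC p M) (t : ℝ) (θ : E n) (k : ℕ) (c : ℝ) : Sm (Uk p t θ k c) :=
  (h.Wk_sm k).add ((contDiff_const.mul (contDiff_norm_sq ℝ)).add
    (contDiff_const.sub (sm_inner θ)))

lemma BLC.Uk_hess (h : BLC p M) (t : ℝ) (θ : E n) (k : ℕ) (c : ℝ) (x : E n) (ξ : Fin n → ℝ) :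
    t * ∑ i, ξ i ^ 2 ≤ ∑ i, ∑ j, dd (ei i) (dd (ei j) (Uk p t θ k c)) x * ξ j * ξ i := by
  have h0 := hess_eq (h.Uk_sm t θ k c) x (WithLp.toLp 2 ξ)
  simp only at h0
  rw [h0]
  set v : E n := WithLp.toLp 2 ξ
  have sq : Sm fun x : E n => ‖x‖ ^ 2 := contDiff_norm_sq ℝ
  have e1 : dd v (Uk p t θ k c) = fun x => dd v (Wk p k) x + (t * ⟪v, x⟫ + (0 - ⟪θ, v⟫)) := by
    unfold Uk
    rw [dd_add (h.Wk_sm k) ((contDiff_const.mul sq).add (contDiff_const.sub (sm_inner θ))),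
      dd_add (contDiff_const.mul sq) (contDiff_const.sub (sm_inner θ)), dd_const_mul sq,
      dd_sub contDiff_const (sm_inner θ), dd_sq_norm, dd_inner, dd_const]
    funext x; ring
  rw [e1, dd_add ((h.Wk_sm k).dd v) ((contDiff_const.mul (sm_inner v)).add contDiff_const),
    dd_add (contDiff_const.mul (sm_inner v)) contDiff_const, dd_const_mul (sm_inner v), dd_inner,
    dd_const]
  have h1 := convex_hess (h.Wk_sm k) (h.Wk_convex k) v x
  have h2 : ⟪v, v⟫ = ∑ i, ξ i ^ 2 := by
    rw [inner_eq_sum]; exact Finset.sum_congr rfl fun i _ => by simp [v, pow_two]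
  simp only
  rw [h2]; linarith

/-- The improved Lichnerowicz inequality for the tilt of a bounded log-concave density. -/
theorem BLC.lichnerowicz (h : BLC p M) (ht : 0 < t) (hZ : 0 < ∫ x, gw t θ x * p x) {α : ℝ}
    (hα : 0 < α)
    (hcov : ∀ b : E n, mw (fun x => gw t θ x * p x) (fun x => ⟪b, x⟫ ^ 2)
      - mw (fun x => gw t θ x * p x) (fun x => ⟪b, x⟫) ^ 2 ≤ α * ‖b‖ ^ 2)
    {f : E n → ℝ} (hf : Sm f) (hf1 : Gr 1 f) (hfi : ∀ i, Gr 1 (dd (ei i) f)) :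
    mw (fun x => gw t θ x * p x) (fun x => f x ^ 2) - mw (fun x => gw t θ x * p x) f ^ 2 ≤
      Real.sqrt (α / t) * ∑ i, mw (fun x => gw t θ x * p x) (fun x => dd (ei i) f x ^ 2) := by
  set w : E n → ℝ := fun x => gw t θ x * p x with hw
  set wk : ℕ → E n → ℝ := fun k x => gw t θ x * exp (-Wk p k x) with hwk
  have tend : ∀ {g : E n → ℝ}, Gr 2 g → Filter.Tendsto (fun k => mw (wk k) g) Filter.atTop
      (nhds (mw w g)) := fun hg => h.mw_tendsto ht θ hZ hg
  have hik : ∀ k {g : E n → ℝ}, Gr 2 g → Integrable fun x => g x * wk k x := fun k g hg =>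
    integrable_wt ht θ (Real.continuous_exp.comp (h.Wk_sm k).continuous.neg).measurable
      (h.exp_Wk_le k) hg
  have hi : ∀ {g : E n → ℝ}, Gr 2 g → Integrable fun x => g x * w x := fun hg =>
    integrable_wt ht θ h.meas (fun x => by rw [abs_of_nonneg (h.lc.1 x)]; exact h.le x) hg
  have hc2 : ∀ i j : Fin n, Gr 2 fun x : E n => x i * x j := fun i j =>
    (Gr.coord i).mul (Gr.coord j)
  let δ : ℕ → ℝ := fun k => ∑ i, ∑ j, |cw (wk k) i j - cw w i j|
  have hδ : Filter.Tendsto δ Filter.atTop (nhds 0) := by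
    have : (0 : ℝ) = ∑ i : Fin n, ∑ j : Fin n, 0 := by simp
    rw [this]
    refine tendsto_finsetSum _ fun i _ => tendsto_finsetSum _ fun j _ => ?_
    have := (tend (hc2 i j)).sub ((tend (Gr.coord i).up).mul (tend (Gr.coord j).up))
    have := (this.sub_const (cw w i j)).abs
    simpa [cw] using this
  have hδ0 : ∀ k, 0 ≤ δ k := fun k => Finset.sum_nonneg fun i _ => Finset.sum_nonneg fun j _ =>
    abs_nonneg _
  have hZk : ∀ k, 0 < ∫ x, wk k x := by
    intro k
    have hInt : Integrable (wk k) := by simpa using hik k Gr.one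
    refine (integral_pos_iff_support_of_nonneg (fun x => ?_) hInt).2 ?_
    · exact (mul_pos (gw_pos t θ x) (exp_pos _)).le
    · have : Function.support (wk k) = Set.univ := by
        ext x
        simp [wk, (gw_pos t θ x).ne']
      rw [this]
      exact isOpen_univ.measure_pos volume Set.univ_nonempty
  have key : ∀ k, mw (wk k) (fun x => f x ^ 2) - mw (wk k) f ^ 2 ≤
      Real.sqrt ((α + δ k) / t) * ∑ i, mw (wk k) (fun x => dd (ei i) f x ^ 2) := by
    intro k
    set U := Uk p t θ k (log (∫ x, wk k x)) with hU
    have hUs : Sm U := h.Uk_sm _ _ _ _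
    have hexp : ∀ x, exp (-U x) = wk k x * (∫ x, wk k x)⁻¹ := by
      intro x
      have : -U x = (⟪θ, x⟫ - t * ‖x‖ ^ 2 / 2) + (-Wk p k x) + (-log (∫ x, wk k x)) := by
        simp only [hU, Uk]; ring
      rw [this, Real.exp_add, Real.exp_add, Real.exp_neg (log _), Real.exp_log (hZk k)]
      rfl
    have hmean : ∀ g : E n → ℝ, ∫ x, g x ∂(nu U) = mw (wk k) g := by
      intro g
      rw [int_nu hUs.continuous, mw]
      simp_rw [hexp, ← mul_assoc]
      rw [integral_mul_const, div_eq_mul_inv]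
    have hInt : ∀ {g : E n → ℝ}, Gr 2 g → Integrable g (nu U) := by
      intro g hg
      rw [integrable_nu hUs.continuous]
      simp_rw [hexp, ← mul_assoc]
      exact (hik k hg).mul_const _
    have hprob : IsProbabilityMeasure (nu U) := by
      have h1 : Integrable (fun _ : E n => (1 : ℝ)) (nu U) := hInt Gr.one
      have h2 : ∫ x, (1 : ℝ) ∂(nu U) = 1 := by
        rw [hmean, mw]; simp [(hZk k).ne']
      have h3 : IsFiniteMeasure (nu U) := by
        rw [integrable_const_iff] at h1
        simpa using h1
      constructor
      rw [integral_const] at h2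
      simp only [smul_eq_mul, mul_one] at h2
      rw [measureReal_def, ENNReal.toReal_eq_one_iff] at h2
      exact h2
    have hL2 : ∀ {g : E n → ℝ}, Gr 1 g → MemLp g 2 (nu U) := fun hg =>
      (memLp_two_iff_integrable_sq hg.1.aestronglyMeasurable).2 (hInt hg.sq)
    have hnorm : Integrable (fun x => ‖x‖ ^ 2) (nu U) := by
      refine hInt (Gr.up ⟨by fun_prop, 1, zero_le_one, fun x => ?_⟩)
      rw [abs_of_nonneg (by positivity)]; linarith
    have := GaugeLog.lichnerowicz hUs hnorm (α := α + δ k) (by linarith [hδ0 k]) ht (fun b => ?_)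
      (h.Uk_hess t θ k _) hf (hL2 hf1) (fun i => hL2 (hfi i))
    · simpa only [hmean] using this
    · rw [hmean, hmean, mw_var (fun i => hik k (Gr.coord i).up) fun i j => hik k (hc2 i j)]
      have h1 := hcov b
      rw [mw_var (fun i => hi (Gr.coord i).up) fun i j => hi (hc2 i j)] at h1
      have h2 := quad_sub_le b (cw (wk k)) (cw w)
      rw [add_mul]
      linarith
  have l1 := (tend hf1.sq).sub ((tend hf1.up).pow 2)
  have l2 : Filter.Tendsto (fun k => Real.sqrt ((α + δ k) / t)) Filter.atTop
      (nhds (Real.sqrt (α / t))) := by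
    have := ((hδ.const_add α).div_const t).sqrt
    simpa using this
  exact le_of_tendsto_of_tendsto' l1
    (l2.mul (tendsto_finsetSum _ fun i _ => tend (hfi i).sq)) key

end App2
end GaugeLog

namespace GaugeLog
open scoped ContDiff

/-! ### The standard Gaussian measure -/

section Gauss
variable {n : ℕ}

/-- The standard Gaussian density. -/
def gd (n : ℕ) (x : E n) : ℝ := (2 * π) ^ (-(n : ℝ) / 2) * Real.exp (-‖x‖ ^ 2 / 2)

lemma gd_eq (x : E n) : gd n x = (2 * π) ^ (-(n : ℝ) / 2) * gw 1 0 x := by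
  simp [gd, gw, neg_div]

lemma gd_pos (x : E n) : 0 < gd n x := mul_pos (rpow_pos_of_pos (by positivity) _) (exp_pos _)

lemma gd_cont : Continuous (gd n) := by unfold gd; fun_prop

lemma gd_sm : Sm (gd n) := by
  unfold gd
  exact contDiff_const.mul (((contDiff_norm_sq ℝ).neg.div_const 2).exp)

lemma int_gauss (f : E n → ℝ) : ∫ x, f x ∂(stdGaussian n) = ∫ x, f x * gd n x := by
  rw [stdGaussian, integral_withDensity_eq_integral_toReal_smul (by fun_prop) (by simp)]
  congr 1; funext x
  change (ENNReal.ofReal (gd n x)).toReal • f x = _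
  rw [ENNReal.toReal_ofReal (gd_pos x).le, smul_eq_mul, mul_comm]

lemma integrable_gauss (f : E n → ℝ) :
    Integrable f (stdGaussian n) ↔ Integrable fun x => f x * gd n x := by
  rw [stdGaussian, integrable_withDensity_iff (by fun_prop) (by simp)]
  have : ∀ x : E n, (ENNReal.ofReal ((2 * π) ^ (-(n : ℝ) / 2) * Real.exp (-‖x‖ ^ 2 / 2))).toReal
    = gd n x := fun x => ENNReal.toReal_ofReal (gd_pos x).le
  simp_rw [this]

lemma integral_gd : ∫ x, gd n x = 1 := by
  have h := GaussianFourier.integral_rexp_neg_mul_sq_norm (V := E n) (b := 1 / 2) (by norm_num)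
  have e : ∀ x : E n, gd n x = (2 * π) ^ (-(n : ℝ) / 2) * exp (-(1 / 2) * ‖x‖ ^ 2) := by
    intro x; rw [gd]; congr 2; ring
  simp_rw [e]
  rw [integral_const_mul, h, finrank_euclideanSpace_fin]
  rw [show π / (1 / 2) = 2 * π by ring, ← Real.rpow_add (by positivity)]
  rw [show -(n : ℝ) / 2 + n / 2 = 0 by ring, Real.rpow_zero]

lemma integrable_gd_gr {g : E n → ℝ} (hg : Gr 2 g) : Integrable fun x => g x * gd n x := by
  have := (integrable_wt (t := 1) one_pos (0 : E n) (q := fun _ => (2 * π) ^ (-(n : ℝ) / 2))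
    measurable_const (fun x => le_rfl) hg)
  refine this.congr (Filter.Eventually.of_forall fun x => ?_)
  simp only [gd_eq]; ring

lemma gauss_gr {g : E n → ℝ} (hg : Gr 2 g) : Integrable g (stdGaussian n) :=
  (integrable_gauss g).2 (integrable_gd_gr hg)

instance gauss_prob : IsProbabilityMeasure (stdGaussian n) := by
  have h1 : Integrable (fun _ : E n => (1 : ℝ)) (stdGaussian n) := gauss_gr Gr.one
  have h2 : ∫ x, (1 : ℝ) ∂(stdGaussian n) = 1 := by
    rw [int_gauss]; simp [integral_gd]
  have h3 : IsFiniteMeasure (stdGaussian n) := by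
    rw [integrable_const_iff] at h1
    simpa using h1
  constructor
  rw [integral_const] at h2
  simp only [smul_eq_mul, mul_one] at h2
  rwa [measureReal_def, ENNReal.toReal_eq_one_iff] at h2

lemma dd_gd (v : E n) : dd v (gd n) = fun x => -(⟪v, x⟫ * gd n x) := by
  have sq : Sm fun x : E n => ‖x‖ ^ 2 := contDiff_norm_sq ℝ
  have e : gd n = fun x => (2 * π) ^ (-(n : ℝ) / 2) * exp ((-1 / 2) * ‖x‖ ^ 2) := by
    funext x; rw [gd]; congr 2; ring
  conv_lhs => rw [e]
  rw [dd_const_mul (contDiff_const.mul sq).exp, dd_exp (contDiff_const.mul sq), dd_const_mul sq,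
    dd_sq_norm]
  funext x
  rw [e]
  ring

/-- Gaussian integration by parts. -/
lemma gauss_ibp {K : E n → ℝ} (hK : Sm K) (h1 : Gr 1 K) (v : E n) (h2 : Gr 1 (dd v K)) :
    ∫ x, ⟪v, x⟫ * K x ∂(stdGaussian n) = ∫ x, dd v K x ∂(stdGaussian n) := by
  rw [int_gauss, int_gauss]
  have h := integral_mul_fderiv_eq_neg_fderiv_mul_of_integrable (μ := (volume : Measure (E n)))
    (f := K) (g := gd n) (v := v) ?_ ?_ ?_ (fun x _ => hK.differentiable x)
    (fun x _ => gd_sm.differentiable x)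
  · have e : ∀ x, K x * fderiv ℝ (gd n) x v = -(⟪v, x⟫ * K x * gd n x) := by
      intro x
      have := congrFun (dd_gd (n := n) v) x
      rw [dd] at this
      rw [this]; ring
    simp_rw [e, integral_neg, neg_inj] at h
    exact h
  · exact integrable_gd_gr h2.up
  · have e : ∀ x, K x * fderiv ℝ (gd n) x v = -(⟪v, x⟫ * K x * gd n x) := by
      intro x
      have := congrFun (dd_gd (n := n) v) x
      rw [dd] at this
      rw [this]; ring
    simp_rw [e]
    exact (integrable_gd_gr ((Gr.inner v).mul h1)).neg
  · exact integrable_gd_gr h1.up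

/-- The Cameron–Martin formula. -/
lemma gauss_shift (G : E n → ℝ) (v : E n) :
    ∫ g, G (v + g) ∂(stdGaussian n) = ∫ g, G g * gw (1 : ℝ) g v ∂(stdGaussian n) := by
  rw [int_gauss, int_gauss]
  have := integral_add_left_eq_self (μ := (volume : Measure (E n)))
    (fun g => G g * gd n (g - v)) v
  simp only [add_sub_cancel_left] at this
  rw [this]
  congr 1; funext g
  rw [mul_assoc]
  congr 1
  rw [gd, gd, gw, mul_left_comm, ← Real.exp_add]
  congr 2
  have := norm_sub_sq_real g v
  rw [this]; ring

lemma Gr_of_bound {g : E n → ℝ} (hc : Continuous g) {C : ℝ} (h : ∀ x, |g x| ≤ C * (1 + ‖x‖)) :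
    Gr 1 g := by
  have hC : 0 ≤ C := by
    have := (abs_nonneg _).trans (h 0)
    simpa using this
  refine ⟨hc, 2 * C, by positivity, fun x => (h x).trans ?_⟩
  nlinarith [sq_nonneg (‖x‖ - 1), mul_nonneg hC (sq_nonneg (‖x‖ - 1)), mul_nonneg hC (sq_nonneg ‖x‖)]

lemma Gr_const (c : ℝ) : Gr 1 (fun _ : E n => c) :=
  Gr_of_bound (C := |c|) continuous_const fun x => by
    nlinarith [abs_nonneg c, mul_nonneg (abs_nonneg c) (norm_nonneg x)]

end Gauss
end GaugeLog

namespace GaugeLog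
open scoped ContDiff

/-! ### Exponential tilts of a compactly supported measure -/

section Tilt
variable {n : ℕ}

/-- Time–space: the parameters `(t, θ)` of the tilt. -/
abbrev V (n : ℕ) : Type := ℝ × E n

/-- The exponent `⟪x, θ⟫ - t ‖x‖² / 2` of the tilt, as a linear functional of `(t, θ)`. -/
def lz (x : E n) : V n →L[ℝ] ℝ :=
  (innerSL ℝ x).comp (ContinuousLinearMap.snd ℝ ℝ (E n)) -
    (‖x‖ ^ 2 / 2) • ContinuousLinearMap.fst ℝ ℝ (E n)

lemma lz_apply (x : E n) (z : V n) : lz x z = ⟪x, z.2⟫ - ‖x‖ ^ 2 / 2 * z.1 := by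
  simp [lz]

lemma lz_cont (z : V n) : Continuous fun x : E n => lz x z := by
  simp only [lz_apply]; fun_prop

lemma lz_cont' : Continuous fun x : E n => lz x := by
  unfold lz; fun_prop

lemma lz_norm (x : E n) : ‖lz x‖ ≤ ‖x‖ + ‖x‖ ^ 2 / 2 := by
  refine ContinuousLinearMap.opNorm_le_bound _ (by positivity) fun z => ?_
  rw [lz_apply, Real.norm_eq_abs]
  have h1 := abs_real_inner_le_norm x z.2
  have h2 : ‖z.2‖ ≤ ‖z‖ := norm_snd_le z
  have h3 : |z.1| ≤ ‖z‖ := norm_fst_le z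
  refine (abs_sub _ _).trans ?_
  rw [abs_mul, abs_of_nonneg (by positivity : 0 ≤ ‖x‖ ^ 2 / 2)]
  nlinarith [mul_le_mul_of_nonneg_left h2 (norm_nonneg x),
    mul_le_mul_of_nonneg_left h3 (by positivity : 0 ≤ ‖x‖ ^ 2 / 2)]

/-- The unnormalised tilted integral of `φ`. -/
def Nt (μ : Measure (E n)) (φ : E n → ℝ) (z : V n) : ℝ := ∫ x, φ x * exp (lz x z) ∂μ

/-- A probability measure carried by a ball. -/
structure Cmp (μ : Measure (E n)) (R : ℝ) : Prop where
  prob : IsProbabilityMeasure μ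
  supp : ∀ᵐ x ∂μ, ‖x‖ ≤ R

variable {μ : Measure (E n)} {R : ℝ}

lemma Cmp.bound (_ : Cmp μ R) {φ : E n → ℝ} (hφ : Continuous φ) :
    ∃ C, 0 ≤ C ∧ ∀ x, ‖x‖ ≤ R → |φ x| ≤ C := by
  obtain ⟨C, hC⟩ := (isCompact_closedBall (0 : E n) R).exists_bound_of_continuousOn hφ.continuousOn
  refine ⟨max C 0, le_max_right _ _, fun x hx => (hC x (by simpa using hx)).trans (le_max_left _ _)⟩

lemma Cmp.integrable (h : Cmp μ R) {φ : E n → ℝ} (hφ : Continuous φ) : Integrable φ μ := by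
  have := h.prob
  obtain ⟨C, -, hC⟩ := h.bound hφ
  exact Integrable.of_bound hφ.aestronglyMeasurable C (h.supp.mono fun x hx => hC x hx)

lemma exp_cont (z : V n) : Continuous fun x : E n => exp (lz x z) :=
  Real.continuous_exp.comp (lz_cont z)

lemma Cmp.integrable_tilt (h : Cmp μ R) {φ : E n → ℝ} (hφ : Continuous φ) (z : V n) :
    Integrable (fun x => φ x * exp (lz x z)) μ := h.integrable (hφ.mul (exp_cont z))

lemma Cmp.hasFDerivAt (h : Cmp μ R) {φ : E n → ℝ} (hφ : Continuous φ) (z : V n) :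
    HasFDerivAt (Nt μ φ) (∫ x, (φ x * exp (lz x z)) • lz x ∂μ) z := by
  have := h.prob
  obtain ⟨C, hC0, hC⟩ := h.bound hφ
  let B := R + R ^ 2 / 2
  have hlz : ∀ x : E n, ‖x‖ ≤ R → ‖lz x‖ ≤ B := fun x hx => (lz_norm x).trans (by
    have : ‖x‖ ^ 2 ≤ R ^ 2 := pow_le_pow_left₀ (norm_nonneg _) hx 2
    simp only [B]; linarith)
  refine hasFDerivAt_integral_of_dominated_of_fderiv_le (Metric.ball_mem_nhds z one_pos)
    (bound := fun _ => C * exp (B * (‖z‖ + 1)) * B)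
    (F' := fun z x => (φ x * exp (lz x z)) • lz x) ?_ ?_ ?_ ?_ (integrable_const _) ?_
  · exact Filter.Eventually.of_forall fun z => (hφ.mul (exp_cont z)).aestronglyMeasurable
  · exact h.integrable_tilt hφ z
  · exact ((hφ.mul (exp_cont z)).smul lz_cont').aestronglyMeasurable
  · filter_upwards [h.supp] with x hx z' hz'
    have hz : ‖z'‖ ≤ ‖z‖ + 1 := by
      rw [Metric.mem_ball, dist_eq_norm] at hz'
      have := norm_add_le z (z' - z)
      rw [add_sub_cancel] at this
      linarith
    have hB : 0 ≤ B := (norm_nonneg _).trans (hlz x hx)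
    have he : exp (lz x z') ≤ exp (B * (‖z‖ + 1)) := by
      rw [Real.exp_le_exp]
      refine (le_abs_self _).trans (((lz x).le_opNorm z').trans ?_)
      exact mul_le_mul (hlz x hx) hz (norm_nonneg _) hB
    rw [norm_smul, norm_mul, Real.norm_eq_abs, Real.norm_of_nonneg (exp_pos _).le]
    exact mul_le_mul (mul_le_mul (hC x hx) he (exp_pos _).le hC0) (hlz x hx) (norm_nonneg _)
      (by positivity)
  · filter_upwards with x z' _
    have := ((lz x).hasFDerivAt (x := z')).exp.const_mul (φ x)
    rw [smul_smul] at this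
    exact this

lemma Cmp.dd_Nt (h : Cmp μ R) {φ : E n → ℝ} (hφ : Continuous φ) (v : V n) :
    dd v (Nt μ φ) = Nt μ (fun x => φ x * lz x v) := by
  have := h.prob
  funext z
  rw [dd, (h.hasFDerivAt hφ z).fderiv, ContinuousLinearMap.integral_apply]
  · rw [Nt]
    congr 1; funext x
    simp only [smul_apply, smul_eq_mul]
    ring
  · have hc : Continuous fun x => (φ x * exp (lz x z)) • lz x :=
      (hφ.mul (exp_cont z)).smul lz_cont'
    obtain ⟨C, hC⟩ := (isCompact_closedBall (0 : E n) R).exists_bound_of_continuousOn hc.continuousOn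
    exact Integrable.of_bound hc.aestronglyMeasurable C
      (h.supp.mono fun x hx => hC x (by simpa using hx))

lemma Cmp.sm_Nt (h : Cmp μ R) {φ : E n → ℝ} (hφ : Continuous φ) : Sm (Nt μ φ) := by
  rw [Sm, contDiff_infty]
  intro m
  induction m generalizing φ with
  | zero =>
    exact contDiff_zero.2 (continuous_iff_continuousAt.2 fun z =>
      (h.hasFDerivAt hφ z).continuousAt)
  | succ m ih =>
    push_cast
    rw [contDiff_succ_iff_fderiv_apply]
    refine ⟨fun z => (h.hasFDerivAt hφ z).differentiableAt, by simp, fun v => ?_⟩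
    have e : (fun z => fderiv ℝ (Nt μ φ) z v) = Nt μ (fun x => φ x * lz x v) := h.dd_Nt hφ v
    rw [e]
    exact ih (hφ.mul (lz_cont v))

/-- The normalising constant of the tilt. -/
def Zt (μ : Measure (E n)) : V n → ℝ := Nt μ fun _ => 1

lemma Cmp.Zt_pos (h : Cmp μ R) (z : V n) : 0 < Zt μ z := by
  have := h.prob
  have hi := h.integrable_tilt (φ := fun _ => (1 : ℝ)) continuous_const z
  refine (integral_pos_iff_support_of_nonneg (fun x => ?_) hi).2 ?_
  · simp [exp_nonneg]
  · have : Function.support (fun x : E n => (1 : ℝ) * exp (lz x z)) = Set.univ := by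
      ext x; simp
    rw [this]; simp

/-- The mean of `φ` under the tilted probability measure. -/
def mt (μ : Measure (E n)) (φ : E n → ℝ) (z : V n) : ℝ := Nt μ φ z / Zt μ z

lemma Cmp.sm_mt (h : Cmp μ R) {φ : E n → ℝ} (hφ : Continuous φ) : Sm (mt μ φ) :=
  (h.sm_Nt hφ).div (h.sm_Nt continuous_const) fun z => (h.Zt_pos z).ne'

lemma Cmp.mt_mul_Z (h : Cmp μ R) (φ : E n → ℝ) (z : V n) : mt μ φ z * Zt μ z = Nt μ φ z :=
  div_mul_cancel₀ _ (h.Zt_pos z).ne'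

lemma Cmp.mt_one (h : Cmp μ R) (z : V n) : mt μ (fun _ => 1) z = 1 := div_self (h.Zt_pos z).ne'

lemma Cmp.dd_mt (h : Cmp μ R) {φ : E n → ℝ} (hφ : Continuous φ) (v : V n) :
    dd v (mt μ φ) = fun z => mt μ (fun x => φ x * lz x v) z
      - mt μ φ z * mt μ (fun x => lz x v) z := by
  have hs := h.sm_mt hφ
  have e : Nt μ φ = fun z => mt μ φ z * Zt μ z := funext fun z => (h.mt_mul_Z φ z).symm
  have h1 : dd v (Nt μ φ) = fun z => dd v (mt μ φ) z * Zt μ z + mt μ φ z * dd v (Zt μ) z := by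
    conv_lhs => rw [e]
    exact dd_mul hs (h.sm_Nt continuous_const) v
  rw [h.dd_Nt hφ, Zt, h.dd_Nt continuous_const] at h1
  simp only [one_mul] at h1
  funext z
  have h2 := congrFun h1 z
  have hZ := (h.Zt_pos z).ne'
  simp only [← h.mt_mul_Z] at h2
  rw [h.mt_one, one_mul] at h2
  have : mt μ (fun x => φ x * lz x v) z * Zt μ z = (dd v (mt μ φ) z
    + mt μ φ z * mt μ (fun x => lz x v) z) * Zt μ z := by rw [h2]; ring
  have := mul_right_cancel₀ hZ this
  rw [this]; ring

lemma Cmp.mt_add (h : Cmp μ R) {φ ψ : E n → ℝ} (hφ : Continuous φ) (hψ : Continuous ψ) (z : V n) :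
    mt μ (fun x => φ x + ψ x) z = mt μ φ z + mt μ ψ z := by
  rw [mt, mt, mt, ← add_div, Nt, Nt, Nt, ← integral_add (h.integrable_tilt hφ z)
    (h.integrable_tilt hψ z)]
  simp_rw [add_mul]

lemma mt_const_mul (c : ℝ) (φ : E n → ℝ) (z : V n) :
    mt μ (fun x => c * φ x) z = c * mt μ φ z := by
  rw [mt, mt, Nt, Nt, ← mul_div_assoc, ← integral_const_mul]
  simp_rw [mul_assoc]

lemma Cmp.mt_sub (h : Cmp μ R) {φ ψ : E n → ℝ} (hφ : Continuous φ) (hψ : Continuous ψ) (z : V n) :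
    mt μ (fun x => φ x - ψ x) z = mt μ φ z - mt μ ψ z := by
  have := h.mt_add hφ (ψ := fun x => (-1 : ℝ) * ψ x) (continuous_const.mul hψ) z
  rw [mt_const_mul] at this
  rw [sub_eq_add_neg, ← neg_one_mul, ← this]
  congr 1; funext x; ring

lemma Cmp.mt_sum (h : Cmp μ R) {ι : Type*} (s : Finset ι) {φ : ι → E n → ℝ}
    (hφ : ∀ i, Continuous (φ i)) (z : V n) :
    mt μ (fun x => ∑ i ∈ s, φ i x) z = ∑ i ∈ s, mt μ (φ i) z := by
  simp only [mt, Nt, Finset.sum_mul]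
  rw [integral_finsetSum _ fun i _ => h.integrable_tilt (hφ i) z, Finset.sum_div]

lemma Cmp.mt_const (h : Cmp μ R) (c : ℝ) (z : V n) : mt μ (fun _ => c) z = c := by
  have := mt_const_mul (μ := μ) c (fun _ => 1) z
  rw [h.mt_one] at this
  simpa using this

lemma Cmp.mt_mono (h : Cmp μ R) {φ ψ : E n → ℝ} (hφ : Continuous φ) (hψ : Continuous ψ)
    (hle : ∀ x, ‖x‖ ≤ R → φ x ≤ ψ x) (z : V n) : mt μ φ z ≤ mt μ ψ z := by
  refine div_le_div_of_nonneg_right ?_ (h.Zt_pos z).le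
  refine integral_mono_ae (h.integrable_tilt hφ z) (h.integrable_tilt hψ z) ?_
  filter_upwards [h.supp] with x hx
  exact mul_le_mul_of_nonneg_right (hle x hx) (exp_pos _).le

lemma Cmp.mt_abs_le (h : Cmp μ R) {φ : E n → ℝ} (hφ : Continuous φ) {C : ℝ}
    (hC : ∀ x, ‖x‖ ≤ R → |φ x| ≤ C) (z : V n) : |mt μ φ z| ≤ C := by
  rw [abs_le]
  constructor
  · have := h.mt_mono continuous_const hφ (fun x hx => (abs_le.1 (hC x hx)).1) z
    rwa [h.mt_const] at this
  · have := h.mt_mono hφ continuous_const (fun x hx => (abs_le.1 (hC x hx)).2) z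
    rwa [h.mt_const] at this

/-! ### Functions with bounded derivatives -/

/-- Bounded functions, together with their derivatives up to order `k`. -/
def Bk : ℕ → (V n → ℝ) → Prop
  | 0, F => ∃ C, ∀ z, |F z| ≤ C
  | k + 1, F => (∃ C, ∀ z, |F z| ≤ C) ∧ ∀ v, Bk k (dd v F)

/-- Smooth functions all of whose derivatives are bounded. -/
structure Bs (F : V n → ℝ) : Prop where
  sm : Sm F
  bk : ∀ k, Bk k F

lemma Bk.bdd {k : ℕ} {F : V n → ℝ} (h : Bk k F) : ∃ C, ∀ z, |F z| ≤ C := by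
  cases k with
  | zero => exact h
  | succ k => exact h.1

lemma Bk.down {k : ℕ} {F : V n → ℝ} (h : Bk (k + 1) F) : Bk k F := by
  induction k generalizing F with
  | zero => exact h.1
  | succ k ih => exact ⟨h.1, fun v => ih (h.2 v)⟩

lemma Bk.add {k : ℕ} {F G : V n → ℝ} (hF : Bk k F) (hG : Bk k G) (sF : Sm F) (sG : Sm G) :
    Bk k (fun z => F z + G z) := by
  have hb : ∃ C, ∀ z, |F z + G z| ≤ C := by
    obtain ⟨C, hC⟩ := hF.bdd
    obtain ⟨D, hD⟩ := hG.bdd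
    exact ⟨C + D, fun z => (abs_add_le _ _).trans (add_le_add (hC z) (hD z))⟩
  induction k generalizing F G with
  | zero => exact hb
  | succ k ih =>
    refine ⟨hb, fun v => ?_⟩
    rw [dd_add sF sG]
    refine ih (hF.2 v) (hG.2 v) (sF.dd v) (sG.dd v) ?_
    obtain ⟨C, hC⟩ := (hF.2 v).bdd
    obtain ⟨D, hD⟩ := (hG.2 v).bdd
    exact ⟨C + D, fun z => (abs_add_le _ _).trans (add_le_add (hC z) (hD z))⟩

lemma Bk.mul {k : ℕ} {F G : V n → ℝ} (hF : Bk k F) (hG : Bk k G) (sF : Sm F) (sG : Sm G) :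
    Bk k (fun z => F z * G z) := by
  have hb : ∀ {k : ℕ} {F G : V n → ℝ}, Bk k F → Bk k G → ∃ C, ∀ z, |F z * G z| ≤ C := by
    intro k F G hF hG
    obtain ⟨C, hC⟩ := hF.bdd
    obtain ⟨D, hD⟩ := hG.bdd
    refine ⟨C * D, fun z => ?_⟩
    rw [abs_mul]
    exact mul_le_mul (hC z) (hD z) (abs_nonneg _) ((abs_nonneg _).trans (hC z))
  induction k generalizing F G with
  | zero => exact hb hF hG
  | succ k ih =>
    refine ⟨hb hF hG, fun v => ?_⟩
    rw [dd_mul sF sG]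
    exact (ih (hF.2 v) hG.down (sF.dd v) sG).add (ih hF.down (hG.2 v) sF (sG.dd v))
      ((sF.dd v).mul sG) (sF.mul (sG.dd v))

lemma Bk.const (k : ℕ) (c : ℝ) : Bk k (fun _ : V n => c) := by
  induction k generalizing c with
  | zero => exact ⟨|c|, fun z => le_rfl⟩
  | succ k ih =>
    refine ⟨⟨|c|, fun z => le_rfl⟩, fun v => ?_⟩
    rw [dd_const]
    exact ih 0

lemma Bs.dd {F : V n → ℝ} (h : Bs F) (v : V n) : Bs (dd v F) :=
  ⟨h.sm.dd v, fun k => (h.bk (k + 1)).2 v⟩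

lemma Bs.add {F G : V n → ℝ} (hF : Bs F) (hG : Bs G) : Bs (fun z => F z + G z) :=
  ⟨hF.sm.add hG.sm, fun k => (hF.bk k).add (hG.bk k) hF.sm hG.sm⟩

lemma Bs.mul {F G : V n → ℝ} (hF : Bs F) (hG : Bs G) : Bs (fun z => F z * G z) :=
  ⟨hF.sm.mul hG.sm, fun k => (hF.bk k).mul (hG.bk k) hF.sm hG.sm⟩

lemma Bs.const (c : ℝ) : Bs (fun _ : V n => c) := ⟨contDiff_const, fun k => Bk.const k c⟩

lemma Bs.sub {F G : V n → ℝ} (hF : Bs F) (hG : Bs G) : Bs (fun z => F z - G z) := by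
  have := hF.add ((Bs.const (-1)).mul hG)
  refine cast ?_ this
  congr 1; funext z; ring

lemma Bs.sum {ι : Type*} (s : Finset ι) {F : ι → V n → ℝ} (h : ∀ i, Bs (F i)) :
    Bs (fun z => ∑ i ∈ s, F i z) := by
  classical
  induction s using Finset.induction_on with
  | empty => simpa using Bs.const 0
  | insert a s ha ih => simpa [Finset.sum_insert ha] using (h a).add ih

/-- Reciprocals of functions bounded away from zero. -/
lemma Bs.inv {F : V n → ℝ} (h : Bs F) {c : ℝ} (hc : 0 < c) (hF : ∀ z, c ≤ F z) :
    Bs (fun z => (F z)⁻¹) ∧ ∀ v, GaugeLog.dd v (fun z => (F z)⁻¹)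
      = fun z => -1 * (GaugeLog.dd v F z * ((F z)⁻¹ * (F z)⁻¹)) := by
  have hpos : ∀ z, F z ≠ 0 := fun z => (hc.trans_le (hF z)).ne'
  have hs : Sm (fun z => (F z)⁻¹) := h.sm.inv hpos
  have hd : ∀ v, GaugeLog.dd v (fun z => (F z)⁻¹)
      = fun z => -1 * (GaugeLog.dd v F z * ((F z)⁻¹ * (F z)⁻¹)) := by
    intro v
    have e : (fun z => F z * (F z)⁻¹) = fun _ => (1 : ℝ) := funext fun z => mul_inv_cancel₀ (hpos z)
    have h1 := dd_mul h.sm hs v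
    rw [e, dd_const] at h1
    funext z
    have h2 := congrFun h1 z
    have h3 := hpos z
    field_simp at h2 ⊢
    linarith
  refine ⟨⟨hs, fun k => ?_⟩, hd⟩
  have hb : ∃ C, ∀ z, |(F z)⁻¹| ≤ C := ⟨c⁻¹, fun z => by
    rw [abs_of_pos (inv_pos.2 (hc.trans_le (hF z)))]
    exact inv_anti₀ hc (hF z)⟩
  induction k with
  | zero => exact hb
  | succ k ih =>
    refine ⟨hb, fun v => ?_⟩
    rw [hd]
    exact (Bk.const k (-1)).mul (((h.dd v).bk k).mul (ih.mul ih hs hs) (h.dd v).sm (hs.mul hs))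
      contDiff_const ((h.dd v).sm.mul (hs.mul hs))

lemma Cmp.bs_mt (h : Cmp μ R) {φ : E n → ℝ} (hφ : Continuous φ) : Bs (mt μ φ) := by
  refine ⟨h.sm_mt hφ, fun k => ?_⟩
  have hb : ∀ {φ : E n → ℝ}, Continuous φ → ∃ C, ∀ z, |mt μ φ z| ≤ C := by
    intro φ hφ
    obtain ⟨C, -, hC⟩ := h.bound hφ
    exact ⟨C, h.mt_abs_le hφ hC⟩
  induction k generalizing φ with
  | zero => exact hb hφ
  | succ k ih =>
    refine ⟨hb hφ, fun v => ?_⟩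
    rw [h.dd_mt hφ v]
    have h1 := ih (φ := fun x => φ x * lz x v) (hφ.mul (lz_cont v))
    have h2 := ih hφ
    have h3 := ih (lz_cont v)
    have s1 := h.sm_mt (φ := fun x => φ x * lz x v) (hφ.mul (lz_cont v))
    have s2 := h.sm_mt hφ
    have s3 := h.sm_mt (lz_cont v)
    have := h1.add ((Bk.const k (-1)).mul (h2.mul h3 s2 s3) contDiff_const (s2.mul s3)) s1
      (contDiff_const.mul (s2.mul s3))
    refine cast ?_ this
    congr 1; funext z; ring

end Tilt
end GaugeLog

namespace GaugeLog
open scoped ContDiff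

/-! ### The generator of the tilt process -/

section Gen
variable {n : ℕ} {μ : Measure (E n)} {R : ℝ}

/-- The time direction. -/
def e0 : V n := (1, 0)

/-- The `i`-th space direction. -/
def es (i : Fin n) : V n := (0, ei i)

lemma lz_e0 (x : E n) : lz x e0 = -(‖x‖ ^ 2 / 2) := by simp [lz_apply, e0]

lemma lz_es (x : E n) (i : Fin n) : lz x (es i) = x i := by
  simp [lz_apply, es, inner_ei]

/-- The coordinates of the barycenter of the tilted measure. -/
def av (μ : Measure (E n)) (i : Fin n) : V n → ℝ := mt μ fun x => x i

/-- The covariance matrix of the tilted measure. -/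
def Am (μ : Measure (E n)) (z : V n) : Matrix (Fin n) (Fin n) ℝ :=
  Matrix.of fun j k => mt μ (fun x => x j * x k) z - av μ j z * av μ k z

lemma Am_apply (z : V n) (j k : Fin n) :
    Am μ z j k = mt μ (fun x => x j * x k) z - av μ j z * av μ k z := rfl

/-- The generator `∂ₜ + Δ/2 + ⟨a, ∇⟩` of the tilt process, where `a` is the barycenter of the
tilted measure. -/
def Gn (μ : Measure (E n)) (F : V n → ℝ) (z : V n) : ℝ :=
  dd e0 F z + 1 / 2 * ∑ i, dd (es i) (dd (es i) F) z + ∑ i, av μ i z * dd (es i) F z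

lemma coord_cont (i : Fin n) : Continuous fun x : E n => x i := by fun_prop

lemma coord2_cont (i j : Fin n) : Continuous fun x : E n => x i * x j := by fun_prop

lemma Cmp.bs_av (h : Cmp μ R) (i : Fin n) : Bs (av μ i) := h.bs_mt (coord_cont i)

lemma Cmp.bs_Am (h : Cmp μ R) (j k : Fin n) : Bs (fun z => Am μ z j k) :=
  (h.bs_mt (coord2_cont j k)).sub ((h.bs_av j).mul (h.bs_av k))

lemma Cmp.dd_es (h : Cmp μ R) {φ : E n → ℝ} (hφ : Continuous φ) (i : Fin n) :
    dd (es i) (mt μ φ) = fun z => mt μ (fun x => φ x * x i) z - mt μ φ z * av μ i z := by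
  rw [h.dd_mt hφ]; simp only [lz_es]; rfl

lemma Cmp.dd_av (h : Cmp μ R) (i j : Fin n) : dd (es i) (av μ j) = fun z => Am μ z i j := by
  rw [av, h.dd_es (coord_cont j)]
  funext z
  rw [Am_apply, av, av]
  simp only [mul_comm]

lemma Gn_add {F G : V n → ℝ} (hF : Sm F) (hG : Sm G) (z : V n) :
    Gn μ (fun z => F z + G z) z = Gn μ F z + Gn μ G z := by
  simp only [Gn, dd_add hF hG, dd_add ((hF.dd _)) (hG.dd _), Finset.sum_add_distrib, mul_add]
  ring

lemma Gn_const_mul {F : V n → ℝ} (hF : Sm F) (c : ℝ) (z : V n) :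
    Gn μ (fun z => c * F z) z = c * Gn μ F z := by
  simp only [Gn, dd_const_mul hF, dd_const_mul (hF.dd _), mul_add, Finset.mul_sum]
  congr 1
  · congr 1
    exact Finset.sum_congr rfl fun i _ => by ring
  · exact Finset.sum_congr rfl fun i _ => by ring

lemma Gn_sub {F G : V n → ℝ} (hF : Sm F) (hG : Sm G) (z : V n) :
    Gn μ (fun z => F z - G z) z = Gn μ F z - Gn μ G z := by
  simp only [Gn, dd_sub hF hG, dd_sub ((hF.dd _)) (hG.dd _), Finset.sum_sub_distrib, mul_sub]
  ring

lemma Gn_const (c : ℝ) (z : V n) : Gn μ (fun _ => c) z = 0 := by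
  simp [Gn, dd_const]

lemma Gn_sum {ι : Type*} (s : Finset ι) {F : ι → V n → ℝ} (hF : ∀ i, Sm (F i)) (z : V n) :
    Gn μ (fun z => ∑ i ∈ s, F i z) z = ∑ i ∈ s, Gn μ (F i) z := by
  simp only [Gn, dd_sum s hF, dd_sum s (fun i => (hF i).dd _), Finset.sum_add_distrib,
    Finset.mul_sum]
  congr 1
  · rw [Finset.sum_comm]
  · rw [Finset.sum_comm]

lemma Gn_mul {F G : V n → ℝ} (hF : Sm F) (hG : Sm G) (z : V n) :
    Gn μ (fun z => F z * G z) z = Gn μ F z * G z + F z * Gn μ G z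
      + ∑ i, dd (es i) F z * dd (es i) G z := by
  have h2 : ∀ v : V n, dd v (dd v (fun z => F z * G z)) = fun z => dd v (dd v F) z * G z
      + 2 * (dd v F z * dd v G z) + F z * dd v (dd v G) z := by
    intro v
    rw [dd_mul hF hG, dd_add ((hF.dd v).mul hG) (hF.mul (hG.dd v)), dd_mul (hF.dd v) hG,
      dd_mul hF (hG.dd v)]
    funext z; ring
  simp only [Gn, h2]
  simp only [dd_mul hF hG, add_mul, mul_add, Finset.sum_add_distrib, Finset.mul_sum,
    Finset.sum_mul]
  have e1 : ∑ i, 1 / 2 * (2 * (dd (es i) F z * dd (es i) G z))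
      = ∑ i, dd (es i) F z * dd (es i) G z := Finset.sum_congr rfl fun i _ => by ring
  rw [e1]
  have e2 : ∑ i, av μ i z * (dd (es i) F z * G z) = ∑ i, av μ i z * dd (es i) F z * G z :=
    Finset.sum_congr rfl fun i _ => by ring
  have e3 : ∑ i, av μ i z * (F z * dd (es i) G z) = ∑ i, F z * (av μ i z * dd (es i) G z) :=
    Finset.sum_congr rfl fun i _ => by ring
  have e4 : ∑ i, 1 / 2 * (dd (es i) (dd (es i) F) z * G z)
      = ∑ i, 1 / 2 * dd (es i) (dd (es i) F) z * G z := Finset.sum_congr rfl fun i _ => by ring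
  have e5 : ∑ i, 1 / 2 * (F z * dd (es i) (dd (es i) G) z)
      = ∑ i, F z * (1 / 2 * dd (es i) (dd (es i) G) z) := Finset.sum_congr rfl fun i _ => by ring
  rw [e2, e3, e4, e5]
  ring

/-- Tilted means are annihilated by the generator: they are martingales along the process. -/
lemma Cmp.Gn_mt (h : Cmp μ R) {φ : E n → ℝ} (hφ : Continuous φ) (z : V n) : Gn μ (mt μ φ) z = 0 := by
  have c1 : ∀ i : Fin n, Continuous fun x : E n => φ x * x i := fun i => hφ.mul (coord_cont i)
  have h2 : ∀ i, dd (es i) (dd (es i) (mt μ φ)) z =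
      mt μ (fun x => φ x * x i * x i) z - mt μ (fun x => φ x * x i) z * av μ i z
      - ((mt μ (fun x => φ x * x i) z - mt μ φ z * av μ i z) * av μ i z
        + mt μ φ z * (mt μ (fun x => x i * x i) z - av μ i z * av μ i z)) := by
    intro i
    rw [h.dd_es hφ, dd_sub (h.sm_mt (c1 i)) ((h.sm_mt hφ).mul (h.bs_av i).sm),
      dd_mul (h.sm_mt hφ) (h.bs_av i).sm, h.dd_es (c1 i), h.dd_es hφ, h.dd_av]
    rfl
  have hn : ∀ x : E n, ‖x‖ ^ 2 = ∑ i, x i * x i := fun x => by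
    rw [EuclideanSpace.real_norm_sq_eq]; simp [sq]
  have h0 : dd e0 (mt μ φ) z = -(1 / 2) * (∑ i, mt μ (fun x => φ x * x i * x i) z
      - mt μ φ z * ∑ i, mt μ (fun x => x i * x i) z) := by
    rw [h.dd_mt hφ]
    have e1 : (fun x => φ x * lz x e0) = fun x => -(1 / 2) * ∑ i, φ x * x i * x i := by
      funext x; rw [lz_e0, hn, Finset.mul_sum, Finset.sum_div, ← Finset.sum_neg_distrib, Finset.mul_sum]
      exact Finset.sum_congr rfl fun i _ => by ring
    have e2 : (fun x : E n => lz x e0) = fun x => -(1 / 2) * ∑ i, x i * x i := by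
      funext x; rw [lz_e0, hn]; ring
    change mt μ (fun x => φ x * lz x e0) z - mt μ φ z * mt μ (fun x => lz x e0) z = _
    rw [e1, e2, mt_const_mul, mt_const_mul, h.mt_sum (φ := fun i x => φ x * x i * x i) _ fun i => (c1 i).mul (coord_cont i),
      h.mt_sum _ fun i => coord2_cont i i]
    ring
  have h1 : ∀ i, dd (es i) (mt μ φ) z = mt μ (fun x => φ x * x i) z - mt μ φ z * av μ i z :=
    fun i => congrFun (h.dd_es hφ i) z
  rw [Gn, h0]
  simp only [h2, h1]
  rw [Finset.mul_sum, Finset.mul_sum, ← Finset.sum_sub_distrib, Finset.mul_sum,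
    ← Finset.sum_add_distrib, ← Finset.sum_add_distrib]
  exact Finset.sum_eq_zero fun i _ => by ring

/-- The drift of the covariance: moments are martingales, so only the product of barycenters
contributes. -/
lemma Cmp.Gn_Am (h : Cmp μ R) (z : V n) (j k : Fin n) :
    Gn μ (fun z => Am μ z j k) z = -(Am μ z * Am μ z) j k := by
  simp only [Am_apply]
  rw [Gn_sub (h.sm_mt (coord2_cont j k)) ((h.bs_av j).sm.mul (h.bs_av k).sm), h.Gn_mt (coord2_cont j k),
    Gn_mul (h.bs_av j).sm (h.bs_av k).sm]
  have e : ∀ i, Gn μ (av μ i) z = 0 := fun i => h.Gn_mt (coord_cont i) z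
  rw [e, e, Matrix.mul_apply]
  simp only [h.dd_av, zero_mul, mul_zero, zero_add, zero_sub]
  congr 1
  refine Finset.sum_congr rfl fun i _ => ?_
  simp only [Am_apply, mul_comm]

/-! ### Matrix-valued functions -/

/-- Entrywise directional derivative. -/
def dM (v : V n) (M : V n → Matrix (Fin n) (Fin n) ℝ) (z : V n) : Matrix (Fin n) (Fin n) ℝ :=
  Matrix.of fun j k => dd v (fun z => M z j k) z

/-- Entrywise generator. -/
def gM (μ : Measure (E n)) (M : V n → Matrix (Fin n) (Fin n) ℝ) (z : V n) :
    Matrix (Fin n) (Fin n) ℝ :=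
  Matrix.of fun j k => Gn μ (fun z => M z j k) z

/-- Matrix functions whose entries are smooth with all derivatives bounded. -/
def BM (M : V n → Matrix (Fin n) (Fin n) ℝ) : Prop := ∀ j k, Bs fun z => M z j k

lemma BM.mul {M N : V n → Matrix (Fin n) (Fin n) ℝ} (hM : BM M) (hN : BM N) :
    BM fun z => M z * N z := fun j k => by
  simp only [Matrix.mul_apply]
  exact Bs.sum _ fun i => (hM j i).mul (hN i k)

lemma BM.const (M : Matrix (Fin n) (Fin n) ℝ) : BM fun _ => M := fun _ _ => Bs.const _

lemma BM.pow {M : V n → Matrix (Fin n) (Fin n) ℝ} (hM : BM M) (m : ℕ) : BM fun z => M z ^ m := by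
  induction m with
  | zero => simp only [pow_zero]; exact BM.const _
  | succ m ih => simp only [pow_succ]; exact ih.mul hM

lemma dM_mul {M N : V n → Matrix (Fin n) (Fin n) ℝ} (hM : BM M) (hN : BM N) (v : V n) (z : V n) :
    dM v (fun z => M z * N z) z = dM v M z * N z + M z * dM v N z := by
  ext j k
  simp only [dM, Matrix.of_apply, Matrix.add_apply, Matrix.mul_apply]
  rw [dd_sum _ fun i => ((hM j i).mul (hN i k)).sm, ← Finset.sum_add_distrib]
  exact Finset.sum_congr rfl fun i _ => by rw [dd_mul (hM j i).sm (hN i k).sm]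

lemma gM_mul {M N : V n → Matrix (Fin n) (Fin n) ℝ} (hM : BM M) (hN : BM N) (z : V n) :
    gM μ (fun z => M z * N z) z = gM μ M z * N z + M z * gM μ N z
      + ∑ i, dM (es i) M z * dM (es i) N z := by
  ext j k
  simp only [gM, dM, Matrix.of_apply, Matrix.add_apply, Matrix.mul_apply, Matrix.sum_apply]
  rw [Gn_sum _ fun i => ((hM j i).mul (hN i k)).sm, Finset.sum_comm, ← Finset.sum_add_distrib,
    ← Finset.sum_add_distrib]
  exact Finset.sum_congr rfl fun i _ => by rw [Gn_mul (hM j i).sm (hN i k).sm]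

lemma dM_one (v z : V n) : dM v (fun _ => (1 : Matrix (Fin n) (Fin n) ℝ)) z = 0 := by
  ext j k; simp [dM, dd_const]

lemma gM_one (z : V n) : gM μ (fun _ => (1 : Matrix (Fin n) (Fin n) ℝ)) z = 0 := by
  ext j k; simp [gM, Gn_const]

lemma dM_pow {M : V n → Matrix (Fin n) (Fin n) ℝ} (hM : BM M) (v : V n) (z : V n) (m : ℕ) :
    dM v (fun z => M z ^ m) z = ∑ a ∈ Finset.range m, M z ^ a * dM v M z * M z ^ (m - 1 - a) := by
  induction m with
  | zero => simp [dM_one]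
  | succ m ih =>
    simp only [pow_succ]
    rw [dM_mul (hM.pow m) hM, ih, Finset.sum_range_succ, Finset.sum_mul]
    congr 1
    · refine Finset.sum_congr rfl fun a ha => ?_
      have : m + 1 - 1 - a = (m - 1 - a) + 1 := by have := Finset.mem_range.1 ha; omega
      rw [this, pow_succ, mul_assoc (M z ^ a * dM v M z)]
    · simp

lemma gM_pow {M : V n → Matrix (Fin n) (Fin n) ℝ} (hM : BM M) (z : V n) (m : ℕ) :
    gM μ (fun z => M z ^ m) z = ∑ a ∈ Finset.range m, M z ^ a * gM μ M z * M z ^ (m - 1 - a)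
      + ∑ b ∈ Finset.range m, ∑ a ∈ Finset.range b, (∑ i, M z ^ a * dM (es i) M z
        * M z ^ (b - 1 - a) * dM (es i) M z) * M z ^ (m - 1 - b) := by
  induction m with
  | zero => simp [gM_one]
  | succ m ih =>
    simp only [pow_succ]
    rw [gM_mul (hM.pow m) hM, ih, add_mul, Finset.sum_range_succ _ m, Finset.sum_range_succ _ m,
      Finset.sum_mul, Finset.sum_mul]
    have e1 : ∑ a ∈ Finset.range m, M z ^ a * gM μ M z * M z ^ (m - 1 - a) * M z
        = ∑ a ∈ Finset.range m, M z ^ a * gM μ M z * M z ^ (m + 1 - 1 - a) := by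
      refine Finset.sum_congr rfl fun a ha => ?_
      have : m + 1 - 1 - a = (m - 1 - a) + 1 := by have := Finset.mem_range.1 ha; omega
      rw [this, pow_succ, mul_assoc (M z ^ a * gM μ M z)]
    have e2 : ∑ b ∈ Finset.range m, (∑ a ∈ Finset.range b, (∑ i, M z ^ a * dM (es i) M z
        * M z ^ (b - 1 - a) * dM (es i) M z) * M z ^ (m - 1 - b)) * M z
        = ∑ b ∈ Finset.range m, ∑ a ∈ Finset.range b, (∑ i, M z ^ a * dM (es i) M z
        * M z ^ (b - 1 - a) * dM (es i) M z) * M z ^ (m + 1 - 1 - b) := by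
      refine Finset.sum_congr rfl fun b hb => ?_
      have : m + 1 - 1 - b = (m - 1 - b) + 1 := by have := Finset.mem_range.1 hb; omega
      rw [this, pow_succ, Finset.sum_mul]
      exact Finset.sum_congr rfl fun a _ => by rw [mul_assoc (∑ i, _)]
    have e3 : ∑ i, dM (es i) (fun z => M z ^ m) z * dM (es i) M z
        = ∑ a ∈ Finset.range m, (∑ i, M z ^ a * dM (es i) M z
        * M z ^ (m - 1 - a) * dM (es i) M z) * M z ^ (m + 1 - 1 - m) := by
      simp only [dM_pow hM, Finset.sum_mul]
      rw [Finset.sum_comm]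
      simp
    rw [e1, e2, e3]
    simp only [add_tsub_cancel_right, tsub_self, pow_zero, mul_one]
    abel

end Gen
end GaugeLog

namespace GaugeLog
open scoped ContDiff

/-! ### The law of the tilt process and its Kolmogorov equation -/

section Kolm
variable {n : ℕ} {μ : Measure (E n)} {R : ℝ}

/-- The position `(t, t x + √t g)` of the tilt process at time `t`. -/
def pt (t : ℝ) (q : E n × E n) : V n := (t, t • q.1 + √t • q.2)

/-- The expectation of `F (t, θ_t)`, where `θ_t = t x + √t g` with `x` distributed as `μ` and `g`
an independent standard Gaussian. -/
def Ex (μ : Measure (E n)) (t : ℝ) (F : V n → ℝ) : ℝ :=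
  ∫ q, F (pt t q) ∂(μ.prod (stdGaussian n))

lemma pt_cont (t : ℝ) : Continuous (pt (n := n) t) := by unfold pt; fun_prop

lemma pt_fst (t : ℝ) (q : E n × E n) : (pt t q).1 = t := rfl

lemma Cmp.sfst (h : Cmp μ R) : ∀ᵐ q ∂(μ.prod (stdGaussian n)), ‖q.1‖ ≤ R := by
  have := h.prob
  exact Measure.quasiMeasurePreserving_fst.ae h.supp

lemma Cmp.ex_integrable (h : Cmp μ R) {F : V n → ℝ} (hF : Continuous F) {t C : ℝ}
    (hC : ∀ z : V n, z.1 = t → |F z| ≤ C) :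
    Integrable (fun q => F (pt t q)) (μ.prod (stdGaussian n)) := by
  have := h.prob
  exact Integrable.of_bound (hF.comp (pt_cont t)).aestronglyMeasurable C
    (Filter.Eventually.of_forall fun q => hC _ rfl)

lemma gauss_norm : Integrable (fun g : E n => ‖g‖) (stdGaussian n) :=
  gauss_gr ((Gr_of_bound (C := 1) continuous_norm fun x => by
    rw [abs_of_nonneg (norm_nonneg x)]; linarith).up)

lemma Cmp.gaussnorm (h : Cmp μ R) :
    Integrable (fun q : E n × E n => ‖q.2‖) (μ.prod (stdGaussian n)) := by
  have := h.prob
  exact gauss_norm.comp_snd μ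

lemma gw_swap (t : ℝ) (ht : 0 ≤ t) (x g : E n) :
    gw (1 : ℝ) g (√t • x) = exp (lz x ((t, √t • g) : V n)) := by
  rw [gw, lz_apply]
  congr 1
  simp only [inner_smul_right, norm_smul, Real.norm_of_nonneg (sqrt_nonneg t), mul_pow, sq_sqrt ht,
    real_inner_comm x g]
  ring

/-- Disintegration: conditionally on `θ_t`, the point `x` follows the tilted measure. -/
lemma Cmp.disint (h : Cmp μ R) {ψ : E n → ℝ} (hψ : Continuous ψ) {G : V n → ℝ} (hG : Continuous G)
    {t C : ℝ} (ht : 0 ≤ t) (hC : ∀ z : V n, z.1 = t → |G z| ≤ C) :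
    ∫ q, ψ q.1 * G (pt t q) ∂(μ.prod (stdGaussian n)) = Ex μ t fun z => mt μ ψ z * G z := by
  have := h.prob
  have key : ∀ {ψ : E n → ℝ}, Continuous ψ → ∀ {G : V n → ℝ}, Continuous G →
      (∀ C, (∀ z : V n, z.1 = t → |G z| ≤ C) →
      ∫ q, ψ q.1 * G (pt t q) ∂(μ.prod (stdGaussian n))
        = ∫ g, G (t, √t • g) * Nt μ ψ (t, √t • g) ∂(stdGaussian n)) := by
    intro ψ hψ G hG C hC
    obtain ⟨D, hD0, hD⟩ := h.bound hψ
    have hC0 : 0 ≤ C := (abs_nonneg _).trans (hC (t, 0) rfl)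
    have hInt : Integrable (fun q : E n × E n => ψ q.1 * G (pt t q)) (μ.prod (stdGaussian n)) := by
      refine Integrable.of_bound (C := D * C) ((hψ.comp continuous_fst).mul
        (hG.comp (pt_cont t))).aestronglyMeasurable ?_
      filter_upwards [h.sfst] with q hq
      rw [norm_mul]
      exact mul_le_mul (hD _ hq) (hC _ rfl) (norm_nonneg _) hD0
    have hk : Continuous fun q : E n × E n => gw (1 : ℝ) q.2 (√t • q.1) := by
      unfold gw; fun_prop
    have hone : ∀ x : E n, ∫ g, gw (1 : ℝ) g (√t • x) ∂(stdGaussian n) = 1 := fun x => by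
      have := gauss_shift (fun _ => (1 : ℝ)) (√t • x)
      simpa using this.symm
    have hk2 : Integrable (fun q : E n × E n => gw (1 : ℝ) q.2 (√t • q.1))
        (μ.prod (stdGaussian n)) := by
      rw [integrable_prod_iff hk.aestronglyMeasurable]
      constructor
      · refine Filter.Eventually.of_forall fun x => ?_
        by_contra hc
        have := hone x
        rw [integral_undef hc] at this
        norm_num at this
      · have : (fun x : E n => ∫ g, ‖gw (1 : ℝ) g (√t • x)‖ ∂(stdGaussian n)) = fun _ => 1 := by
          funext x
          refine Eq.trans ?_ (hone x)
          congr 1; funext g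
          exact Real.norm_of_nonneg (gw_pos _ _ _).le
        rw [this]
        exact integrable_const _
    have hk3 : Integrable (fun q : E n × E n => ψ q.1 * (G (t, √t • q.2) * gw (1 : ℝ) q.2 (√t • q.1)))
        (μ.prod (stdGaussian n)) := by
      have hc : Continuous fun q : E n × E n =>
          ψ q.1 * (G (t, √t • q.2) * gw (1 : ℝ) q.2 (√t • q.1)) :=
        (hψ.comp continuous_fst).mul ((hG.comp (by fun_prop)).mul hk)
      refine (hk2.const_mul (D * C)).mono' hc.aestronglyMeasurable ?_
      filter_upwards [h.sfst] with q hq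
      rw [norm_mul, norm_mul, ← mul_assoc, Real.norm_of_nonneg (gw_pos _ _ _).le]
      exact mul_le_mul_of_nonneg_right (mul_le_mul (hD _ hq) (hC _ rfl) (norm_nonneg _) hD0)
        (gw_pos _ _ _).le
    rw [integral_prod _ hInt]
    have e1 : ∀ x : E n, ∫ g, ψ x * G (pt t (x, g)) ∂(stdGaussian n)
        = ∫ g, ψ x * (G (t, √t • g) * gw (1 : ℝ) g (√t • x)) ∂(stdGaussian n) := by
      intro x
      rw [integral_const_mul, integral_const_mul,
        ← gauss_shift (fun g => G (t, √t • g)) (√t • x)]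
      congr 2; funext g
      simp only [pt, smul_add, smul_smul, Real.mul_self_sqrt ht]
    simp only [e1]
    rw [integral_integral_swap hk3]
    congr 1; funext g
    rw [Nt, ← integral_const_mul]
    congr 1; funext x
    rw [gw_swap t ht]; ring
  rw [key hψ hG C hC]
  obtain ⟨D, hD0, hD⟩ := h.bound hψ
  have := key (ψ := fun _ => 1) continuous_const (G := fun z => mt μ ψ z * G z)
    ((h.sm_mt hψ).continuous.mul hG) (D * C) (fun z hz => by
      rw [abs_mul]
      exact mul_le_mul (h.mt_abs_le hψ hD z) (hC z hz) (abs_nonneg _) hD0)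
  simp only [one_mul] at this
  rw [Ex, this]
  congr 1; funext g
  rw [← h.mt_mul_Z, Zt]; ring

/-- A smooth function which is bounded with its first derivatives and pure second space
derivatives on the strip `0 ≤ t ≤ T`. -/
structure Sb (T C : ℝ) (F : V n → ℝ) : Prop where
  sm : Sm F
  b0 : ∀ z : V n, 0 ≤ z.1 → z.1 ≤ T → |F z| ≤ C
  bt : ∀ z : V n, 0 ≤ z.1 → z.1 ≤ T → |dd e0 F z| ≤ C
  b1 : ∀ i, ∀ z : V n, 0 ≤ z.1 → z.1 ≤ T → |dd (es i) F z| ≤ C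
  b2 : ∀ i, ∀ z : V n, 0 ≤ z.1 → z.1 ≤ T → |dd (es i) (dd (es i) F) z| ≤ C

lemma fderiv_split (F : V n → ℝ) (z : V n) (v : E n) :
    fderiv ℝ F z (1, v) = dd e0 F z + ∑ i, v i * dd (es i) F z := by
  have : ((1, v) : V n) = e0 + ∑ i, v i • es i := by
    ext
    · simp [e0, es, Prod.fst_sum]
    · have := congrFun (congrArg WithLp.ofLp (eq_sum_ei v))
      simp only [e0, es, Prod.snd_add, Prod.snd_sum, Prod.smul_snd, zero_add]
      exact this _
  rw [this, map_add, map_sum]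
  simp [dd]

lemma Cmp.cont_Ex (h : Cmp μ R) {T C : ℝ} {F : V n → ℝ} (hF : Sb T C F) :
    ContinuousOn (fun t => Ex μ t F) (Set.Icc 0 T) := by
  have := h.prob
  unfold Ex
  refine continuousOn_of_dominated (bound := fun _ => C) ?_ ?_ (integrable_const _) ?_
  · exact fun t _ => (hF.sm.continuous.comp (pt_cont t)).aestronglyMeasurable
  · exact fun t ht => Filter.Eventually.of_forall fun q => hF.b0 _ ht.1 ht.2
  · refine Filter.Eventually.of_forall fun q => Continuous.continuousOn ?_
    exact hF.sm.continuous.comp (by unfold pt; fun_prop)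

lemma hasDerivAt_pt {F : V n → ℝ} (hF : Sm F) {t : ℝ} (ht : 0 < t) (q : E n × E n) :
    HasDerivAt (fun t => F (pt t q)) (dd e0 F (pt t q)
      + ∑ i, (q.1 i + 1 / (2 * √t) * q.2 i) * dd (es i) F (pt t q)) t := by
  have h1 : HasDerivAt (fun t => pt t q) ((1, q.1 + (1 / (2 * √t)) • q.2) : V n) t := by
    refine HasDerivAt.prodMk (hasDerivAt_id t) ?_
    have a := (hasDerivAt_id t).smul_const q.1
    have b := (Real.hasDerivAt_sqrt ht.ne').smul_const q.2
    simpa using a.fun_add b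
  have h2 := (hF.differentiable (pt t q)).hasFDerivAt.comp_hasDerivAt t h1
  rw [fderiv_split] at h2
  exact h2

lemma Cmp.ex_ibp (h : Cmp μ R) {T C t : ℝ} {F : V n → ℝ} (hF : Sb T C F) (ht : 0 < t) (htT : t ≤ T)
    (i : Fin n) :
    ∫ q, q.2 i * dd (es i) F (pt t q) ∂(μ.prod (stdGaussian n))
      = √t * Ex μ t (dd (es i) (dd (es i) F)) := by
  have := h.prob
  have hC0 : 0 ≤ C := (abs_nonneg _).trans (hF.b0 (t, 0) ht.le htT)
  have hc := (hF.sm.dd (es i)).continuous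
  have hc2 := ((hF.sm.dd (es i)).dd (es i)).continuous
  have b1 : ∀ q : E n × E n, |dd (es i) F (pt t q)| ≤ C := fun q => hF.b1 i _ ht.le htT
  have b2 : ∀ q : E n × E n, |dd (es i) (dd (es i) F) (pt t q)| ≤ C := fun q => hF.b2 i _ ht.le htT
  have hInt : Integrable (fun q : E n × E n => q.2 i * dd (es i) F (pt t q))
      (μ.prod (stdGaussian n)) := by
    have hcc : Continuous fun q : E n × E n => q.2 i * dd (es i) F (pt t q) :=
      (by fun_prop : Continuous fun q : E n × E n => q.2 i).mul (hc.comp (pt_cont t))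
    refine (h.gaussnorm.mul_const C).mono' hcc.aestronglyMeasurable
      (Filter.Eventually.of_forall fun q => ?_)
    rw [norm_mul]
    exact mul_le_mul (PiLp.norm_apply_le q.2 i) (b1 q) (norm_nonneg _) (norm_nonneg _)
  have hInt2 : Integrable (fun q : E n × E n => dd (es i) (dd (es i) F) (pt t q))
      (μ.prod (stdGaussian n)) := h.ex_integrable hc2 fun z hz => hF.b2 i z (hz ▸ ht.le) (hz ▸ htT)
  rw [Ex, integral_prod _ hInt, integral_prod _ hInt2, ← integral_const_mul]
  congr 1; funext x
  set K : E n → ℝ := fun g => dd (es i) F (pt t (x, g)) with hK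
  have aff : ∀ g, HasFDerivAt (fun g : E n => pt t (x, g))
      ((0 : E n →L[ℝ] ℝ).prod (√t • ContinuousLinearMap.id ℝ (E n))) g := by
    intro g
    refine HasFDerivAt.prodMk (hasFDerivAt_const _ _) ?_
    have := ((hasFDerivAt_id (𝕜 := ℝ) g).const_smul (√t)).const_add (t • x)
    exact this
  have sK : Sm K := (hF.sm.dd (es i)).comp (by unfold pt; fun_prop)
  have dK : dd (ei i) K = fun g => √t * dd (es i) (dd (es i) F) (pt t (x, g)) := by
    funext g
    have := (((hF.sm.dd (es i)).differentiable (pt t (x, g))).hasFDerivAt.comp g (aff g)).fderiv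
    have e : dd (ei i) K g = fderiv ℝ K g (ei i) := rfl
    rw [e]
    change fderiv ℝ (dd (es i) F ∘ fun g => pt t (x, g)) g (ei i) = _
    rw [this]
    have e2 : ((0 : E n →L[ℝ] ℝ).prod (√t • ContinuousLinearMap.id ℝ (E n))) (ei i)
        = √t • (es i : V n) := by
      ext <;> simp [es]
    rw [ContinuousLinearMap.comp_apply, e2, map_smul]; rfl
  have g1 : Gr 1 K := Gr_of_bound (C := C) sK.continuous fun g => (b1 (x, g)).trans
    (le_mul_of_one_le_right hC0 (by linarith [norm_nonneg g]))
  have g2 : Gr 1 (dd (ei i) K) := Gr_of_bound (C := √t * C) (sK.dd _).continuous fun g => by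
    rw [dK, abs_mul, abs_of_nonneg (sqrt_nonneg t)]
    exact (mul_le_mul_of_nonneg_left (b2 (x, g)) (sqrt_nonneg t)).trans
      (le_mul_of_one_le_right (by positivity) (by linarith [norm_nonneg g]))
  have := gauss_ibp sK g1 (ei i) g2
  rw [dK, integral_const_mul] at this
  rw [← this]
  congr 1; funext g
  rw [real_inner_comm, inner_ei]

/-- The Kolmogorov equation. -/
lemma Cmp.kolm (h : Cmp μ R) {T C t : ℝ} {F : V n → ℝ} (hF : Sb T C F) (ht : 0 < t) (htT : t < T) :
    HasDerivAt (fun t => Ex μ t F) (Ex μ t (Gn μ F)) t := by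
  have := h.prob
  have hC0 : 0 ≤ C := (abs_nonneg _).trans (hF.b0 (t, 0) ht.le htT.le)
  have hc0 := (hF.sm.dd e0).continuous
  have hc1 := fun i => (hF.sm.dd (es i)).continuous
  have hc2 := fun i => ((hF.sm.dd (es i)).dd (es i)).continuous
  have hcoord1 : ∀ i, Continuous fun q : E n × E n => q.1 i := fun i => by fun_prop
  have hcoord2 : ∀ i, Continuous fun q : E n × E n => q.2 i := fun i => by fun_prop
  have hpt := pt_cont (n := n) t
  have main := hasDerivAt_integral_of_dominated_loc_of_deriv_le (μ := μ.prod (stdGaussian n))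
    (F := fun t q => F (pt t q)) (x₀ := t) (s := Set.Ioo (t / 2) T)
    (F' := fun t q => dd e0 F (pt t q)
      + ∑ i, (q.1 i + 1 / (2 * √t) * q.2 i) * dd (es i) F (pt t q))
    (bound := fun q => C + ∑ _i : Fin n, (R + 1 / (2 * √(t / 2)) * ‖q.2‖) * C)
    (Ioo_mem_nhds (by linarith) htT)
    (Filter.Eventually.of_forall fun s => (hF.sm.continuous.comp (pt_cont s)).aestronglyMeasurable)
    (h.ex_integrable hF.sm.continuous fun z hz => hF.b0 z (hz ▸ ht.le) (hz ▸ htT.le)) ?_ ?_ ?_ ?_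
  · refine main.2.congr_deriv ?_
    have i0 : Integrable (fun q => dd e0 F (pt t q)) (μ.prod (stdGaussian n)) :=
      h.ex_integrable hc0 fun z hz => hF.bt z (hz ▸ ht.le) (hz ▸ htT.le)
    have i1 : ∀ i, Integrable (fun q : E n × E n => q.1 i * dd (es i) F (pt t q))
        (μ.prod (stdGaussian n)) := fun i => by
      refine Integrable.of_bound (C := R * C)
        ((hcoord1 i).mul ((hc1 i).comp hpt)).aestronglyMeasurable ?_
      filter_upwards [h.sfst] with q hq
      rw [norm_mul]
      exact mul_le_mul ((PiLp.norm_apply_le q.1 i).trans hq) (hF.b1 i _ ht.le htT.le) (norm_nonneg _)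
        ((norm_nonneg _).trans hq)
    have i2 : ∀ i, Integrable (fun q : E n × E n => q.2 i * dd (es i) F (pt t q))
        (μ.prod (stdGaussian n)) := fun i => by
      refine (h.gaussnorm.mul_const C).mono'
        ((hcoord2 i).mul ((hc1 i).comp hpt)).aestronglyMeasurable
        (Filter.Eventually.of_forall fun q => ?_)
      rw [norm_mul]
      exact mul_le_mul (PiLp.norm_apply_le q.2 i) (hF.b1 i _ ht.le htT.le) (norm_nonneg _)
        (norm_nonneg _)
    have i3 : ∀ i, Integrable (fun q => dd (es i) (dd (es i) F) (pt t q))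
        (μ.prod (stdGaussian n)) := fun i =>
      h.ex_integrable (hc2 i) fun z hz => hF.b2 i z (hz ▸ ht.le) (hz ▸ htT.le)
    have i4 : ∀ i, Integrable (fun q => av μ i (pt t q) * dd (es i) F (pt t q))
        (μ.prod (stdGaussian n)) := fun i => by
      obtain ⟨D, hD⟩ := ((h.bs_av i).bk 0).bdd
      exact h.ex_integrable (F := fun z => av μ i z * dd (es i) F z) (C := D * C)
        ((h.bs_av i).sm.continuous.mul (hc1 i)) fun z hz => by
          rw [abs_mul]
          exact mul_le_mul (hD z) (hF.b1 i z (hz ▸ ht.le) (hz ▸ htT.le)) (abs_nonneg _)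
            ((abs_nonneg _).trans (hD z))
    have e1 : ∀ q : E n × E n, dd e0 F (pt t q)
        + ∑ i, (q.1 i + 1 / (2 * √t) * q.2 i) * dd (es i) F (pt t q)
        = dd e0 F (pt t q) + (∑ i, q.1 i * dd (es i) F (pt t q)
          + ∑ i, 1 / (2 * √t) * (q.2 i * dd (es i) F (pt t q))) := by
      intro q
      rw [← Finset.sum_add_distrib]
      congr 1
      exact Finset.sum_congr rfl fun i _ => by ring
    simp only [e1]
    rw [integral_add i0 ((integrable_finsetSum _ fun i _ => i1 i).fun_add
        (integrable_finsetSum _ fun i _ => (i2 i).const_mul _)),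
      integral_add (integrable_finsetSum _ fun i _ => i1 i)
        (integrable_finsetSum _ fun i _ => (i2 i).const_mul _),
      integral_finsetSum _ fun i _ => i1 i, integral_finsetSum _ fun i _ => (i2 i).const_mul _]
    have e2 : ∀ i, ∫ q, q.1 i * dd (es i) F (pt t q) ∂(μ.prod (stdGaussian n))
        = ∫ q, av μ i (pt t q) * dd (es i) F (pt t q) ∂(μ.prod (stdGaussian n)) := fun i =>
      h.disint (coord_cont i) (hc1 i) ht.le fun z hz => hF.b1 i z (hz ▸ ht.le) (hz ▸ htT.le)
    have e3 : ∀ i, ∫ q, 1 / (2 * √t) * (q.2 i * dd (es i) F (pt t q)) ∂(μ.prod (stdGaussian n))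
        = 1 / 2 * ∫ q, dd (es i) (dd (es i) F) (pt t q) ∂(μ.prod (stdGaussian n)) := fun i => by
      rw [integral_const_mul, h.ex_ibp hF ht htT.le, Ex, ← mul_assoc]
      congr 1
      have := (Real.sqrt_pos.2 ht).ne'
      field_simp
    simp only [e2, e3]
    unfold Ex Gn
    rw [integral_add (i0.fun_add ((integrable_finsetSum _ fun i _ => i3 i).const_mul _))
        (integrable_finsetSum _ fun i _ => i4 i),
      integral_add i0 ((integrable_finsetSum _ fun i _ => i3 i).const_mul _),
      integral_const_mul, integral_finsetSum _ fun i _ => i3 i,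
      integral_finsetSum _ fun i _ => i4 i, Finset.mul_sum]
    ring
  · refine Continuous.aestronglyMeasurable ?_
    refine (hc0.comp hpt).add (continuous_finsetSum _ fun i _ => ?_)
    exact ((hcoord1 i).add (continuous_const.mul (hcoord2 i))).mul ((hc1 i).comp hpt)
  · filter_upwards [h.sfst] with q hq s hs
    have hs0 : 0 < s := by linarith [hs.1]
    refine (norm_add_le _ _).trans (add_le_add (hF.bt _ hs0.le hs.2.le) ?_)
    refine (norm_sum_le _ _).trans (Finset.sum_le_sum fun i _ => ?_)
    rw [norm_mul]
    have hR : 0 ≤ R := (norm_nonneg _).trans hq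
    refine mul_le_mul ?_ (hF.b1 i _ hs0.le hs.2.le) (norm_nonneg _) (by positivity)
    refine (norm_add_le _ _).trans (add_le_add ((PiLp.norm_apply_le q.1 i).trans hq) ?_)
    rw [norm_mul, Real.norm_of_nonneg (by positivity : 0 ≤ 1 / (2 * √s))]
    refine mul_le_mul ?_ (PiLp.norm_apply_le q.2 i) (norm_nonneg _) (by positivity)
    have : 0 < √(t / 2) := Real.sqrt_pos.2 (by linarith)
    refine one_div_le_one_div_of_le (by positivity) ?_
    have := Real.sqrt_le_sqrt hs.1.le
    linarith
  · refine (integrable_const _).add (integrable_finsetSum _ fun i _ => ?_)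
    exact ((integrable_const _).add (h.gaussnorm.const_mul _)).mul_const _
  · refine Filter.Eventually.of_forall fun q s hs => ?_
    exact hasDerivAt_pt hF.sm (by linarith [hs.1]) q

end Kolm
end GaugeLog

namespace GaugeLog
open scoped ContDiff

/-! ### Third moments of tilted log-concave measures -/

section Third
variable {n : ℕ} {μ : Measure (E n)} {R M : ℝ} {p : E n → ℝ}

lemma Gr.add {j : ℕ} {f g : E n → ℝ} (hf : Gr j f) (hg : Gr j g) : Gr j (fun x => f x + g x) := by
  obtain ⟨hf, C, hC, h1⟩ := hf
  obtain ⟨hg, D, hD, h2⟩ := hg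
  refine ⟨hf.add hg, C + D, by positivity, fun x => (abs_add_le _ _).trans ?_⟩
  rw [add_mul]
  exact add_le_add (h1 x) (h2 x)

lemma Gr.const_mul {j : ℕ} {f : E n → ℝ} (hf : Gr j f) (c : ℝ) : Gr j (fun x => c * f x) := by
  obtain ⟨hf, C, hC, h1⟩ := hf
  refine ⟨continuous_const.mul hf, |c| * C, by positivity, fun x => ?_⟩
  rw [abs_mul, mul_assoc]
  exact mul_le_mul_of_nonneg_left (h1 x) (abs_nonneg c)

lemma Gr.sum {ι : Type*} (s : Finset ι) {F : ι → E n → ℝ} (h : ∀ i, Gr 1 (F i)) :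
    Gr 1 (fun z => ∑ i ∈ s, F i z) := by
  classical
  induction s using Finset.induction_on with
  | empty => simpa using Gr_const 0
  | insert a s ha ih => simpa [Finset.sum_insert ha] using (h a).add ih

/-- A compactly supported probability measure with a bounded log-concave density. -/
structure LCM (μ : Measure (E n)) (R : ℝ) (p : E n → ℝ) (M : ℝ) : Prop where
  cmp : Cmp μ R
  blc : BLC p M
  eq : μ = volume.withDensity fun x => ENNReal.ofReal (p x)

lemma LCM.integral (h : LCM μ R p M) (f : E n → ℝ) : ∫ x, f x ∂μ = ∫ x, f x * p x := by
  rw [h.eq, integral_withDensity_eq_integral_toReal_smul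
    (h.blc.meas.ennreal_ofReal) (by simp)]
  congr 1; funext x
  rw [ENNReal.toReal_ofReal (h.blc.lc.1 x), smul_eq_mul, mul_comm]

lemma gw_lz (t : ℝ) (θ x : E n) : gw t θ x = exp (lz x ((t, θ) : V n)) := by
  rw [gw, lz_apply, real_inner_comm]; congr 1; ring

lemma LCM.Nt_eq (h : LCM μ R p M) (φ : E n → ℝ) (t : ℝ) (θ : E n) :
    Nt μ φ (t, θ) = ∫ x, φ x * (gw t θ x * p x) := by
  rw [Nt, h.integral]
  congr 1; funext x
  rw [gw_lz]; ring

lemma LCM.mt_eq (h : LCM μ R p M) (φ : E n → ℝ) (t : ℝ) (θ : E n) :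
    mt μ φ (t, θ) = mw (fun x => gw t θ x * p x) φ := by
  rw [mt, mw, Zt, h.Nt_eq, h.Nt_eq]; simp

lemma Cmp.mt_inner (h : Cmp μ R) (b : E n) (z : V n) :
    mt μ (fun x => ⟪b, x⟫) z = ∑ i, b i * av μ i z := by
  simp only [inner_eq_sum]
  rw [h.mt_sum (φ := fun i x => b i * x i) _ fun i => continuous_const.mul (coord_cont i)]
  simp only [mt_const_mul, av]

lemma Cmp.mt_var (h : Cmp μ R) (b : E n) (z : V n) :
    mt μ (fun x => ⟪b, x⟫ ^ 2) z - mt μ (fun x => ⟪b, x⟫) z ^ 2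
      = ∑ i, ∑ j, b i * b j * Am μ z i j := by
  rw [h.mt_inner]
  have e : (fun x : E n => ⟪b, x⟫ ^ 2) = fun x => ∑ i, ∑ j, b i * b j * (x i * x j) := by
    funext x
    rw [inner_eq_sum, sq, Finset.sum_mul_sum]
    exact Finset.sum_congr rfl fun i _ => Finset.sum_congr rfl fun j _ => by ring
  have hc : ∀ i j : Fin n, Continuous fun x : E n => b i * b j * (x i * x j) := fun i j =>
    continuous_const.mul (coord2_cont i j)
  rw [e, h.mt_sum (φ := fun i x => ∑ j, b i * b j * (x i * x j)) _ fun i =>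
    continuous_finsetSum _ fun j _ => hc i j, sq, Finset.sum_mul_sum, ← Finset.sum_sub_distrib]
  refine Finset.sum_congr rfl fun i _ => ?_
  rw [h.mt_sum (φ := fun j x => b i * b j * (x i * x j)) _ fun j => hc i j,
    ← Finset.sum_sub_distrib]
  refine Finset.sum_congr rfl fun j _ => ?_
  rw [mt_const_mul, Am_apply]; ring

lemma Cmp.Am_psd (h : Cmp μ R) (b : E n) (z : V n) : 0 ≤ ∑ i, ∑ j, b i * b j * Am μ z i j := by
  rw [← h.mt_var]
  set c := mt μ (fun x => ⟪b, x⟫) z with hc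
  have hi : Continuous fun x : E n => ⟪b, x⟫ := by fun_prop
  have h1 : 0 ≤ mt μ (fun x => (⟪b, x⟫ - c) ^ 2) z := by
    have := h.mt_mono (φ := fun _ => 0) (ψ := fun x : E n => (⟪b, x⟫ - c) ^ 2) continuous_const
      (by fun_prop) (fun x _ => sq_nonneg _) z
    rwa [h.mt_const] at this
  have e : (fun x : E n => (⟪b, x⟫ - c) ^ 2) = fun x => ⟪b, x⟫ ^ 2 + ((-2 * c) * ⟪b, x⟫ + c ^ 2) := by
    funext x; ring
  rw [e, h.mt_add (by fun_prop) (by fun_prop), h.mt_add (by fun_prop) (by fun_prop), mt_const_mul,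
    h.mt_const, ← hc] at h1
  linarith

/-- The improved Lichnerowicz inequality for the tilted measures. -/
lemma LCM.lich (h : LCM μ R p M) {z : V n} {α : ℝ} (ht : 0 < z.1) (hα : 0 < α)
    (hcov : ∀ b : E n, ∑ i, ∑ j, b i * b j * Am μ z i j ≤ α * ‖b‖ ^ 2)
    {f : E n → ℝ} (hf : Sm f) (hf1 : Gr 1 f) (hfi : ∀ i, Gr 1 (dd (ei i) f)) :
    mt μ (fun x => f x ^ 2) z - mt μ f z ^ 2
      ≤ √(α / z.1) * ∑ i, mt μ (fun x => dd (ei i) f x ^ 2) z := by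
  obtain ⟨t, θ⟩ := z
  simp only [h.mt_eq]
  refine h.blc.lichnerowicz ht ?_ hα (fun b => ?_) hf hf1 hfi
  · have := h.cmp.Zt_pos (t, θ)
    rw [Zt, h.Nt_eq] at this
    simpa using this
  · rw [← h.mt_eq, ← h.mt_eq, h.cmp.mt_var]
    exact hcov b

/-- The third central moments of the tilted measure. -/
def Th (μ : Measure (E n)) (z : V n) (i j k : Fin n) : ℝ :=
  mt μ (fun x => (x i - av μ i z) * (x j - av μ j z) * (x k - av μ k z)) z

lemma Cmp.dd_Am (h : Cmp μ R) (i j k : Fin n) (z : V n) :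
    dd (es i) (fun z => Am μ z j k) z = Th μ z i j k := by
  have c3 : Continuous fun x : E n => x j * x k * x i := by fun_prop
  have e1 : dd (es i) (fun z => Am μ z j k) z = mt μ (fun x => x j * x k * x i) z
      - mt μ (fun x => x j * x k) z * av μ i z
      - (Am μ z i j * av μ k z + av μ j z * Am μ z i k) := by
    simp only [Am_apply]
    rw [dd_sub (h.sm_mt (coord2_cont j k)) ((h.bs_av j).sm.mul (h.bs_av k).sm),
      dd_mul (h.bs_av j).sm (h.bs_av k).sm, h.dd_es (coord2_cont j k), h.dd_av, h.dd_av]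
    rfl
  rw [e1, Th]
  set a := av μ i z
  set b := av μ j z
  set c := av μ k z
  have e2 : (fun x : E n => (x i - a) * (x j - b) * (x k - c)) = fun x =>
      x j * x k * x i + ((-a) * (x j * x k) + ((-c) * (x i * x j) + ((-b) * (x i * x k)
      + ((b * c) * x i + ((a * c) * x j + ((a * b) * x k + (-(a * b * c)))))))) := by
    funext x; ring
  rw [e2]
  repeat rw [h.mt_add (by fun_prop) (by fun_prop)]
  simp only [mt_const_mul, h.mt_const]
  change _ = _ + (_ + (_ + (_ + (b * c * a + (a * c * b + (a * b * c + _))))))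
  rw [Am_apply, Am_apply]
  ring

lemma Th_symm (z : V n) (i j k : Fin n) : Th μ z i j k = Th μ z j i k ∧ Th μ z i j k = Th μ z i k j := by
  constructor
  · rw [Th, Th]; congr 1; funext x; ring
  · rw [Th, Th]; congr 1; funext x; ring

/-- The third moment bound: a slice of the third moment tensor is tested against the quadratic form
it defines, whose variance is controlled by the improved Lichnerowicz inequality. -/
lemma LCM.third (h : LCM μ R p M) {z : V n} {α : ℝ} (ht : 0 < z.1) (hα : 0 < α)
    (hcov : ∀ b : E n, ∑ i, ∑ j, b i * b j * Am μ z i j ≤ α * ‖b‖ ^ 2) (e : E n) :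
    ∑ i, ∑ j, (∑ k, Th μ z i j k * e k) ^ 2 ≤ 4 * α ^ 2 * √(α / z.1) * ‖e‖ ^ 2 := by
  have hC := h.cmp
  set T : Fin n → Fin n → ℝ := fun i j => ∑ k, Th μ z i j k * e k with hT
  have hTs : ∀ i j, T i j = T j i := fun i j =>
    Finset.sum_congr rfl fun k _ => by rw [(Th_symm z i j k).1]
  set W := ∑ i, ∑ j, T i j ^ 2 with hW
  have hW0 : 0 ≤ W := by positivity
  set a : Fin n → ℝ := fun i => av μ i z with ha
  -- the quadratic test function built from the slice of the third moment tensor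
  set Q : E n → ℝ := fun x => ∑ i, ∑ j, T i j * ((x i - a i) * (x j - a j)) with hQ
  set l : E n → ℝ := fun x => ∑ k, e k * (x k - a k) with hl
  have Qc : Continuous Q := by simp only [hQ]; fun_prop
  have lc : Continuous l := by simp only [hl]; fun_prop
  have cs : ∀ i : Fin n, Sm fun x : E n => x i - a i := fun i => by
    have : Sm fun x : E n => x i := by
      have := sm_inner (ei i)
      simpa [real_inner_comm, inner_ei] using this
    exact this.sub contDiff_const
  have dcs : ∀ i j : Fin n, dd (ei i) (fun x : E n => x j - a j) = fun _ => if i = j then 1 else 0 := by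
    intro i j
    have : (fun x : E n => x j - a j) = fun x => ⟪ei j, x⟫ - a j := by
      funext x; rw [real_inner_comm, inner_ei]
    rw [this, dd_sub (sm_inner _) contDiff_const, dd_inner, dd_const]
    funext x
    rw [real_inner_comm, inner_ei, sub_zero]
    simp [ei, eq_comm]
  have Qs : Sm Q := ContDiff.sum fun i _ => ContDiff.sum fun j _ =>
    contDiff_const.mul ((cs i).mul (cs j))
  have dQ : ∀ i, dd (ei i) Q = fun x => 2 * ∑ j, T i j * (x j - a j) := by
    intro i
    simp only [hQ]
    rw [dd_sum _ fun i' => ContDiff.sum fun j _ => contDiff_const.mul ((cs i').mul (cs j))]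
    have : ∀ i', dd (ei i) (fun x : E n => ∑ j, T i' j * ((x i' - a i') * (x j - a j)))
        = fun x => ∑ j, T i' j * ((if i = i' then 1 else 0) * (x j - a j)
          + (x i' - a i') * (if i = j then 1 else 0)) := by
      intro i'
      rw [dd_sum _ fun j => contDiff_const.mul ((cs i').mul (cs j))]
      funext x
      refine Finset.sum_congr rfl fun j _ => ?_
      rw [dd_const_mul ((cs i').mul (cs j)), dd_mul (cs i') (cs j), dcs, dcs]
    simp only [this]
    funext x
    simp only [mul_add, Finset.sum_add_distrib, ite_mul, mul_ite, one_mul, mul_one, zero_mul,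
      mul_zero, Finset.sum_ite_eq, Finset.mem_univ, if_true]
    rw [Finset.sum_comm]
    simp only [Finset.sum_ite_eq, Finset.mem_univ, if_true]
    rw [two_mul]
    congr 1
    exact Finset.sum_congr rfl fun j _ => by rw [hTs]
  have gc : ∀ i : Fin n, Gr 1 fun x : E n => x i - a i := fun i => by
    simpa [sub_eq_add_neg] using (Gr.coord i).add (Gr_const (-(a i)))
  have gQ : Gr 1 Q := by
    refine Gr.sum _ fun i => Gr.sum _ fun j => Gr.const_mul ?_ _
    refine ⟨by fun_prop, (1 + |a i| + |a j|) ^ 2, by positivity, fun x => ?_⟩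
    have h1 : |x i - a i| ≤ ‖x‖ + |a i| := (abs_sub _ _).trans (by
      gcongr; exact PiLp.norm_apply_le x i)
    have h2 : |x j - a j| ≤ ‖x‖ + |a j| := (abs_sub _ _).trans (by
      gcongr; exact PiLp.norm_apply_le x j)
    rw [abs_mul, pow_one]
    refine (mul_le_mul h1 h2 (abs_nonneg _) (by positivity)).trans ?_
    have := norm_nonneg x
    have hi := abs_nonneg (a i)
    have hj := abs_nonneg (a j)
    nlinarith [mul_nonneg hi hj, sq_nonneg (‖x‖ - 1), mul_nonneg (add_nonneg hi hj) (sq_nonneg (‖x‖ - 1)),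
      mul_nonneg hi (sq_nonneg ‖x‖), mul_nonneg hj (sq_nonneg ‖x‖), sq_nonneg (|a i| + |a j|),
      mul_nonneg (sq_nonneg (|a i| + |a j|)) (sq_nonneg ‖x‖)]
  have gdQ : ∀ i, Gr 1 (dd (ei i) Q) := fun i => by
    rw [dQ]
    exact (Gr.sum _ fun j => (gc j).const_mul _).const_mul _
  have L := h.lich ht hα hcov Qs gQ gdQ
  -- second moments of centred linear functionals
  have hlin : ∀ b : Fin n → ℝ, mt μ (fun x => (∑ j, b j * (x j - a j)) ^ 2) z
      ≤ α * ∑ j, b j ^ 2 := by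
    intro b
    have h1 := hcov (WithLp.toLp 2 b)
    rw [← hC.mt_var, hC.mt_inner, EuclideanSpace.real_norm_sq_eq] at h1
    refine le_trans (le_of_eq ?_) h1
    set c := ∑ i, (WithLp.toLp 2 b : E n) i * av μ i z with hc
    have e1 : (fun x : E n => (∑ j, b j * (x j - a j)) ^ 2)
        = fun x => ⟪(WithLp.toLp 2 b : E n), x⟫ ^ 2 + ((-2 * c) * ⟪(WithLp.toLp 2 b : E n), x⟫ + c ^ 2) := by
      funext x
      have : ∑ j, b j * (x j - a j) = ⟪(WithLp.toLp 2 b : E n), x⟫ - c := by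
        rw [inner_eq_sum, hc, ← Finset.sum_sub_distrib]
        exact Finset.sum_congr rfl fun j _ => by simp only [ha]; ring
      rw [this]; ring
    rw [e1, hC.mt_add (by fun_prop) (by fun_prop), hC.mt_add (by fun_prop) (by fun_prop),
      mt_const_mul, hC.mt_const, hC.mt_inner, ← hc]
    ring
  have hl0 : mt μ l z = 0 := by
    simp only [hl]
    rw [hC.mt_sum (φ := fun k x => e k * (x k - a k)) _ fun k => by fun_prop]
    refine Finset.sum_eq_zero fun k _ => ?_
    rw [mt_const_mul, hC.mt_sub (coord_cont k) continuous_const, hC.mt_const]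
    simp [ha, av]
  have hQl : mt μ (fun x => Q x * l x) z = W := by
    have e1 : (fun x => Q x * l x) = fun x => ∑ i, ∑ j, ∑ k, (T i j * e k) *
        ((x i - a i) * (x j - a j) * (x k - a k)) := by
      funext x
      simp only [hQ, hl, Finset.sum_mul]
      refine Finset.sum_congr rfl fun i _ => Finset.sum_congr rfl fun j _ => ?_
      rw [Finset.mul_sum]
      exact Finset.sum_congr rfl fun k _ => by ring
    rw [e1, hC.mt_sum (φ := fun i x => ∑ j, ∑ k, (T i j * e k) *
        ((x i - a i) * (x j - a j) * (x k - a k))) _ fun i => by fun_prop]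
    refine Finset.sum_congr rfl fun i _ => ?_
    rw [hC.mt_sum (φ := fun j x => ∑ k, (T i j * e k) *
        ((x i - a i) * (x j - a j) * (x k - a k))) _ fun j => by fun_prop]
    refine Finset.sum_congr rfl fun j _ => ?_
    rw [hC.mt_sum (φ := fun k x => (T i j * e k) *
        ((x i - a i) * (x j - a j) * (x k - a k))) _ fun k => by fun_prop]
    simp only [mt_const_mul]
    have e2 : T i j ^ 2 = ∑ k, T i j * (Th μ z i j k * e k) := by rw [sq, ← Finset.mul_sum]
    rw [e2]
    exact Finset.sum_congr rfl fun k _ => by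
      change T i j * e k * Th μ z i j k = _
      ring
  have hl2 : mt μ (fun x => l x ^ 2) z ≤ α * ‖e‖ ^ 2 := by
    rw [EuclideanSpace.real_norm_sq_eq]
    exact hlin e
  have hdQ2 : ∑ i, mt μ (fun x => dd (ei i) Q x ^ 2) z ≤ 4 * α * W := by
    rw [hW, Finset.mul_sum]
    refine Finset.sum_le_sum fun i _ => ?_
    have e1 : (fun x => dd (ei i) Q x ^ 2) = fun x => 4 * (∑ j, T i j * (x j - a j)) ^ 2 := by
      rw [dQ]; funext x; ring
    rw [e1, mt_const_mul]
    have := hlin (T i)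
    linarith
  set c₁ := √(α / z.1) * (4 * α) with hc1
  set c₂ := α * ‖e‖ ^ 2 with hc2
  have hs : 0 < √(α / z.1) := Real.sqrt_pos.2 (by positivity)
  have hc1p : 0 < c₁ := by positivity
  have hVar : mt μ (fun x => Q x ^ 2) z - mt μ Q z ^ 2 ≤ c₁ * W := by
    refine L.trans ((mul_le_mul_of_nonneg_left hdQ2 hs.le).trans (le_of_eq ?_))
    rw [hc1]; ring
  -- Cauchy–Schwarz, through the nonnegativity of the mean of one square
  have hsq : 0 ≤ mt μ (fun x => (Q x - mt μ Q z - c₁ * l x) ^ 2) z := by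
    have := hC.mt_mono (φ := fun _ => 0) (ψ := fun x : E n => (Q x - mt μ Q z - c₁ * l x) ^ 2)
      continuous_const (by fun_prop) (fun x _ => sq_nonneg _) z
    rwa [hC.mt_const] at this
  set m := mt μ Q z with hm
  have e1 : (fun x => (Q x - m - c₁ * l x) ^ 2) = fun x => Q x ^ 2 + ((-2 * m) * Q x
      + ((-2 * c₁) * (Q x * l x) + ((2 * m * c₁) * l x + (c₁ ^ 2 * l x ^ 2 + m ^ 2)))) := by
    funext x; ring
  rw [e1] at hsq
  repeat rw [hC.mt_add (by fun_prop) (by fun_prop)] at hsq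
  simp only [mt_const_mul, hC.mt_const, hl0, hQl] at hsq
  rw [← hm] at hsq
  have h1 : c₁ * (c₁ * c₂ - W) ≥ 0 := by nlinarith [mul_le_mul_of_nonneg_left hl2 (sq_nonneg c₁)]
  have h2 : 0 ≤ c₁ * c₂ - W := nonneg_of_mul_nonneg_right h1 hc1p
  have : c₁ * c₂ = 4 * α ^ 2 * √(α / z.1) * ‖e‖ ^ 2 := by rw [hc1, hc2]; ring
  linarith

end Third
end GaugeLog

namespace GaugeLog
open scoped ContDiff

/-! ### Traces of products of symmetric matrices -/

section Mat
variable {n : ℕ}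

/-- Orthogonal diagonalization of a real matrix. -/
structure Diag (B U : Matrix (Fin n) (Fin n) ℝ) (l : Fin n → ℝ) : Prop where
  o1 : U.transpose * U = 1
  o2 : U * U.transpose = 1
  eq : B = U * Matrix.diagonal l * U.transpose

lemma exists_diag {B : Matrix (Fin n) (Fin n) ℝ} (hB : B.transpose = B) : ∃ U l, Diag B U l := by
  have h : B.IsHermitian := by
    rw [Matrix.IsHermitian, Matrix.conjTranspose_eq_transpose_of_trivial]; exact hB
  have h2 := h.spectral_theorem
  refine ⟨h.eigenvectorUnitary, h.eigenvalues, ?_, ?_, ?_⟩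
  · have := Unitary.coe_star_mul_self h.eigenvectorUnitary
    rwa [Matrix.star_eq_conjTranspose, Matrix.conjTranspose_eq_transpose_of_trivial] at this
  · have := Unitary.coe_mul_star_self h.eigenvectorUnitary
    rwa [Unitary.coe_star, Matrix.star_eq_conjTranspose, Matrix.conjTranspose_eq_transpose_of_trivial] at this
  · rw [← Matrix.conjTranspose_eq_transpose_of_trivial, ← Matrix.star_eq_conjTranspose]
    conv_lhs => rw [h2]
    rfl

variable {B U : Matrix (Fin n) (Fin n) ℝ} {l : Fin n → ℝ}

lemma Diag.pow (h : Diag B U l) (k : ℕ) :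
    B ^ k = U * Matrix.diagonal (fun j => l j ^ k) * U.transpose := by
  induction k with
  | zero => simp [h.o2]
  | succ k ih =>
    rw [pow_succ, ih, h.eq]
    calc _ = U * Matrix.diagonal (fun j => l j ^ k) * (U.transpose * U) * Matrix.diagonal l
        * U.transpose := by simp only [Matrix.mul_assoc]
      _ = _ := by
        rw [h.o1, Matrix.mul_one, Matrix.mul_assoc U, Matrix.diagonal_mul_diagonal]
        simp only [pow_succ]

lemma Diag.trace_pow (h : Diag B U l) (k : ℕ) : (B ^ k).trace = ∑ j, l j ^ k := by
  rw [h.pow, Matrix.trace_mul_comm, ← Matrix.mul_assoc, h.o1, Matrix.one_mul, Matrix.trace_diagonal]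

lemma abs_pow_mul_le (x y : ℝ) (d b : ℕ) :
    x ^ d * y ^ b ≤ |x| ^ (d + b) + |y| ^ (d + b) := by
  have h : x ^ d * y ^ b ≤ |x| ^ d * |y| ^ b := by
    rw [← abs_pow, ← abs_pow, ← abs_mul]; exact le_abs_self _
  refine h.trans ?_
  rcases le_total |x| |y| with h1 | h1
  · have : |x| ^ d * |y| ^ b ≤ |y| ^ d * |y| ^ b := by gcongr
    rw [← pow_add] at this
    have : 0 ≤ |x| ^ (d + b) := by positivity
    linarith
  · have : |x| ^ d * |y| ^ b ≤ |x| ^ d * |x| ^ b := by gcongr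
    rw [← pow_add] at this
    have : 0 ≤ |y| ^ (d + b) := by positivity
    linarith

lemma Diag.col_norm (h : Diag B U l) (H : Matrix (Fin n) (Fin n) ℝ) (k : Fin n) :
    ∑ j, (U.transpose * H * U) j k ^ 2 = ∑ j, (H * U) j k ^ 2 := by
  have e1 : ∀ M : Matrix (Fin n) (Fin n) ℝ, ∑ j, M j k ^ 2 = (M.transpose * M) k k := fun M => by
    simp [Matrix.mul_apply, sq]
  rw [e1, e1]
  refine congrFun (congrFun ?_ k) k
  rw [Matrix.mul_assoc, Matrix.transpose_mul, Matrix.transpose_transpose]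
  calc _ = (H * U).transpose * (U * U.transpose) * (H * U) := by simp only [Matrix.mul_assoc]
    _ = _ := by rw [h.o2, Matrix.mul_one]

/-- In an eigenbasis of `B` the trace is `∑ lⱼ^d lₖ^b hⱼₖ²`, so a bound on the rows of the matrices
`H i` reduces it to a power sum of eigenvalues. -/
lemma Diag.trace_le (h : Diag B U l) {ι : Type*} (s : Finset ι)
    (H : ι → Matrix (Fin n) (Fin n) ℝ) (hs : ∀ i, (H i).transpose = H i) {Γ : ℝ}
    (hΓ : ∀ e : E n, ∑ i ∈ s, ∑ j, (∑ k, H i j k * e k) ^ 2 ≤ Γ * ‖e‖ ^ 2) (d b : ℕ) :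
    ∑ i ∈ s, (B ^ d * H i * B ^ b * H i).trace ≤ 2 * Γ * ∑ j, |l j| ^ (d + b) := by
  set h' : ι → Matrix (Fin n) (Fin n) ℝ := fun i => U.transpose * H i * U with hh
  have hsym : ∀ i j k, h' i j k = h' i k j := fun i j k => by
    have : (h' i).transpose = h' i := by
      simp only [hh, Matrix.transpose_mul, Matrix.transpose_transpose, hs, Matrix.mul_assoc]
    conv_lhs => rw [← this]
    rfl
  have e1 : ∀ i, (B ^ d * H i * B ^ b * H i).trace = ∑ j, ∑ k, l j ^ d * l k ^ b * h' i j k ^ 2 := by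
    intro i
    rw [h.pow, h.pow]
    have : (U * Matrix.diagonal (fun j => l j ^ d) * U.transpose * H i
        * (U * Matrix.diagonal (fun j => l j ^ b) * U.transpose) * H i).trace
        = (Matrix.diagonal (fun j => l j ^ d) * h' i * Matrix.diagonal (fun j => l j ^ b) * h' i).trace := by
      simp only [Matrix.mul_assoc, hh]
      rw [Matrix.trace_mul_comm]
      simp only [Matrix.mul_assoc]
    rw [this, Matrix.trace]
    refine Finset.sum_congr rfl fun j _ => ?_
    rw [Matrix.diag_apply, Matrix.mul_apply]
    refine Finset.sum_congr rfl fun k _ => ?_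
    rw [Matrix.mul_diagonal, Matrix.diagonal_mul, hsym i k j]
    ring
  have hcol : ∀ k, ∑ i ∈ s, ∑ j, h' i j k ^ 2 ≤ Γ := by
    intro k
    have := hΓ (WithLp.toLp 2 fun j => U j k)
    rw [EuclideanSpace.real_norm_sq_eq] at this
    have e2 : ∑ j, (WithLp.toLp 2 (fun j => U j k) : E n) j ^ 2 = 1 := by
      have := congrFun (congrFun h.o1 k) k
      rw [Matrix.mul_apply, Matrix.one_apply_eq] at this
      rw [← this]
      exact Finset.sum_congr rfl fun j _ => by simp [sq]
    rw [e2, mul_one] at this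
    refine le_trans (le_of_eq ?_) this
    refine Finset.sum_congr rfl fun i _ => ?_
    rw [h.col_norm]
    rfl
  have key : ∀ m, ∑ i ∈ s, ∑ j, ∑ k, |l k| ^ m * h' i j k ^ 2 ≤ Γ * ∑ k, |l k| ^ m := by
    intro m
    have : ∑ i ∈ s, ∑ j, ∑ k, |l k| ^ m * h' i j k ^ 2
        = ∑ k, |l k| ^ m * ∑ i ∈ s, ∑ j, h' i j k ^ 2 := by
      simp only [Finset.mul_sum]
      rw [Finset.sum_comm' (s := s) (t := fun _ => Finset.univ) (t' := Finset.univ) (s' := fun _ => s) (by simp)]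
      rw [Finset.sum_comm' (s := Finset.univ) (t := fun _ => s) (t' := s) (s' := fun _ => Finset.univ) (by simp)]
      rw [Finset.sum_comm (s := Finset.univ) (t := s)]
      exact Finset.sum_congr rfl fun i _ => Finset.sum_comm
    rw [this, Finset.mul_sum]
    refine Finset.sum_le_sum fun k _ => ?_
    rw [mul_comm Γ]
    exact mul_le_mul_of_nonneg_left (hcol k) (by positivity)
  simp only [e1]
  calc _ ≤ ∑ i ∈ s, ∑ j, ∑ k, (|l k| ^ (d + b) * h' i k j ^ 2 + |l j| ^ (d + b) * h' i k j ^ 2) := by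
        refine Finset.sum_le_sum fun i _ => Finset.sum_le_sum fun j _ => Finset.sum_le_sum fun k _ => ?_
        rw [hsym i k j, ← add_mul, add_comm]
        exact mul_le_mul_of_nonneg_right (abs_pow_mul_le _ _ _ _) (sq_nonneg _)
    _ = ∑ i ∈ s, ∑ j, ∑ k, |l k| ^ (d + b) * h' i j k ^ 2
        + ∑ i ∈ s, ∑ j, ∑ k, |l k| ^ (d + b) * h' i j k ^ 2 := by
        simp only [Finset.sum_add_distrib]
        congr 1
        · exact Finset.sum_congr rfl fun i _ => Finset.sum_congr rfl fun j _ =>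
            Finset.sum_congr rfl fun k _ => by rw [hsym]
        · exact Finset.sum_congr rfl fun i _ => Finset.sum_comm
    _ ≤ _ := by linarith [key (d + b)]

/-- Quadratic forms through a diagonalization. -/
lemma Diag.quad (h : Diag B U l) (b : Fin n → ℝ) :
    ∑ i, ∑ j, b i * b j * B i j = ∑ k, l k * (∑ i, b i * U i k) ^ 2 := by
  have e : ∀ i j, B i j = ∑ k, l k * U i k * U j k := by
    intro i j
    conv_lhs => rw [h.eq]
    rw [Matrix.mul_apply]
    exact Finset.sum_congr rfl fun k _ => by rw [Matrix.mul_diagonal, Matrix.transpose_apply]; ring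
  simp only [e, sq, Finset.mul_sum, Finset.sum_mul]
  rw [Finset.sum_comm]
  calc _ = ∑ j, ∑ k, ∑ i, b i * b j * (l k * U i k * U j k) :=
        Finset.sum_congr rfl fun j _ => Finset.sum_comm
    _ = ∑ k, ∑ j, ∑ i, b i * b j * (l k * U i k * U j k) := Finset.sum_comm
    _ = _ := Finset.sum_congr rfl fun k _ => Finset.sum_congr rfl fun j _ =>
        Finset.sum_congr rfl fun i _ => by ring

lemma Diag.parseval (h : Diag B U l) (b : Fin n → ℝ) :
    ∑ k, (∑ i, b i * U i k) ^ 2 = ∑ i, b i ^ 2 := by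
  have h1 : Diag (1 : Matrix (Fin n) (Fin n) ℝ) U (fun _ => 1) :=
    ⟨h.o1, h.o2, by rw [Matrix.diagonal_one, Matrix.mul_one, h.o2]⟩
  have := h1.quad b
  simp only [one_mul] at this
  rw [← this]
  refine Finset.sum_congr rfl fun i _ => ?_
  rw [Finset.sum_eq_single i (by intro j _ hj; simp [Matrix.one_apply_ne' hj]) (by simp)]
  simp [sq]

lemma Diag.quad_le (h : Diag B U l) {α : ℝ} (hl : ∀ k, l k ≤ α) (b : Fin n → ℝ) :
    ∑ i, ∑ j, b i * b j * B i j ≤ α * ∑ i, b i ^ 2 := by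
  rw [h.quad, ← h.parseval b, Finset.mul_sum]
  exact Finset.sum_le_sum fun k _ => mul_le_mul_of_nonneg_right (hl k) (sq_nonneg _)

/-- Every eigenvalue is a value of the quadratic form at a unit vector. -/
lemma Diag.eig (h : Diag B U l) (k : Fin n) :
    ∑ i, U i k ^ 2 = 1 ∧ ∑ i, ∑ j, U i k * U j k * B i j = l k := by
  have h1 : ∀ m, ∑ i, U i k * U i m = (1 : Matrix (Fin n) (Fin n) ℝ) k m := fun m => by
    rw [← h.o1, Matrix.mul_apply]; rfl
  refine ⟨?_, ?_⟩
  · have := h1 k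
    rw [Matrix.one_apply_eq] at this
    rw [← this]; exact Finset.sum_congr rfl fun i _ => by ring
  · rw [h.quad (fun i => U i k)]
    simp only [h1]
    rw [Finset.sum_eq_single k (by intro j _ hj; simp [Matrix.one_apply_ne' hj]) (by simp)]
    simp

end Mat
end GaugeLog

namespace GaugeLog
open scoped ContDiff

/-! ### The covariance matrix stays close to the identity -/

section Decay
variable {n : ℕ} {μ : Measure (E n)} {R M : ℝ} {p : E n → ℝ}

/-- The deviation of the tilted covariance matrix from the identity. -/
def Bz (μ : Measure (E n)) (z : V n) : Matrix (Fin n) (Fin n) ℝ := Am μ z - 1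

lemma Am_symm (z : V n) (i j : Fin n) : Am μ z i j = Am μ z j i := by
  rw [Am_apply, Am_apply]; simp only [mul_comm]

lemma Bz_symm (z : V n) : (Bz μ z).transpose = Bz μ z := by
  rw [Bz, Matrix.transpose_sub, Matrix.transpose_one]
  congr 1
  ext i j; rw [Matrix.transpose_apply, Am_symm]

lemma Cmp.bm_Bz (h : Cmp μ R) : BM (Bz μ) := fun j k => (h.bs_Am j k).sub (Bs.const _)

lemma Cmp.gM_Bz (h : Cmp μ R) (z : V n) : gM μ (Bz μ) z = -(Am μ z * Am μ z) := by
  ext j k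
  change Gn μ (fun z => Am μ z j k - (1 : Matrix (Fin n) (Fin n) ℝ) j k) z = _
  rw [Gn_sub (h.bs_Am j k).sm contDiff_const, Gn_const, h.Gn_Am, sub_zero]
  rfl

lemma Cmp.dM_Bz (h : Cmp μ R) (i : Fin n) (z : V n) :
    dM (es i) (Bz μ) z = Matrix.of fun j k => Th μ z i j k := by
  ext j k
  change dd (es i) (fun z => Am μ z j k - (1 : Matrix (Fin n) (Fin n) ℝ) j k) z = _
  rw [dd_sub (h.bs_Am j k).sm contDiff_const, dd_const]
  change dd (es i) (fun z => Am μ z j k) z - 0 = _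
  rw [h.dd_Am, sub_zero]; rfl

lemma quad_one (b : Fin n → ℝ) :
    ∑ i, ∑ j, b i * b j * (1 : Matrix (Fin n) (Fin n) ℝ) i j = ∑ i, b i ^ 2 := by
  refine Finset.sum_congr rfl fun i _ => ?_
  rw [Finset.sum_eq_single i (by intro j _ hj; simp [Matrix.one_apply_ne' hj]) (by simp)]
  simp [sq]

lemma quad_Bz (b : Fin n → ℝ) (z : V n) : ∑ i, ∑ j, b i * b j * Bz μ z i j
    = (∑ i, ∑ j, b i * b j * Am μ z i j) - ∑ i, b i ^ 2 := by
  rw [← quad_one b, ← Finset.sum_sub_distrib]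
  refine Finset.sum_congr rfl fun i _ => ?_
  rw [← Finset.sum_sub_distrib]
  exact Finset.sum_congr rfl fun j _ => by rw [Bz, Matrix.sub_apply]; ring

lemma Diag.quad_Am {U : Matrix (Fin n) (Fin n) ℝ} {l : Fin n → ℝ} {z : V n}
    (hD : Diag (Bz μ z) U l) (k : Fin n) : ∑ i, ∑ j, U i k * U j k * Am μ z i j = 1 + l k := by
  obtain ⟨h1, h2⟩ := hD.eig k
  have := quad_Bz (μ := μ) (fun i => U i k) z
  rw [h2, h1] at this
  linarith

/-- Eigenvalues of the covariance matrix are nonnegative. -/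
lemma Cmp.eig_nonneg (h : Cmp μ R) {U : Matrix (Fin n) (Fin n) ℝ} {l : Fin n → ℝ} {z : V n}
    (hD : Diag (Bz μ z) U l) (k : Fin n) : 0 ≤ 1 + l k := by
  have h3 := h.Am_psd (WithLp.toLp 2 fun i => U i k) z
  have := hD.quad_Am k
  simp only at h3
  linarith

lemma Diag.Am_le {U : Matrix (Fin n) (Fin n) ℝ} {l : Fin n → ℝ} {z : V n}
    (hD : Diag (Bz μ z) U l) {α : ℝ} (hα : ∀ k, 1 + l k ≤ α) (b : E n) :
    ∑ i, ∑ j, b i * b j * Am μ z i j ≤ α * ‖b‖ ^ 2 := by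
  have h1 := hD.quad_le (α := α - 1) (fun k => by linarith [hα k]) b
  rw [quad_Bz b] at h1
  rw [EuclideanSpace.real_norm_sq_eq]
  linarith

/-- The covariance of the tilt at time `t` is at most `1 / t`. -/
lemma LCM.eig_le (h : LCM μ R p M) {U : Matrix (Fin n) (Fin n) ℝ} {l : Fin n → ℝ} {z : V n}
    (ht : 0 < z.1) (hD : Diag (Bz μ z) U l) (k : Fin n) : 1 + l k ≤ 1 / z.1 := by
  obtain ⟨m, -, hm⟩ := Finset.exists_max_image Finset.univ l ⟨k, Finset.mem_univ k⟩
  refine (add_le_add_right (hm k (Finset.mem_univ k)) 1).trans ?_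
  rcases (h.cmp.eig_nonneg hD m).eq_or_lt with h0 | h0
  · rw [← h0]; positivity
  have hcov := hD.Am_le (α := 1 + l m) fun j => add_le_add_right (hm j (Finset.mem_univ j)) 1
  set u : E n := WithLp.toLp 2 fun i => U i m with hu
  have hq : ∑ i, ∑ j, u i * u j * Am μ z i j = 1 + l m := hD.quad_Am m
  have L := h.lich ht h0 hcov (f := fun x => ⟪u, x⟫) (sm_inner u) (Gr.inner u)
    (fun i => by rw [dd_inner]; exact Gr_const _)
  rw [h.cmp.mt_var, hq] at L
  have hn : ∑ i, mt μ (fun x => dd (ei i) (fun x => ⟪u, x⟫) x ^ 2) z = 1 := by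
    rw [← (hD.eig m).1]
    refine Finset.sum_congr rfl fun i _ => ?_
    rw [dd_inner, inner_ei, h.cmp.mt_const]
  rw [hn, mul_one] at L
  have h2 : (1 + l m) ^ 2 ≤ (1 + l m) / z.1 := (Real.le_sqrt h0.le (by positivity)).1 L
  rw [le_div_iff₀ ht] at h2 ⊢
  nlinarith

/-- The `q`-th power sum of the eigenvalues of the deviation. -/
def Sq (μ : Measure (E n)) (q : ℕ) (z : V n) : ℝ := (Bz μ z ^ q).trace

lemma Cmp.bs_Sq (h : Cmp μ R) (q : ℕ) : Bs (Sq μ q) := by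
  have := Bs.sum (F := fun j z => (Bz μ z ^ q) j j) Finset.univ fun j => h.bm_Bz.pow q j j
  exact this

lemma Cmp.Gn_Sq (h : Cmp μ R) (q : ℕ) (z : V n) :
    Gn μ (Sq μ q) z = (gM μ (fun z => Bz μ z ^ q) z).trace := by
  have := Gn_sum (μ := μ) (F := fun j z => (Bz μ z ^ q) j j) Finset.univ
    (fun j => (h.bm_Bz.pow q j j).sm) z
  exact this

lemma sum_range_le (q : ℕ) : ∑ b ∈ Finset.range q, (b : ℝ) ≤ (q : ℝ) ^ 2 := by
  calc ∑ b ∈ Finset.range q, (b : ℝ) ≤ ∑ b ∈ Finset.range q, (q : ℝ) :=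
        Finset.sum_le_sum fun b hb => by exact_mod_cast (Finset.mem_range.1 hb).le
    _ = _ := by simp [sq]

/-- The drift of the power sum: the first term comes from the drift `-A²` of the covariance, the
second from its quadratic variation, which is bounded through the third moments. -/
lemma LCM.Gn_Sq_le (h : LCM μ R p M) {U : Matrix (Fin n) (Fin n) ℝ} {l : Fin n → ℝ} {z : V n}
    (ht : 0 < z.1) (hD : Diag (Bz μ z) U l) {q : ℕ} (hq : 2 ≤ q) (hev : Even q) {α : ℝ} (hα0 : 0 < α)
    (hα : ∀ k, 1 + l k ≤ α) :
    Gn μ (Sq μ q) z ≤ q * ∑ j, |l j| ^ (q - 1)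
      + q ^ 2 * (2 * (4 * α ^ 2 * √(α / z.1)) * ∑ j, |l j| ^ (q - 2)) := by
  have hC := h.cmp
  rw [hC.Gn_Sq, gM_pow hC.bm_Bz, Matrix.trace_add, Matrix.trace_sum, Matrix.trace_sum]
  set B := Bz μ z with hB
  refine add_le_add ?_ ?_
  · have hA : Am μ z = 1 + B := by rw [hB, Bz]; abel
    have e1 : ∀ a ∈ Finset.range q, (B ^ a * gM μ (Bz μ) z * B ^ (q - 1 - a)).trace
        ≤ ∑ j, |l j| ^ (q - 1) := by
      intro a ha
      have ha := Finset.mem_range.1 ha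
      rw [Matrix.trace_mul_comm, ← mul_assoc, ← pow_add, hC.gM_Bz, hA]
      have e2 : B ^ (q - 1 - a + a) * -((1 + B) * (1 + B))
          = -(B ^ (q - 1)) - (2 : ℝ) • B ^ (q - 1 + 1) - B ^ (q - 1 + 2) := by
        rw [show q - 1 - a + a = q - 1 by omega, pow_add, pow_add, two_smul]; noncomm_ring
      rw [e2, Matrix.trace_sub, Matrix.trace_sub, Matrix.trace_neg, Matrix.trace_smul, hD.trace_pow,
        hD.trace_pow, hD.trace_pow, smul_eq_mul, Finset.mul_sum, ← Finset.sum_neg_distrib,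
        ← Finset.sum_sub_distrib, ← Finset.sum_sub_distrib]
      refine Finset.sum_le_sum fun j _ => ?_
      have hodd : Odd (q - 1) := Nat.Even.sub_odd (by omega) hev odd_one
      have e3 : -l j ^ (q - 1) - 2 * l j ^ (q - 1 + 1) - l j ^ (q - 1 + 2)
          = -(l j ^ (q - 1) * (1 + l j) ^ 2) := by ring
      rw [e3]
      have h0 := hC.eig_nonneg hD j
      rcases le_total 0 (l j) with hl | hl
      · have : 0 ≤ l j ^ (q - 1) * (1 + l j) ^ 2 := by positivity
        have : 0 ≤ |l j| ^ (q - 1) := by positivity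
        linarith
      · rw [abs_of_nonpos hl, hodd.neg_pow]
        have h3 : l j ^ (q - 1) ≤ 0 := hodd.pow_nonpos hl
        have h4 : (1 + l j) ^ 2 ≤ 1 := by nlinarith
        nlinarith
    calc _ ≤ ∑ a ∈ Finset.range q, ∑ j, |l j| ^ (q - 1) := Finset.sum_le_sum e1
      _ = _ := by simp
  · set X := 2 * (4 * α ^ 2 * √(α / z.1)) * ∑ j, |l j| ^ (q - 2) with hX
    have hX0 : 0 ≤ X := by positivity
    have e1 : ∀ b ∈ Finset.range q, (∑ a ∈ Finset.range b, (∑ i, B ^ a * dM (es i) (Bz μ) z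
        * B ^ (b - 1 - a) * dM (es i) (Bz μ) z) * B ^ (q - 1 - b)).trace ≤ b * X := by
      intro b hb
      have hb := Finset.mem_range.1 hb
      rw [Matrix.trace_sum]
      have e2 : ∀ a ∈ Finset.range b, ((∑ i, B ^ a * dM (es i) (Bz μ) z
          * B ^ (b - 1 - a) * dM (es i) (Bz μ) z) * B ^ (q - 1 - b)).trace ≤ X := by
        intro a ha
        have ha := Finset.mem_range.1 ha
        rw [Finset.sum_mul, Matrix.trace_sum]
        have := hD.trace_le Finset.univ (fun i => dM (es i) (Bz μ) z) (fun i => by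
          rw [hC.dM_Bz]; ext j k
          rw [Matrix.transpose_apply, Matrix.of_apply, Matrix.of_apply, (Th_symm z i k j).2])
          (Γ := 4 * α ^ 2 * √(α / z.1)) (fun e => by
            simp only [hC.dM_Bz, Matrix.of_apply]
            exact h.third ht hα0 (hD.Am_le hα) e) (q - 1 - b + a) (b - 1 - a)
        rw [show q - 1 - b + a + (b - 1 - a) = q - 2 by omega] at this
        refine le_trans (le_of_eq ?_) this
        refine Finset.sum_congr rfl fun i _ => ?_
        rw [Matrix.trace_mul_comm, pow_add]
        simp only [mul_assoc]
      calc _ ≤ ∑ a ∈ Finset.range b, X := Finset.sum_le_sum e2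
        _ = _ := by simp
    calc _ ≤ ∑ b ∈ Finset.range q, b * X := Finset.sum_le_sum e1
      _ = (∑ b ∈ Finset.range q, (b : ℝ)) * X := by rw [Finset.sum_mul]
      _ ≤ _ := mul_le_mul_of_nonneg_right (sum_range_le q) hX0

end Decay
end GaugeLog

namespace GaugeLog
open scoped ContDiff

section Decay2
variable {n : ℕ} {μ : Measure (E n)} {R M : ℝ} {p : E n → ℝ}

/-- The admissible initial deviation of the covariance from the identity. -/
def kap : ℝ := 1 / 3200

/-- The rate constant in the growth of the deviation functional. -/
def C1 : ℝ := 1 / kap + 64 / kap ^ 2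

/-- The regularized power sum. -/
def St (μ : Measure (E n)) (q : ℕ) (z : V n) : ℝ := Sq μ q z + n * kap ^ q

/-- A bounded functional with values in `[0, 1]`, which exceeds `1 / 2` as soon as some eigenvalue
of the covariance is not within `1 / 16` of `1`. -/
def Ph (μ : Measure (E n)) (q : ℕ) (z : V n) : ℝ :=
  1 - (1 / 16) ^ q * (St μ q z + (1 / 16) ^ q)⁻¹

lemma kap_pos : 0 < kap := by norm_num [kap]

lemma C1_pos : 0 < C1 := by have := kap_pos; rw [C1]; positivity

lemma Sq_eq {U : Matrix (Fin n) (Fin n) ℝ} {l : Fin n → ℝ} {z : V n}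
    (hD : Diag (Bz μ z) U l) {q : ℕ} (hev : Even q) : Sq μ q z = ∑ j, |l j| ^ q := by
  rw [Sq, hD.trace_pow]
  exact Finset.sum_congr rfl fun j _ => (hev.pow_abs _).symm

lemma St_nonneg {q : ℕ} (hev : Even q) (z : V n) : 0 ≤ St μ q z := by
  obtain ⟨U, l, hD⟩ := exists_diag (Bz_symm (μ := μ) z)
  have := kap_pos
  rw [St, Sq_eq hD hev]; positivity

lemma Ph_eq {q : ℕ} (hev : Even q) (z : V n) :
    Ph μ q z = St μ q z / (St μ q z + (1 / 16) ^ q) := by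
  have := St_nonneg (μ := μ) hev z
  have : 0 < St μ q z + (1 / 16) ^ q := by positivity
  rw [Ph]; field_simp; ring

lemma Ph_nonneg {q : ℕ} (hev : Even q) (z : V n) : 0 ≤ Ph μ q z := by
  rw [Ph_eq hev]
  have := St_nonneg (μ := μ) hev z
  positivity

lemma Ph_le_one {q : ℕ} (hev : Even q) (z : V n) : Ph μ q z ≤ 1 := by
  rw [Ph]
  have := St_nonneg (μ := μ) hev z
  have : 0 ≤ (1 / 16 : ℝ) ^ q * (St μ q z + (1 / 16) ^ q)⁻¹ := by positivity
  linarith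

lemma half_le_Ph {U : Matrix (Fin n) (Fin n) ℝ} {l : Fin n → ℝ} {z : V n}
    (hD : Diag (Bz μ z) U l) {q : ℕ} (hev : Even q) {k : Fin n} (hk : 1 / 16 ≤ |l k|) :
    1 / 2 ≤ Ph μ q z := by
  have h0 := St_nonneg (μ := μ) hev z
  have h1 : (1 / 16 : ℝ) ^ q ≤ St μ q z := by
    have := kap_pos
    have h2 : |l k| ^ q ≤ ∑ j, |l j| ^ q :=
      Finset.single_le_sum (f := fun j => |l j| ^ q) (fun j _ => by positivity) (Finset.mem_univ k)
    have h3 : (1 / 16 : ℝ) ^ q ≤ |l k| ^ q := by gcongr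
    have h4 : 0 ≤ (n : ℝ) * kap ^ q := by positivity
    rw [St, Sq_eq hD hev]; linarith
  rw [Ph_eq hev, div_le_div_iff₀ (by norm_num) (by positivity)]
  linarith

lemma Cmp.bs_St (h : Cmp μ R) (q : ℕ) : Bs (St μ q) := (h.bs_Sq q).add (Bs.const _)

lemma Cmp.bs_Ph (h : Cmp μ R) {q : ℕ} (hev : Even q) : Bs (Ph μ q) := by
  have h1 := (h.bs_St q).add (Bs.const ((1 / 16) ^ q))
  have h2 := (h1.inv (c := (1 / 16) ^ q) (by positivity) fun z => by
    have := St_nonneg (μ := μ) hev z; linarith).1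
  exact (Bs.const 1).sub ((Bs.const _).mul h2)

lemma Cmp.Gn_Ph (h : Cmp μ R) {q : ℕ} (hev : Even q) (z : V n) :
    Gn μ (Ph μ q) z ≤ (1 / 16) ^ q * Gn μ (Sq μ q) z / (St μ q z + (1 / 16) ^ q) ^ 2 := by
  set K : ℝ := (1 / 16) ^ q with hK
  have hKp : 0 < K := by positivity
  have h1 : Bs (fun z => St μ q z + K) := (h.bs_St q).add (Bs.const K)
  have hlow : ∀ z, K ≤ St μ q z + K := fun z => by
    have := St_nonneg (μ := μ) hev z; linarith
  obtain ⟨h2, h3⟩ := h1.inv hKp hlow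
  have hG : 0 < St μ q z + K := hKp.trans_le (hlow z)
  have hprod : (fun z => (St μ q z + K) * (St μ q z + K)⁻¹) = fun _ => 1 := by
    funext w; exact mul_inv_cancel₀ (hKp.trans_le (hlow w)).ne'
  have e1 := Gn_mul (μ := μ) h1.sm h2.sm z
  rw [hprod, Gn_const] at e1
  have hGS : Gn μ (fun z => St μ q z + K) z = Gn μ (Sq μ q) z := by
    rw [Gn_add (h.bs_St q).sm contDiff_const, Gn_const]
    change Gn μ (fun z => Sq μ q z + n * kap ^ q) z + 0 = _
    rw [Gn_add (h.bs_Sq q).sm contDiff_const, Gn_const]; ring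
  rw [hGS] at e1
  have e2 : ∑ i, dd (es i) (fun z => St μ q z + K) z * dd (es i) (fun z => (St μ q z + K)⁻¹) z ≤ 0 := by
    refine Finset.sum_nonpos fun i _ => ?_
    rw [h3]
    have : 0 ≤ (dd (es i) (fun z => St μ q z + K) z) ^ 2 * ((St μ q z + K)⁻¹ * (St μ q z + K)⁻¹) := by
      positivity
    nlinarith
  have e3 : Gn μ (Ph μ q) z = - (K * Gn μ (fun z => (St μ q z + K)⁻¹) z) := by
    have : Ph μ q = fun z => 1 - K * (St μ q z + K)⁻¹ := rfl
    rw [this, Gn_sub contDiff_const (contDiff_const.mul h2.sm), Gn_const, Gn_const_mul h2.sm]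
    ring
  rw [e3, le_div_iff₀ (by positivity)]
  set G := St μ q z + K
  set Y := Gn μ (fun z => (St μ q z + K)⁻¹) z
  have e4 : 0 ≤ G * Y + Gn μ (Sq μ q) z * G⁻¹ := by linarith
  have e5 : 0 ≤ (G * Y + Gn μ (Sq μ q) z * G⁻¹) * G := mul_nonneg e4 hG.le
  have e6 : (G * Y + Gn μ (Sq μ q) z * G⁻¹) * G = G ^ 2 * Y + Gn μ (Sq μ q) z := by
    field_simp
  rw [e6] at e5
  nlinarith [mul_nonneg hKp.le e5]

lemma pow_interp {x κ : ℝ} (hx : 0 ≤ x) (hκ : 0 < κ) (q j : ℕ) (hj : j ≤ q) :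
    x ^ (q - j) ≤ (x ^ q + κ ^ q) / κ ^ j := by
  rw [le_div_iff₀ (by positivity)]
  rcases le_total κ x with h | h
  · calc x ^ (q - j) * κ ^ j ≤ x ^ (q - j) * x ^ j := by gcongr
      _ = x ^ q := by rw [← pow_add, Nat.sub_add_cancel hj]
      _ ≤ _ := le_add_of_nonneg_right (by positivity)
  · calc x ^ (q - j) * κ ^ j ≤ κ ^ (q - j) * κ ^ j := by gcongr
      _ = κ ^ q := by rw [← pow_add, Nat.sub_add_cancel hj]
      _ ≤ _ := le_add_of_nonneg_left (by positivity)

lemma sum_interp {U : Matrix (Fin n) (Fin n) ℝ} {l : Fin n → ℝ} {z : V n}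
    (hD : Diag (Bz μ z) U l) {q : ℕ} (hev : Even q) (j : ℕ) (hj : j ≤ q) :
    ∑ k, |l k| ^ (q - j) ≤ St μ q z / kap ^ j := by
  calc _ ≤ ∑ k, (|l k| ^ q + kap ^ q) / kap ^ j :=
        Finset.sum_le_sum fun k _ => pow_interp (abs_nonneg _) kap_pos q j hj
    _ = _ := by
      rw [← Finset.sum_div, Finset.sum_add_distrib, St, Sq_eq hD hev]
      simp

/-- Differential inequality for the deviation functional. -/
lemma LCM.Gn_Ph_le (h : LCM μ R p M) {z : V n} (ht : 0 < z.1) (ht1 : z.1 ≤ 1) {q : ℕ} (hq : 4 ≤ q)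
    (hev : Even q) (hn : 0 < n) : Gn μ (Ph μ q) z ≤ C1 * q ^ 2 / √z.1 * Ph μ q z := by
  obtain ⟨U, l, hD⟩ := exists_diag (Bz_symm (μ := μ) z)
  have hκ := kap_pos
  obtain ⟨k, -, hk⟩ := Finset.exists_max_image Finset.univ (fun j => |l j|)
    ⟨⟨0, hn⟩, Finset.mem_univ _⟩
  set m := |l k| with hm
  have hm0 : 0 ≤ m := abs_nonneg _
  set α := 1 + m with hα
  have hα1 : 1 ≤ α := by linarith
  have hst : 0 < √z.1 := Real.sqrt_pos.2 ht
  have hst1 : √z.1 ≤ 1 := Real.sqrt_le_one.2 ht1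
  have hS0 := St_nonneg (μ := μ) hev z
  set S := St μ q z with hS
  have hmS : m ^ q ≤ S := by
    have h2 : |l k| ^ q ≤ ∑ j, |l j| ^ q :=
      Finset.single_le_sum (f := fun j => |l j| ^ q) (fun j _ => by positivity) (Finset.mem_univ k)
    have h4 : 0 ≤ (n : ℝ) * kap ^ q := by positivity
    rw [hS, St, Sq_eq hD hev]; linarith
  set K : ℝ := (1 / 16) ^ q with hK
  have hKp : 0 < K := by positivity
  have hK1 : K ≤ 1 := pow_le_one₀ (by norm_num) (by norm_num)
  have hG : 0 < S + K := by positivity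
  -- normalizing by `S + K` absorbs the factor `α³`, large only if some eigenvalue is
  have hKα : K * α ^ 3 ≤ 8 * (S + K) := by
    rcases le_total m 1 with h1 | h1
    · have : α ^ 3 ≤ 2 ^ 3 := by gcongr; linarith
      nlinarith
    · have h2 : α ^ 3 ≤ (2 * m) ^ 3 := by gcongr; linarith
      have h3 : m ^ 3 ≤ m ^ q := by gcongr; omega
      have h4 : (2 * m) ^ 3 = 8 * m ^ 3 := by ring
      have h5 : K * α ^ 3 ≤ 1 * α ^ 3 := by gcongr
      linarith
  have h1 := h.Gn_Sq_le ht hD (by omega : 2 ≤ q) hev (by linarith : 0 < α) fun j => by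
    have := (le_abs_self (l j)).trans (hk j (Finset.mem_univ j))
    linarith
  have h2 : √(α / z.1) ≤ α / √z.1 := by
    rw [Real.sqrt_div (by linarith)]
    gcongr
    rw [Real.sqrt_le_left (by linarith)]
    nlinarith
  have s1 := sum_interp hD hev 1 (by omega)
  have s2 := sum_interp hD hev 2 (by omega)
  have hq1 : (1 : ℝ) ≤ q := by exact_mod_cast (by omega : 1 ≤ q)
  have h3 : Gn μ (Sq μ q) z ≤ q ^ 2 / √z.1 * (S / kap + 8 * α ^ 3 * (S / kap ^ 2)) := by
    refine h1.trans ?_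
    rw [mul_add]
    refine add_le_add ?_ ?_
    · rw [pow_one] at s1
      refine mul_le_mul ?_ s1 (by positivity) (by positivity)
      rw [le_div_iff₀ hst]
      calc (q : ℝ) * √z.1 ≤ q * q := by gcongr; linarith
        _ = _ := by ring
    · calc (q : ℝ) ^ 2 * (2 * (4 * α ^ 2 * √(α / z.1)) * ∑ j, |l j| ^ (q - 2))
          ≤ (q : ℝ) ^ 2 * (2 * (4 * α ^ 2 * (α / √z.1)) * (S / kap ^ 2)) := by gcongr
        _ = _ := by ring
  refine (h.cmp.Gn_Ph hev z).trans ?_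
  rw [Ph_eq hev, ← hS, ← hK, div_le_iff₀ (by positivity)]
  have e1 : C1 * q ^ 2 / √z.1 * (S / (S + K)) * (S + K) ^ 2
      = q ^ 2 / √z.1 * (S * (1 / kap * (S + K)) + S / kap ^ 2 * (8 * (8 * (S + K)))) := by
    rw [C1]; field_simp; ring
  rw [e1]
  calc K * Gn μ (Sq μ q) z ≤ K * (q ^ 2 / √z.1 * (S / kap + 8 * α ^ 3 * (S / kap ^ 2))) := by gcongr
    _ = q ^ 2 / √z.1 * (S * (1 / kap * K) + S / kap ^ 2 * (8 * (K * α ^ 3))) := by ring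
    _ ≤ _ := by gcongr; linarith

lemma Bs.gn (h : Cmp μ R) {F : V n → ℝ} (hF : Bs F) : Bs (Gn μ F) := by
  have h1 := Bs.sum (F := fun i z => GaugeLog.dd (es i) (GaugeLog.dd (es i) F) z) Finset.univ
    fun i => (hF.dd (es i)).dd (es i)
  have h2 := Bs.sum (F := fun i z => av μ i z * GaugeLog.dd (es i) F z) Finset.univ
    fun i => (h.bs_av i).mul (hF.dd (es i))
  exact ((hF.dd e0).add ((Bs.const (1 / 2)).mul h1)).add h2

lemma Bs.sb {F : V n → ℝ} (hF : Bs F) : ∃ C, ∀ T, Sb T C F := by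
  obtain ⟨a, ha⟩ := (hF.bk 0).bdd
  obtain ⟨b, hb⟩ := ((hF.dd e0).bk 0).bdd
  choose c hc using fun i : Fin n => ((hF.dd (es i)).bk 0).bdd
  choose d hd using fun i : Fin n => (((hF.dd (es i)).dd (es i)).bk 0).bdd
  have hc' : ∀ i, |c i| ≤ ∑ j, |c j| := fun i =>
    Finset.single_le_sum (f := fun j => |c j|) (fun j _ => abs_nonneg _) (Finset.mem_univ i)
  have hd' : ∀ i, |d i| ≤ ∑ j, |d j| := fun i =>
    Finset.single_le_sum (f := fun j => |d j|) (fun j _ => abs_nonneg _) (Finset.mem_univ i)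
  have p1 : 0 ≤ ∑ j, |c j| := by positivity
  have p2 : 0 ≤ ∑ j, |d j| := by positivity
  refine ⟨|a| + |b| + (∑ i, |c i|) + ∑ i, |d i|, fun T => ⟨hF.sm, fun z _ _ => (ha z).trans ?_,
    fun z _ _ => (hb z).trans ?_, fun i z _ _ => (hc i z).trans ?_, fun i z _ _ => (hd i z).trans ?_⟩⟩
  · linarith [le_abs_self a, abs_nonneg b]
  · linarith [le_abs_self b, abs_nonneg a]
  · linarith [le_abs_self (c i), abs_nonneg a, abs_nonneg b, hc' i]
  · linarith [le_abs_self (d i), abs_nonneg a, abs_nonneg b, hd' i]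

lemma Cmp.Ex_mono (h : Cmp μ R) {F G : V n → ℝ} (hF : Continuous F) (hG : Continuous G) {t C D : ℝ}
    (hC : ∀ z : V n, z.1 = t → |F z| ≤ C) (hD : ∀ z : V n, z.1 = t → |G z| ≤ D)
    (hle : ∀ z : V n, z.1 = t → F z ≤ G z) : Ex μ t F ≤ Ex μ t G :=
  integral_mono (h.ex_integrable hF hC) (h.ex_integrable hG hD) fun _ => hle _ rfl

lemma Ex_const_mul (t c : ℝ) (F : V n → ℝ) : Ex μ t (fun z => c * F z) = c * Ex μ t F :=
  integral_const_mul _ _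

lemma Cmp.Ex_zero (h : Cmp μ R) (F : V n → ℝ) : Ex μ 0 F = F 0 := by
  have := h.prob
  have e : ∀ q : E n × E n, pt 0 q = 0 := fun _ => by simp [pt]
  rw [Ex]; simp only [e]; simp

/-- Grönwall: the deviation functional grows at most by the factor `exp (2 C₁ q² √t)`. -/
lemma LCM.Ph_growth (h : LCM μ R p M) {q : ℕ} (hq : 4 ≤ q) (hev : Even q) (hn : 0 < n) {t : ℝ}
    (ht0 : 0 ≤ t) (ht : t ≤ 1) : Ex μ t (Ph μ q) ≤ Ph μ q 0 * exp (2 * C1 * q ^ 2 * √t) := by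
  have hC := h.cmp
  obtain ⟨C, hb⟩ := (hC.bs_Ph hev).sb
  obtain ⟨a, ha⟩ := ((hC.bs_Ph hev).bk 0).bdd
  obtain ⟨b, hb'⟩ := (((hC.bs_Ph hev).gn hC).bk 0).bdd
  set c := 2 * C1 * (q : ℝ) ^ 2 with hc
  have hder : ∀ s ∈ interior (Set.Icc (0 : ℝ) 1), HasDerivAt
      (fun s => Ex μ s (Ph μ q) * exp (-(c * √s)))
      (Ex μ s (Gn μ (Ph μ q)) * exp (-(c * √s))
        + Ex μ s (Ph μ q) * (exp (-(c * √s)) * (-(c * (1 / (2 * √s)))))) s := by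
    intro s hs
    rw [interior_Icc] at hs
    have h1 := hC.kolm (hb 1) hs.1 hs.2
    have h2 := (((Real.hasDerivAt_sqrt hs.1.ne').const_mul c).fun_neg).exp
    exact h1.fun_mul h2
  have hanti : AntitoneOn (fun s => Ex μ s (Ph μ q) * exp (-(c * √s))) (Set.Icc 0 1) := by
    refine antitoneOn_of_deriv_nonpos (convex_Icc 0 1) ?_ ?_ ?_
    · exact (hC.cont_Ex (hb 1)).mul (by fun_prop)
    · exact fun s hs => (hder s hs).differentiableAt.differentiableWithinAt
    · intro s hs
      rw [(hder s hs).deriv]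
      rw [interior_Icc] at hs
      have hs0 : 0 < √s := Real.sqrt_pos.2 hs.1
      have h1 : Ex μ s (Gn μ (Ph μ q)) ≤ Ex μ s (fun z => C1 * q ^ 2 / √s * Ph μ q z) := by
        refine hC.Ex_mono ((hC.bs_Ph hev).gn hC).sm.continuous
          ((hC.bs_Ph hev).sm.continuous.const_mul _) (fun z _ => hb' z)
          (D := |C1 * q ^ 2 / √s| * a) (fun z _ => ?_) (fun z hz => ?_)
        · rw [abs_mul]; exact mul_le_mul_of_nonneg_left (ha z) (abs_nonneg _)
        · rw [← hz]
          exact h.Gn_Ph_le (by rw [hz]; exact hs.1) (by rw [hz]; exact hs.2.le) hq hev hn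
      rw [Ex_const_mul] at h1
      have h2 : 0 < exp (-(c * √s)) := exp_pos _
      have h3 : c * (1 / (2 * √s)) = C1 * q ^ 2 / √s := by rw [hc]; field_simp
      rw [h3]
      nlinarith
  have := hanti (Set.left_mem_Icc.2 zero_le_one) ⟨ht0, ht⟩ ht0
  simp only [Real.sqrt_zero, mul_zero, neg_zero, exp_zero, mul_one] at this
  rw [hC.Ex_zero, exp_neg, ← div_eq_mul_inv, div_le_iff₀ (exp_pos _)] at this
  exact this

end Decay2
end GaugeLog

namespace GaugeLog
open scoped ContDiff

section Decay3
variable {n : ℕ} {μ : Measure (E n)} {R M : ℝ} {p : E n → ℝ}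

/-- The untilted covariance is within `kap` of the identity. -/
def Near (μ : Measure (E n)) : Prop :=
  ∀ b : E n, |(∑ i, ∑ j, b i * b j * Am μ 0 i j) - ‖b‖ ^ 2| ≤ kap * ‖b‖ ^ 2

/-- The factor `1 / 200` is the ratio of `kap = 1 / 3200` to the threshold `1 / 16` in `Ph`. -/
lemma Near.Ph_zero (h : Near μ) {q : ℕ} (hev : Even q) : Ph μ q 0 ≤ 2 * n * (1 / 200) ^ q := by
  obtain ⟨U, l, hD⟩ := exists_diag (Bz_symm (μ := μ) 0)
  have hl : ∀ k, |l k| ≤ kap := by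
    intro k
    have h1 := h (WithLp.toLp 2 fun i => U i k)
    rw [EuclideanSpace.real_norm_sq_eq] at h1
    have h2 : ∑ i, (WithLp.toLp 2 (fun i => U i k) : E n) i ^ 2 = 1 := (hD.eig k).1
    have h3 := hD.quad_Am k
    have h4 : ∑ i, ∑ j, (WithLp.toLp 2 (fun i => U i k) : E n) i
      * (WithLp.toLp 2 (fun i => U i k) : E n) j * Am μ 0 i j = 1 + l k := h3
    rw [h2, h4, mul_one] at h1
    simpa using h1
  have hκ := kap_pos
  have h0 := St_nonneg (μ := μ) hev 0
  have hS : St μ q 0 ≤ 2 * n * kap ^ q := by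
    rw [St, Sq_eq hD hev]
    have : ∑ j, |l j| ^ q ≤ ∑ j : Fin n, kap ^ q := Finset.sum_le_sum fun j _ => by
      gcongr; exact hl j
    simp only [Finset.sum_const, Finset.card_univ, Fintype.card_fin, nsmul_eq_mul] at this
    linarith
  rw [Ph_eq hev]
  calc St μ q 0 / (St μ q 0 + (1 / 16) ^ q) ≤ St μ q 0 / (1 / 16) ^ q := by
        gcongr; linarith
    _ ≤ 2 * n * kap ^ q / (1 / 16) ^ q := by gcongr
    _ = _ := by
      rw [mul_div_assoc, ← div_pow]; norm_num [kap]

/-- Constant in the decay estimate. -/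
def C2 : ℝ := 48 * (4 * C1) ^ 4

lemma exp_five_le : exp 5 ≤ 200 := by
  have h := Real.exp_one_lt_d9
  have : exp 5 = exp 1 ^ 5 := by rw [← Real.exp_nat_mul]; norm_num
  rw [this]
  calc exp 1 ^ 5 ≤ 2.7182818286 ^ 5 := by gcongr
    _ ≤ 200 := by norm_num

/-- For small times the deviation functional of a suitable order is tiny on average. -/
lemma LCM.decay (h : LCM μ R p M) (hN : Near μ) (hn : 2 ≤ n) {s : ℝ} (hs : 0 < s)
    (hs1 : 16 * C1 * log (n + 1) * √s ≤ 1) :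
    ∃ q : ℕ, Even q ∧ Ex μ s (Ph μ q) ≤ 1 / 8 ∧ Ex μ s (Ph μ q) ≤ C2 * s ^ 2 := by
  have hC1 := C1_pos
  have hss : 0 < √s := Real.sqrt_pos.2 hs
  have hn' : (2 : ℝ) ≤ n := by exact_mod_cast hn
  have hlog1 : 1 ≤ log (n + 1) := by
    rw [Real.le_log_iff_exp_le (by linarith)]
    linarith [Real.exp_one_lt_d9]
  -- the even order `q` is between `y` and `2 y`, so that the growth exponent `2 C₁ q² √s` is at most `q`
  set y := 1 / (4 * C1 * √s) with hy
  have hyp : 0 < 4 * C1 * √s := by positivity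
  have hy4 : 4 * log (n + 1) ≤ y := by
    rw [hy, le_div_iff₀ hyp]; linarith
  have hy4' : 4 ≤ y := by linarith
  set k := ⌈y / 2⌉₊ with hk
  have hk1 : y / 2 ≤ k := Nat.le_ceil _
  have hk2 : (k : ℝ) < y / 2 + 1 := Nat.ceil_lt_add_one (by linarith)
  refine ⟨2 * k, even_two_mul k, ?_⟩
  have hev := even_two_mul k
  set q := 2 * k with hq
  have hqk : (q : ℝ) = 2 * k := by rw [hq]; push_cast; ring
  have hq1 : y ≤ q := by linarith
  have hq2 : (q : ℝ) ≤ 2 * y := by linarith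
  have hq4 : 4 ≤ q := by
    have : (4 : ℝ) ≤ q := by linarith
    exact_mod_cast this
  have hyy : y * (4 * C1 * √s) = 1 := by rw [hy]; field_simp
  have hgrow : 2 * C1 * (q : ℝ) ^ 2 * √s ≤ q := by
    have h1 : 2 * C1 * (q : ℝ) * √s ≤ 1 := by
      calc 2 * C1 * (q : ℝ) * √s ≤ 2 * C1 * (2 * y) * √s := by gcongr
        _ = 1 := by rw [← hyy]; ring
    have hq0 : (0 : ℝ) ≤ q := by linarith
    nlinarith
  have hs1' : s ≤ 1 := by
    have h3 : C1 ≥ 1 := by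
      have := kap_pos
      have h5 : 1 ≤ 1 / kap := by norm_num [kap]
      rw [C1]
      have : 0 < 64 / kap ^ 2 := by positivity
      linarith
    have : √s ≤ 1 := by
      have : 1 * √s ≤ 16 * C1 * log (n + 1) * √s := by
        gcongr
        nlinarith
      linarith
    exact Real.sqrt_le_one.1 this
  have hexp : Ex μ s (Ph μ q) ≤ 2 * exp (-(3 * q)) := by
    refine (h.Ph_growth hq4 hev (by omega) hs.le hs1').trans ?_
    have hn2 : (n : ℝ) ≤ exp q := by
      have : log (n + 1) ≤ q := by linarith
      have := (Real.log_le_iff_le_exp (by linarith)).1 this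
      linarith
    have h200 : (1 / 200 : ℝ) ^ q ≤ exp (-(5 * q)) := by
      have e : exp (-(5 * (q : ℝ))) = (exp 5)⁻¹ ^ q := by
        rw [inv_pow, ← Real.exp_nat_mul, Real.exp_neg, mul_comm]
      rw [e]
      have h5 := exp_five_le
      have : (0 : ℝ) < exp 5 := exp_pos 5
      gcongr
      rw [one_div]
      exact inv_anti₀ this h5
    calc Ph μ q 0 * exp (2 * C1 * q ^ 2 * √s)
        ≤ (2 * exp q * exp (-(5 * q))) * exp q := by
          refine mul_le_mul ((hN.Ph_zero hev).trans ?_) (exp_le_exp.2 hgrow) (exp_pos _).le (by positivity)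
          gcongr
      _ = 2 * exp (-(3 * q)) := by
          rw [mul_assoc, mul_assoc, ← exp_add, ← exp_add]; congr 2; ring
  have hq0 : (4 : ℝ) ≤ q := by linarith
  constructor
  · refine hexp.trans ?_
    have h1 : exp (-(3 * (q : ℝ))) ≤ exp (-12) := exp_le_exp.2 (by linarith)
    have h2 : (16 : ℝ) ≤ exp 12 := by
      have e : exp 12 = exp 1 ^ 12 := by rw [← Real.exp_nat_mul]; norm_num
      have h3 : (2 : ℝ) ≤ exp 1 := by linarith [Real.exp_one_gt_d9]
      rw [e]
      calc (16 : ℝ) ≤ 2 ^ 12 := by norm_num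
        _ ≤ _ := by gcongr
    have h3 : exp (-12) ≤ 1 / 16 := by
      rw [exp_neg, one_div]; exact inv_anti₀ (by norm_num) h2
    linarith
  · refine hexp.trans ?_
    have hq0' : (0 : ℝ) < q := by linarith
    have h1 : exp (-(3 * (q : ℝ))) ≤ exp (-(q : ℝ)) := exp_le_exp.2 (by linarith)
    have h2 : (q : ℝ) ^ 4 / 24 ≤ exp q := by
      have := Real.pow_div_factorial_le_exp (q : ℝ) hq0'.le 4
      norm_num [Nat.factorial] at this
      exact this
    have h3 : exp (-(q : ℝ)) ≤ 24 / (q : ℝ) ^ 4 := by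
      rw [exp_neg, ← one_div_div]
      rw [one_div]
      exact inv_anti₀ (by positivity) h2
    have h4 : 1 / (q : ℝ) ^ 4 ≤ (4 * C1) ^ 4 * s ^ 2 := by
      have h5 : 1 / (q : ℝ) ≤ 4 * C1 * √s := by
        rw [div_le_iff₀ hq0']
        calc (1 : ℝ) = 4 * C1 * √s * y := by rw [← hyy]; ring
          _ ≤ _ := by gcongr
      calc 1 / (q : ℝ) ^ 4 = (1 / (q : ℝ)) ^ 4 := by rw [div_pow, one_pow]
        _ ≤ (4 * C1 * √s) ^ 4 := by gcongr
        _ = (4 * C1) ^ 4 * (√s ^ 2) ^ 2 := by ring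
        _ = _ := by rw [Real.sq_sqrt hs.le]
    calc 2 * exp (-(3 * (q : ℝ))) ≤ 2 * (24 / (q : ℝ) ^ 4) := by linarith
      _ = 48 * (1 / (q : ℝ) ^ 4) := by ring
      _ ≤ 48 * ((4 * C1) ^ 4 * s ^ 2) := by gcongr
      _ = _ := by rw [C2]; ring

/-- Comparison of `Tr (A² H)` with `Tr H` through the eigenvalues of the covariance `A`. -/
lemma Diag.trace_sq {U : Matrix (Fin n) (Fin n) ℝ} {l : Fin n → ℝ} {z : V n}
    (hD : Diag (Bz μ z) U l) (H : Fin n → Fin n → ℝ) :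
    ∑ i, ∑ j, H i j * (Am μ z * Am μ z) i j
      = ∑ k, (1 + l k) ^ 2 * ∑ i, ∑ j, H i j * U i k * U j k ∧
    ∑ i, H i i = ∑ k, ∑ i, ∑ j, H i j * U i k * U j k := by
  have key : ∀ (C : Matrix (Fin n) (Fin n) ℝ) (m : Fin n → ℝ), Diag C U m →
      ∑ i, ∑ j, H i j * C i j = ∑ k, m k * ∑ i, ∑ j, H i j * U i k * U j k := by
    intro C m hC
    have e : ∀ i j, C i j = ∑ k, m k * U i k * U j k := by
      intro i j
      conv_lhs => rw [hC.eq]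
      rw [Matrix.mul_apply]
      exact Finset.sum_congr rfl fun k _ => by rw [Matrix.mul_diagonal, Matrix.transpose_apply]; ring
    simp only [e, Finset.mul_sum]
    calc _ = ∑ i, ∑ k, ∑ j, H i j * (m k * U i k * U j k) :=
          Finset.sum_congr rfl fun j _ => Finset.sum_comm
      _ = ∑ k, ∑ i, ∑ j, H i j * (m k * U i k * U j k) := Finset.sum_comm
      _ = _ := Finset.sum_congr rfl fun k _ => Finset.sum_congr rfl fun j _ =>
          Finset.sum_congr rfl fun i _ => by ring
  have h1 : Diag (1 : Matrix (Fin n) (Fin n) ℝ) U (fun _ => 1) :=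
    ⟨hD.o1, hD.o2, by rw [Matrix.diagonal_one, Matrix.mul_one, hD.o2]⟩
  have h2 : Diag (Am μ z) U (fun k => 1 + l k) := by
    refine ⟨hD.o1, hD.o2, ?_⟩
    have : Am μ z = 1 + Bz μ z := by rw [Bz]; abel
    rw [this, hD.eq, ← Matrix.diagonal_add, Matrix.diagonal_one, mul_add, add_mul, mul_one, hD.o2]
  have h3 : Diag (Am μ z * Am μ z) U (fun k => (1 + l k) ^ 2) :=
    ⟨hD.o1, hD.o2, by rw [← sq, h2.pow 2]⟩
  refine ⟨key _ _ h3, ?_⟩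
  have := key _ _ h1
  simp only [one_mul] at this
  rw [← this]
  refine Finset.sum_congr rfl fun i _ => ?_
  rw [Finset.sum_eq_single i (by intro j _ hj; simp [Matrix.one_apply_ne' hj]) (by simp)]
  simp

/-- Comparison of `Tr (H A²)` with `Tr H`. The eigenvalues of `A` are close to `1` unless
`Ph` is at least `1 / 2`, and they are at most `1 / t` in any case. -/
lemma LCM.trace_bounds (h : LCM μ R p M) {z : V n} (ht : 0 < z.1) {q : ℕ} (hev : Even q)
    {H : Fin n → Fin n → ℝ} (hH : ∀ b : E n, 0 ≤ ∑ i, ∑ j, H i j * b i * b j) :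
    (1 / 4 - 1 / 2 * Ph μ q z) * ∑ i, H i i ≤ ∑ i, ∑ j, H i j * (Am μ z * Am μ z) i j ∧
    ∑ i, ∑ j, H i j * (Am μ z * Am μ z) i j ≤ (2 + 2 * Ph μ q z / z.1 ^ 2) * ∑ i, H i i := by
  obtain ⟨U, l, hD⟩ := exists_diag (Bz_symm (μ := μ) z)
  obtain ⟨e1, e2⟩ := hD.trace_sq H
  have hk : ∀ k, 0 ≤ ∑ i, ∑ j, H i j * U i k * U j k := fun k =>
    hH (WithLp.toLp 2 fun i => U i k)
  have hP := Ph_nonneg (μ := μ) hev z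
  have hb : ∀ k, 1 / 4 - 1 / 2 * Ph μ q z ≤ (1 + l k) ^ 2 ∧
      (1 + l k) ^ 2 ≤ 2 + 2 * Ph μ q z / z.1 ^ 2 := by
    intro k
    have hp : 0 ≤ 2 * Ph μ q z / z.1 ^ 2 := by positivity
    by_cases hl : 1 / 16 ≤ |l k|
    · have h1 := half_le_Ph hD hev hl
      refine ⟨by nlinarith [sq_nonneg (1 + l k)], ?_⟩
      have h2 := h.eig_le ht hD k
      have h3 := h.cmp.eig_nonneg hD k
      calc (1 + l k) ^ 2 ≤ (1 / z.1) ^ 2 := by gcongr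
        _ = 1 / z.1 ^ 2 := by rw [div_pow, one_pow]
        _ ≤ 2 * Ph μ q z / z.1 ^ 2 := by gcongr; linarith
        _ ≤ _ := by linarith
    · rw [not_le, abs_lt] at hl
      constructor <;> nlinarith
  rw [e1, e2, Finset.mul_sum, Finset.mul_sum]
  exact ⟨Finset.sum_le_sum fun k _ => mul_le_mul_of_nonneg_right (hb k).1 (hk k),
    Finset.sum_le_sum fun k _ => mul_le_mul_of_nonneg_right (hb k).2 (hk k)⟩

end Decay3
end GaugeLog

namespace GaugeLog
open scoped ContDiff

/-! ### Gauges and their smooth approximants -/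

section Smo
variable {n : ℕ} {f : E n → ℝ}

lemma gauge_cont (hf : IsGauge f) : Continuous f := hf.2.1.locallyLipschitz.continuous

lemma gauge_add (hf : IsGauge f) (x y : E n) : f (x + y) ≤ f x + f y := by
  have h := hf.2.1.2 (Set.mem_univ x) (Set.mem_univ y)
    (show (0 : ℝ) ≤ 1 / 2 by norm_num) (show (0 : ℝ) ≤ 1 / 2 by norm_num) (by norm_num)
  rw [← smul_add, hf.2.2 _ (by norm_num)] at h
  simp only [smul_eq_mul] at h
  linarith

lemma gauge_zero (hf : IsGauge f) : f 0 = 0 := by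
  have := hf.2.2 0 le_rfl 0
  simpa using this

lemma gauge_sum (hf : IsGauge f) {ι : Type*} (s : Finset ι) (v : ι → E n) :
    f (∑ i ∈ s, v i) ≤ ∑ i ∈ s, f (v i) := by
  classical
  induction s using Finset.induction_on with
  | empty => simp [gauge_zero hf]
  | insert a s ha ih =>
    rw [Finset.sum_insert ha, Finset.sum_insert ha]
    linarith [gauge_add hf (v a) (∑ i ∈ s, v i)]

/-- A linear bound for a gauge. -/
lemma gauge_le (hf : IsGauge f) : ∃ L, 0 ≤ L ∧ ∀ x, f x ≤ L * ‖x‖ := by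
  refine ⟨∑ i, (f (ei i) + f (-ei i)), Finset.sum_nonneg fun i _ => add_nonneg (hf.1 _) (hf.1 _),
    fun x => ?_⟩
  conv_lhs => rw [eq_sum_ei x]
  refine (gauge_sum hf _ _).trans ?_
  rw [Finset.sum_mul]
  refine Finset.sum_le_sum fun i _ => ?_
  have hx := abs_coord_le x i
  have p1 := hf.1 (ei i)
  have p2 := hf.1 (-ei i)
  rcases le_total 0 (x i) with h | h
  · rw [hf.2.2 _ h]
    rw [abs_of_nonneg h] at hx
    nlinarith [norm_nonneg x]
  · have : x i • (ei i : E n) = (-x i) • (-ei i) := by simp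
    rw [this, hf.2.2 _ (by linarith)]
    rw [abs_of_nonpos h] at hx
    nlinarith [norm_nonneg x]

lemma gauge_lip (hf : IsGauge f) {L : ℝ} (hL : ∀ x, f x ≤ L * ‖x‖) (x y : E n) :
    |f x - f y| ≤ L * ‖x - y‖ := by
  rw [abs_le]
  have h1 := gauge_add hf y (x - y)
  have h2 := gauge_add hf x (y - x)
  rw [add_sub_cancel] at h1 h2
  have h3 := hL (x - y)
  have h4 := hL (y - x)
  rw [norm_sub_rev] at h4
  constructor <;> linarith

/-- `w` is a smooth convex approximant, within `δ`, of the gauge `f`, with directional derivatives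
dominated by `f` and with bounded first and second derivatives. -/
structure Gm (f w : E n → ℝ) (L D δ : ℝ) : Prop where
  gauge : IsGauge f
  lin : ∀ x, f x ≤ L * ‖x‖
  L0 : 0 ≤ L
  D0 : 0 ≤ D
  sm : Sm w
  cvx : ConvexOn ℝ Set.univ w
  grad : ∀ h x, dd h w x ≤ f h
  near : ∀ x, |w x - f x| ≤ δ
  g1 : ∀ i x, |dd (ei i) w x| ≤ L
  g2 : ∀ i j x, |dd (ei i) (dd (ei j) w) x| ≤ D

lemma integral_dd_zero {φ : E n → ℝ} (h : Sm φ) (hc : HasCompactSupport φ) (v : E n) :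
    ∫ x, dd v φ x = 0 := by
  have := dd_cv (g := fun _ : E n => (1 : ℝ)) (locallyIntegrable_const 1) h hc v
  have h1 : cv (fun _ : E n => (1 : ℝ)) φ = fun _ => ∫ y, φ y := by
    funext x; rw [cv_eq']; simp
  rw [h1, dd_const] at this
  have h2 := congrFun this 0
  rw [cv_eq'] at h2
  simpa using h2.symm

lemma dd_neg_dir (F : E n → ℝ) (v x : E n) : dd (-v) F x = -dd v F x := by
  simp [dd]

/-- Mollification at a scale small compared with the Lipschitz constant of the gauge. -/
lemma gauge_smooth (hf : IsGauge f) {δ : ℝ} (hδ : 0 < δ) : ∃ w L D, Gm f w L D δ := by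
  obtain ⟨L, hL0, hL⟩ := gauge_le hf
  have hc := gauge_cont hf
  have hli : LocallyIntegrable f := hc.locallyIntegrable
  have hε : 0 < δ / (L + 1) := by positivity
  set M := moll n (δ / (L + 1)) hε
  have hw := sm_cv hli M.sm M.cs
  have hcv := convex_cv hf.2.1 hc M
  have hgr : ∀ h x, dd h (cv f M.φ) x ≤ f h := by
    intro h x
    have h1 := convex_grad hw hcv x h
    have hi : ∀ x : E n, Integrable fun y => f (x - y) * M.φ y := fun x =>
      ((hc.comp (continuous_const.sub continuous_id)).mul
        M.sm.continuous).integrable_of_hasCompactSupport M.cs.mul_left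
    have h2 : cv f M.φ (x + h) ≤ cv f M.φ x + f h := by
      have hi2 : Integrable M.φ := M.sm.continuous.integrable_of_hasCompactSupport M.cs
      have e : f h = ∫ y, f h * M.φ y := by rw [integral_const_mul, M.mass, mul_one]
      rw [cv_eq', cv_eq', e, ← integral_add (hi x) (hi2.const_mul _)]
      refine integral_mono (hi _) ((hi x).add (hi2.const_mul _)) fun y => ?_
      have := gauge_add hf (x - y) h
      have e2 : x + h - y = x - y + h := by abel
      simp only [e2]
      nlinarith [M.nonneg y]
    linarith
  have hS : 0 ≤ ∑ i, (f (ei i) + f (-ei i)) :=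
    Finset.sum_nonneg fun i _ => add_nonneg (hf.1 _) (hf.1 _)
  refine ⟨cv f M.φ, L + ∑ i, (f (ei i) + f (-ei i)),
    ∑ i, ∑ j, ∫ y, L * ‖y‖ * |dd (ei i) (dd (ei j) M.φ) y|, hf,
    fun x => (hL x).trans (by nlinarith [norm_nonneg x]), by positivity,
    Finset.sum_nonneg fun i _ => Finset.sum_nonneg fun j _ => integral_nonneg fun y => by positivity,
    hw, hcv, hgr, ?_, ?_, ?_⟩
  · intro x
    refine M.abs_cv_sub_le hli x fun y hy => ?_
    refine (gauge_lip hf hL y x).trans ?_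
    rw [norm_sub_rev]
    rw [le_div_iff₀ (by positivity)] at hy
    nlinarith [norm_nonneg (x - y)]
  · intro i x
    have h1 := hgr (ei i) x
    have h2 := hgr (-ei i) x
    rw [dd_neg_dir] at h2
    have h3 : f (ei i) + f (-ei i) ≤ ∑ i, (f (ei i) + f (-ei i)) :=
      Finset.single_le_sum (f := fun i => f (ei i) + f (-ei i))
        (fun i _ => add_nonneg (hf.1 _) (hf.1 _)) (Finset.mem_univ i)
    rw [abs_le]
    constructor <;> linarith [hf.1 (ei i), hf.1 (-ei i)]
  · intro i j x
    have hs1 := M.sm.dd (ei j)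
    have hc1 := dd_hasCompactSupport M.cs (ei j)
    set ψ := dd (ei i) (dd (ei j) M.φ) with hψ
    have hs2 : Sm ψ := hs1.dd (ei i)
    have hc2 : HasCompactSupport ψ := dd_hasCompactSupport hc1 (ei i)
    rw [dd_cv hli M.sm M.cs, dd_cv hli hs1 hc1, ← hψ]
    have e0 : ∫ y, ψ y = 0 := integral_dd_zero hs1 hc1 (ei i)
    have i1 : Integrable fun y => f (x - y) * ψ y :=
      ((hc.comp (continuous_const.sub continuous_id)).mul
        hs2.continuous).integrable_of_hasCompactSupport hc2.mul_left
    have i2 : Integrable ψ := hs2.continuous.integrable_of_hasCompactSupport hc2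
    have e : cv f ψ x = ∫ y, (f (x - y) - f x) * ψ y := by
      simp_rw [sub_mul]
      rw [integral_sub i1 (i2.const_mul _), integral_const_mul, e0, cv_eq']; ring
    have i3 : Integrable fun y => L * ‖y‖ * |ψ y| := by
      refine Continuous.integrable_of_hasCompactSupport ?_ ?_
      · have := hs2.continuous; fun_prop
      · exact hc2.abs.mul_left
    have hb : |cv f ψ x| ≤ ∫ y, L * ‖y‖ * |ψ y| := by
      rw [e, ← Real.norm_eq_abs]
      refine norm_integral_le_of_norm_le i3 (Filter.Eventually.of_forall fun y => ?_)
      rw [norm_mul, Real.norm_eq_abs, Real.norm_eq_abs]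
      refine mul_le_mul_of_nonneg_right ?_ (abs_nonneg _)
      have := gauge_lip hf hL (x - y) x
      simpa using this
    refine hb.trans ?_
    have hn : ∀ i j, 0 ≤ ∫ y, L * ‖y‖ * |dd (ei i) (dd (ei j) M.φ) y| := fun i j =>
      integral_nonneg fun y => by positivity
    refine le_trans ?_ (Finset.single_le_sum
      (f := fun i => ∑ j, ∫ y, L * ‖y‖ * |dd (ei i) (dd (ei j) M.φ) y|)
        (fun i _ => Finset.sum_nonneg fun j _ => hn i j) (Finset.mem_univ i))
    exact Finset.single_le_sum (f := fun j => ∫ y, L * ‖y‖ * |dd (ei i) (dd (ei j) M.φ) y|)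
        (fun j _ => hn i j) (Finset.mem_univ j)

end Smo
end GaugeLog

namespace GaugeLog
open scoped ContDiff

/-! ### The generator applied to a convex function of the barycenter -/

section Chain
variable {n : ℕ} {μ : Measure (E n)} {R : ℝ} {f w : E n → ℝ} {L D δ : ℝ}

/-- The vector with coordinate functions `y`. -/
def vc (y : Fin n → V n → ℝ) (z : V n) : E n := WithLp.toLp 2 fun j => y j z

lemma sm_vc {y : Fin n → V n → ℝ} (hy : ∀ j, Sm (y j)) : ContDiff ℝ ∞ (vc y) :=
  contDiff_euclidean.2 fun j => hy j

lemma sm_comp_vc (hw : Sm w) {y : Fin n → V n → ℝ} (hy : ∀ j, Sm (y j)) :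
    Sm fun z => w (vc y z) := ContDiff.comp hw (sm_vc hy)

lemma dd_comp_vc (hw : Sm w) {y : Fin n → V n → ℝ} (hy : ∀ j, Sm (y j)) (v : V n) :
    dd v (fun z => w (vc y z)) = fun z => ∑ j, dd (ei j) w (vc y z) * dd v (y j) z := by
  funext z
  have h1 : HasFDerivAt (vc y) (fderiv ℝ (vc y) z) z :=
    ((sm_vc hy).differentiable (by simp) z).hasFDerivAt
  have h2 := (hw.differentiable (vc y z)).hasFDerivAt.comp z h1
  have h3 : dd v (fun z => w (vc y z)) z = dd (fderiv ℝ (vc y) z v) w (vc y z) := by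
    rw [dd, dd]
    have := h2.fderiv
    change (fderiv ℝ (w ∘ vc y) z) v = _
    rw [this]; rfl
  rw [h3, dd_eq_sum]
  refine Finset.sum_congr rfl fun j _ => ?_
  have h4 := ((EuclideanSpace.proj (𝕜 := ℝ) j).hasFDerivAt.comp z h1).fderiv
  have h5 : dd v (y j) z = (fderiv ℝ (vc y) z v) j := by
    rw [dd]
    change (fderiv ℝ (EuclideanSpace.proj (𝕜 := ℝ) j ∘ vc y) z) v = _
    rw [h4]; rfl
  rw [h5]; ring

/-- The coordinates of the point `a + (r₀ + r₁ t) g`, where `a` is the barycenter of the tilted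
measure. -/
def yv (μ : Measure (E n)) (r0 r1 : ℝ) (g : E n) (j : Fin n) (z : V n) : ℝ :=
  av μ j z + (r0 + r1 * z.1) * g j

lemma sm_time (r0 r1 c : ℝ) : Sm fun z : V n => (r0 + r1 * z.1) * c := by
  unfold Sm; fun_prop

lemma Cmp.sm_yv (h : Cmp μ R) (r0 r1 : ℝ) (g : E n) (j : Fin n) : Sm (yv μ r0 r1 g j) :=
  ContDiff.add (h.bs_av j).sm (sm_time r0 r1 (g j))

lemma Cmp.dd_yv (h : Cmp μ R) (r0 r1 : ℝ) (g : E n) (j : Fin n) (v : V n) :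
    dd v (yv μ r0 r1 g j) = fun z => dd v (av μ j) z + r1 * v.1 * g j := by
  have := dd_add (h.bs_av j).sm (sm_time (n := n) r0 r1 (g j)) v
  change dd v (fun z => av μ j z + (r0 + r1 * z.1) * g j) = _
  rw [this]
  funext z
  congr 1
  have h1 : HasFDerivAt (fun z : V n => (r0 + r1 * z.1) * g j)
      ((g j * r1) • ContinuousLinearMap.fst ℝ ℝ (E n)) z := by
    have := (((ContinuousLinearMap.fst ℝ ℝ (E n)).hasFDerivAt (x := z)).const_mul r1).const_add r0
    have := this.mul_const (g j)
    rw [smul_smul] at this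
    exact this
  rw [dd, h1.fderiv]
  simp; ring

/-- The function `z ↦ w (a(z) + (r₀ + r₁ t) g)`. -/
def Fw (μ : Measure (E n)) (w : E n → ℝ) (r0 r1 : ℝ) (g : E n) (z : V n) : ℝ :=
  w (vc (yv μ r0 r1 g) z)

/-- The quadratic form appearing in the generator: `Tr (A² D²w)`. -/
def Tw (μ : Measure (E n)) (w : E n → ℝ) (r0 r1 : ℝ) (g : E n) (z : V n) : ℝ :=
  ∑ i, ∑ j, dd (ei i) (dd (ei j) w) (vc (yv μ r0 r1 g) z) * (Am μ z * Am μ z) i j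

lemma Cmp.sm_Fw (h : Cmp μ R) (hw : Sm w) (r0 r1 : ℝ) (g : E n) : Sm (Fw μ w r0 r1 g) :=
  sm_comp_vc hw (h.sm_yv r0 r1 g)

lemma Cmp.dd0_Fw (h : Cmp μ R) (hw : Sm w) (r0 r1 : ℝ) (g : E n) :
    dd e0 (Fw μ w r0 r1 g) = fun z => ∑ j, dd (ei j) w (vc (yv μ r0 r1 g) z) *
      (dd e0 (av μ j) z + r1 * g j) := by
  have := dd_comp_vc hw (h.sm_yv r0 r1 g) e0
  unfold Fw
  rw [this]
  simp only [h.dd_yv, e0, mul_one]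

lemma Cmp.dd1_Fw (h : Cmp μ R) (hw : Sm w) (r0 r1 : ℝ) (g : E n) (i : Fin n) :
    dd (es i) (Fw μ w r0 r1 g) = fun z => ∑ j, dd (ei j) w (vc (yv μ r0 r1 g) z) * Am μ z i j := by
  have := dd_comp_vc hw (h.sm_yv r0 r1 g) (es i)
  unfold Fw
  rw [this]
  funext z
  refine Finset.sum_congr rfl fun j _ => ?_
  rw [h.dd_yv, h.dd_av]
  simp [es]

lemma Cmp.dd2_Fw (h : Cmp μ R) (hw : Sm w) (r0 r1 : ℝ) (g : E n) (i : Fin n) :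
    dd (es i) (dd (es i) (Fw μ w r0 r1 g)) = fun z => ∑ j,
      ((∑ k, dd (ei k) (dd (ei j) w) (vc (yv μ r0 r1 g) z) * Am μ z i k) * Am μ z i j
        + dd (ei j) w (vc (yv μ r0 r1 g) z) * dd (es i) (dd (es i) (av μ j)) z) := by
  rw [h.dd1_Fw hw]
  have hs : ∀ j, Sm fun z => dd (ei j) w (vc (yv μ r0 r1 g) z) := fun j =>
    sm_comp_vc (hw.dd _) (h.sm_yv r0 r1 g)
  have h1 := dd_sum Finset.univ (F := fun j z => dd (ei j) w (vc (yv μ r0 r1 g) z) * Am μ z i j)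
    (fun j => (hs j).mul (h.bs_Am i j).sm) (es i)
  rw [h1]
  funext z
  refine Finset.sum_congr rfl fun j _ => ?_
  have h2 := congrFun (dd_mul (hs j) (h.bs_Am i j).sm (es i)) z
  rw [h2]
  have h3 := congrFun (h.dd1_Fw (hw.dd (ei j)) r0 r1 g i) z
  have h4 : dd (es i) (fun z => dd (ei j) w (vc (yv μ r0 r1 g) z)) z
    = ∑ k, dd (ei k) (dd (ei j) w) (vc (yv μ r0 r1 g) z) * Am μ z i k := h3
  rw [h.dd_av]
  change dd (es i) (fun z => dd (ei j) w (vc (yv μ r0 r1 g) z)) z * _ + _ = _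
  rw [h4]

/-- The barycenter is a martingale, so only the second-order term and the explicit time dependence
of the Gaussian scale survive. -/
lemma Cmp.Gn_Fw (h : Cmp μ R) (hw : Sm w) (r0 r1 : ℝ) (g : E n) (z : V n) :
    Gn μ (Fw μ w r0 r1 g) z = 1 / 2 * Tw μ w r0 r1 g z
      + r1 * ∑ j, g j * dd (ei j) w (vc (yv μ r0 r1 g) z) := by
  have h0 : ∀ j, dd e0 (av μ j) z + 1 / 2 * ∑ i, dd (es i) (dd (es i) (av μ j)) z
      + ∑ i, av μ i z * Am μ z i j = 0 := fun j => by
    have := h.Gn_mt (coord_cont j) z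
    rw [Gn] at this
    have e : ∀ i, dd (es i) (av μ j) z = Am μ z i j := fun i => by rw [h.dd_av]
    rw [← this]
    simp only [← e]; rfl
  rw [Gn, h.dd0_Fw hw]
  simp only [h.dd1_Fw hw r0 r1 g]
  have h2 : ∀ i, dd (es i) (fun z => ∑ j, dd (ei j) w (vc (yv μ r0 r1 g) z) * Am μ z i j) z = ∑ j,
      ((∑ k, dd (ei k) (dd (ei j) w) (vc (yv μ r0 r1 g) z) * Am μ z i k) * Am μ z i j
        + dd (ei j) w (vc (yv μ r0 r1 g) z) * dd (es i) (dd (es i) (av μ j)) z) := fun i => by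
    rw [← h.dd1_Fw hw r0 r1 g i, h.dd2_Fw hw]
  simp only [h2, Tw, Finset.sum_add_distrib]
  set W := fun j => dd (ei j) w (vc (yv μ r0 r1 g) z)
  have t1 : ∑ i, ∑ j, (∑ k, dd (ei k) (dd (ei j) w) (vc (yv μ r0 r1 g) z) * Am μ z i k) * Am μ z i j
      = ∑ i, ∑ j, dd (ei i) (dd (ei j) w) (vc (yv μ r0 r1 g) z) * (Am μ z * Am μ z) i j := by
    simp only [Matrix.mul_apply, Finset.mul_sum, Finset.sum_mul]
    rw [Finset.sum_comm]
    conv_rhs => rw [Finset.sum_comm]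
    refine Finset.sum_congr rfl fun j _ => ?_
    rw [Finset.sum_comm]
    refine Finset.sum_congr rfl fun k _ => Finset.sum_congr rfl fun i _ => ?_
    rw [Am_symm z i k]; ring
  rw [t1]
  have t2 : ∑ i, ∑ j, dd (ei j) w (vc (yv μ r0 r1 g) z) * dd (es i) (dd (es i) (av μ j)) z
      = ∑ j, W j * ∑ i, dd (es i) (dd (es i) (av μ j)) z := by
    rw [Finset.sum_comm]
    simp only [Finset.mul_sum, W]
  have t3 : ∑ i, av μ i z * ∑ j, dd (ei j) w (vc (yv μ r0 r1 g) z) * Am μ z i j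
      = ∑ j, W j * ∑ i, av μ i z * Am μ z i j := by
    simp only [Finset.mul_sum, W]
    rw [Finset.sum_comm]
    refine Finset.sum_congr rfl fun j _ => Finset.sum_congr rfl fun i _ => by ring
  rw [t2, t3]
  have t4 : ∑ j, W j * (dd e0 (av μ j) z + r1 * g j) = ∑ j, W j * (-(1 / 2 * ∑ i,
      dd (es i) (dd (es i) (av μ j)) z) - ∑ i, av μ i z * Am μ z i j) + r1 * ∑ j, g j * W j := by
    rw [Finset.mul_sum, ← Finset.sum_add_distrib]
    refine Finset.sum_congr rfl fun j _ => ?_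
    have := h0 j
    linear_combination W j * this
  rw [t4]
  simp only [mul_sub, Finset.sum_sub_distrib, mul_neg, Finset.sum_neg_distrib]
  have t5 : ∑ j, W j * (1 / 2 * ∑ i, dd (es i) (dd (es i) (av μ j)) z)
    = 1 / 2 * ∑ j, W j * ∑ i, dd (es i) (dd (es i) (av μ j)) z := by
    rw [Finset.mul_sum]; refine Finset.sum_congr rfl fun j _ => by ring
  rw [t5]; ring

end Chain
end GaugeLog

namespace GaugeLog
open scoped ContDiff

/-! ### The interpolation along the tilt process -/

section Jf
variable {n : ℕ} {μ : Measure (E n)} {R : ℝ} {f w : E n → ℝ} {L D δ : ℝ}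

lemma Bs.unif {ι : Type*} [Fintype ι] {F : ι → V n → ℝ} (h : ∀ i, Bs (F i)) :
    ∃ B, 0 ≤ B ∧ ∀ i z, |F i z| ≤ B := by
  choose C hC using fun i => ((h i).bk 0).bdd
  refine ⟨∑ i, |C i|, Finset.sum_nonneg fun _ _ => abs_nonneg _, fun i z => ?_⟩
  exact ((hC i z).trans (le_abs_self _)).trans
    (Finset.single_le_sum (f := fun i => |C i|) (fun i _ => abs_nonneg _) (Finset.mem_univ i))

lemma abs_sum_le {F : Fin n → ℝ} {c : ℝ} (h : ∀ j, |F j| ≤ c) : |∑ j, F j| ≤ n * c := by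
  refine (Finset.abs_sum_le_sum_abs _ _).trans ?_
  refine (Finset.sum_le_sum fun j _ => h j).trans ?_
  simp

lemma norm_le_sum (x : E n) : ‖x‖ ≤ ∑ j, |x j| := by
  conv_lhs => rw [eq_sum_ei x]
  refine (norm_sum_le _ _).trans (Finset.sum_le_sum fun j _ => ?_)
  rw [norm_smul]; simp [ei]

lemma abs_mul_le {a b A B : ℝ} (ha : |a| ≤ A) (hb : |b| ≤ B) : |a * b| ≤ A * B := by
  rw [abs_mul]; exact mul_le_mul ha hb (abs_nonneg _) ((abs_nonneg _).trans ha)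

lemma Gm.abs_bound (hw : Gm f w L D δ) (x : E n) : |w x| ≤ δ + L * ‖x‖ := by
  have h1 := abs_le.1 (hw.near x)
  have h2 := hw.gauge.1 x
  have h3 := hw.lin x
  rw [abs_le]; constructor <;> linarith [hw.L0, mul_nonneg hw.L0 (norm_nonneg x)]

/-- Uniform bounds, with explicit dependence on the Gaussian vector `g`. -/
lemma Cmp.bounds (h : Cmp μ R) (hw : Gm f w L D δ) (r0 r1 : ℝ) {T : ℝ} (hT : 0 ≤ T) :
    ∃ C, 0 ≤ C ∧ (∀ g, Sb T (C * (1 + ‖g‖)) (Fw μ w r0 r1 g)) ∧ (∀ g z, |Tw μ w r0 r1 g z| ≤ C) ∧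
      ∀ g z, |Gn μ (Fw μ w r0 r1 g) z| ≤ C * (1 + ‖g‖) := by
  obtain ⟨B1, hB1, b1⟩ := Bs.unif h.bs_av
  obtain ⟨B2, hB2, b2⟩ := Bs.unif fun j => (h.bs_av j).dd e0
  obtain ⟨B3, hB3, b3⟩ := Bs.unif (ι := Fin n × Fin n) fun p => h.bs_Am p.1 p.2
  obtain ⟨B4, hB4, b4⟩ := Bs.unif (ι := Fin n × Fin n) fun p =>
    ((h.bs_av p.2).dd (es p.1)).dd (es p.1)
  have hδ : 0 ≤ δ := (abs_nonneg _).trans (hw.near 0)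
  have hL := hw.L0
  have hD := hw.D0
  set r := |r0| + |r1| * T
  have hr : 0 ≤ r := by positivity
  set c0 := δ + L * (n * (B1 + r))
  set c1 := n * (L * (B2 + |r1|))
  set c2 := n * (L * B3)
  set c3 := n * (n * (D * B3) * B3 + L * B4)
  set c4 := n * (n * (D * (n * (B3 * B3))))
  set c5 := 1 / 2 * c4 + |r1| * (n * L)
  have p0 : 0 ≤ c0 := by positivity
  have p1 : 0 ≤ c1 := by positivity
  have p2 : 0 ≤ c2 := by positivity
  have p3 : 0 ≤ c3 := by positivity
  have p4 : 0 ≤ c4 := by positivity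
  have p5 : 0 ≤ c5 := by positivity
  have hTw : ∀ g z, |Tw μ w r0 r1 g z| ≤ c4 := fun g z =>
    abs_sum_le fun i => abs_sum_le fun j => abs_mul_le (hw.g2 i j _)
      (abs_sum_le fun k => abs_mul_le (b3 (i, k) z) (b3 (k, j) z))
  have hgn : ∀ g : E n, 0 ≤ ‖g‖ := fun g => norm_nonneg g
  refine ⟨c0 + c1 + c2 + c3 + c4 + c5, by positivity, fun g => ⟨h.sm_Fw hw.sm r0 r1 g, ?_, ?_, ?_, ?_⟩,
    fun g z => (hTw g z).trans (by linarith), ?_⟩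
  · intro z h0 hz
    have h1 : ∀ j, |yv μ r0 r1 g j z| ≤ B1 + r * ‖g‖ := fun j => by
      refine (abs_add_le _ _).trans (add_le_add (b1 j z) (abs_mul_le ?_ (abs_coord_le g j)))
      refine (abs_add_le _ _).trans (add_le_add le_rfl ?_)
      rw [abs_mul, abs_of_nonneg h0]
      exact mul_le_mul_of_nonneg_left hz (abs_nonneg _)
    have h2 : ‖vc (yv μ r0 r1 g) z‖ ≤ n * (B1 + r * ‖g‖) := by
      refine (norm_le_sum _).trans ?_
      refine (Finset.sum_le_sum fun j _ => h1 j).trans (le_of_eq ?_)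
      simp; ring
    have h3 := hw.abs_bound (vc (yv μ r0 r1 g) z)
    have h4 : |Fw μ w r0 r1 g z| ≤ c0 * (1 + ‖g‖) := by
      refine h3.trans ?_
      have h5 := mul_le_mul_of_nonneg_left h2 hL
      have h6 : δ + L * (n * (B1 + r * ‖g‖)) ≤ c0 * (1 + ‖g‖) := by
        have : c0 * (1 + ‖g‖) = δ + L * (n * (B1 + r * ‖g‖)) + (δ * ‖g‖ + L * n * (B1 * ‖g‖ + r)) := by
          simp only [c0]; ring
        rw [this]
        have := hgn g
        have : 0 ≤ δ * ‖g‖ + L * n * (B1 * ‖g‖ + r) := by positivity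
        linarith
      linarith
    exact h4.trans (mul_le_mul_of_nonneg_right (by linarith) (by linarith [hgn g]))
  · intro z h0 hz
    rw [h.dd0_Fw hw.sm]
    have h4 : |∑ j, dd (ei j) w (vc (yv μ r0 r1 g) z) * (dd e0 (av μ j) z + r1 * g j)|
        ≤ c1 * (1 + ‖g‖) := by
      refine (abs_sum_le fun j => abs_mul_le (hw.g1 j _) ((abs_add_le _ _).trans
        (add_le_add (b2 j z) (abs_mul_le le_rfl (abs_coord_le g j))))).trans ?_
      have : c1 * (1 + ‖g‖) = n * (L * (B2 + |r1| * ‖g‖)) + n * L * (B2 * ‖g‖ + |r1|) := by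
        simp only [c1]; ring
      rw [this]
      have := hgn g
      have : 0 ≤ n * L * (B2 * ‖g‖ + |r1|) := by positivity
      linarith
    exact h4.trans (mul_le_mul_of_nonneg_right (by linarith) (by linarith [hgn g]))
  · intro i z h0 hz
    rw [h.dd1_Fw hw.sm]
    have h4 : |∑ j, dd (ei j) w (vc (yv μ r0 r1 g) z) * Am μ z i j| ≤ c2 :=
      abs_sum_le fun j => abs_mul_le (hw.g1 j _) (b3 (i, j) z)
    refine h4.trans ?_
    nlinarith [hgn g]
  · intro i z h0 hz
    rw [h.dd2_Fw hw.sm]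
    have h4 : |∑ j, ((∑ k, dd (ei k) (dd (ei j) w) (vc (yv μ r0 r1 g) z) * Am μ z i k) * Am μ z i j
        + dd (ei j) w (vc (yv μ r0 r1 g) z) * dd (es i) (dd (es i) (av μ j)) z)| ≤ c3 :=
      abs_sum_le fun j => (abs_add_le _ _).trans (add_le_add (abs_mul_le
        (abs_sum_le fun k => abs_mul_le (hw.g2 k j _) (b3 (i, k) z)) (b3 (i, j) z))
        (abs_mul_le (hw.g1 j _) (b4 (i, j) z)))
    refine h4.trans ?_
    nlinarith [hgn g]
  · intro g z
    rw [h.Gn_Fw hw.sm]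
    have h4 : |1 / 2 * Tw μ w r0 r1 g z + r1 * ∑ j, g j * dd (ei j) w (vc (yv μ r0 r1 g) z)|
        ≤ 1 / 2 * c4 + |r1| * (n * (‖g‖ * L)) := by
      refine (abs_add_le _ _).trans (add_le_add (abs_mul_le (by norm_num) (hTw g z))
        (abs_mul_le le_rfl (abs_sum_le fun j => abs_mul_le (abs_coord_le g j) (hw.g1 j _))))
    refine h4.trans ?_
    have : c5 * (1 + ‖g‖) = 1 / 2 * c4 + |r1| * (n * (‖g‖ * L)) + (1 / 2 * c4 * ‖g‖ + |r1| * (n * L)) := by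
      simp only [c5]; ring
    have h6 := hgn g
    have h7 : 0 ≤ 1 / 2 * c4 * ‖g‖ + |r1| * (n * L) := by positivity
    nlinarith

/-- Joint continuity in the Gaussian vector and the space-time variable. -/
lemma Cmp.cont_yv (h : Cmp μ R) (r0 r1 : ℝ) :
    Continuous fun p : E n × V n => vc (yv μ r0 r1 p.1) p.2 := by
  refine (PiLp.continuous_toLp 2 _).comp (continuous_pi fun j => ?_)
  have := (h.bs_av j).sm.continuous
  unfold yv
  fun_prop

lemma Cmp.cont_Fw (h : Cmp μ R) (hw : Sm w) (r0 r1 : ℝ) :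
    Continuous fun p : E n × V n => Fw μ w r0 r1 p.1 p.2 := hw.continuous.comp (h.cont_yv r0 r1)

lemma Cmp.cont_Tw (h : Cmp μ R) (hw : Sm w) (r0 r1 : ℝ) :
    Continuous fun p : E n × V n => Tw μ w r0 r1 p.1 p.2 := by
  unfold Tw
  refine continuous_finsetSum _ fun i _ => continuous_finsetSum _ fun j _ => ?_
  refine (((hw.dd (ei j)).dd (ei i)).continuous.comp (h.cont_yv r0 r1)).mul ?_
  simp only [Matrix.mul_apply]
  refine continuous_finsetSum _ fun k _ => ?_
  exact ((h.bs_Am i k).sm.continuous.comp continuous_snd).mul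
    ((h.bs_Am k j).sm.continuous.comp continuous_snd)

lemma Cmp.cont_Gn (h : Cmp μ R) (hw : Sm w) (r0 r1 : ℝ) :
    Continuous fun p : E n × V n => Gn μ (Fw μ w r0 r1 p.1) p.2 := by
  simp only [h.Gn_Fw hw]
  refine ((h.cont_Tw hw r0 r1).const_mul _).add (continuous_const.mul ?_)
  refine continuous_finsetSum _ fun j _ => ?_
  have h1 : Continuous fun p : E n × V n => p.1 j := by fun_prop
  exact h1.mul ((hw.dd (ei j)).continuous.comp (h.cont_yv r0 r1))

lemma one_add_norm_integrable (C : ℝ) :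
    Integrable (fun g : E n => C * (1 + ‖g‖)) (stdGaussian n) :=
  (((integrable_const 1).add gauss_norm).const_mul C)

lemma Cmp.Ex_abs_le (h : Cmp μ R) {F : V n → ℝ} {t C : ℝ}
    (hC : ∀ z : V n, z.1 = t → |F z| ≤ C) : |Ex μ t F| ≤ C := by
  have := h.prob
  have h1 := norm_integral_le_of_norm_le_const (μ := μ.prod (stdGaussian n))
    (f := fun q => F (pt t q)) (C := C) (Filter.Eventually.of_forall fun q => hC _ rfl)
  rw [Ex]
  simpa using h1

/-- Integrability on the triple product. -/
lemma Cmp.trip (h : Cmp μ R) {Φ : E n → V n → ℝ} (hΦ : Continuous fun p : E n × V n => Φ p.1 p.2)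
    {s C : ℝ} (hb : ∀ g z, z.1 = s → |Φ g z| ≤ C * (1 + ‖g‖)) :
    Integrable (fun p : E n × (E n × E n) => Φ p.1 (pt s p.2))
      ((stdGaussian n).prod (μ.prod (stdGaussian n))) := by
  have := h.prob
  refine ((one_add_norm_integrable C).comp_fst (μ.prod (stdGaussian n))).mono' ?_
    (Filter.Eventually.of_forall fun p => hb _ _ rfl)
  refine Continuous.aestronglyMeasurable ?_
  exact hΦ.comp (continuous_fst.prodMk ((pt_cont s).comp continuous_snd))

lemma Cmp.trip_ex (h : Cmp μ R) {Φ : E n → V n → ℝ}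
    (hΦ : Continuous fun p : E n × V n => Φ p.1 p.2)
    {s C : ℝ} (hb : ∀ g z, z.1 = s → |Φ g z| ≤ C * (1 + ‖g‖)) :
    Integrable (fun g => Ex μ s (Φ g)) (stdGaussian n) := by
  have := h.prob
  exact (h.trip hΦ hb).integral_prod_left

lemma Cmp.swap (h : Cmp μ R) {Φ : E n → V n → ℝ} (hΦ : Continuous fun p : E n × V n => Φ p.1 p.2)
    {s C : ℝ} (hb : ∀ g z, z.1 = s → |Φ g z| ≤ C * (1 + ‖g‖)) :
    ∫ g, Ex μ s (Φ g) ∂(stdGaussian n) = Ex μ s fun z => ∫ g, Φ g z ∂(stdGaussian n) := by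
  have := h.prob
  exact integral_integral_swap (h.trip hΦ hb)

/-- The interpolation `J(s) = 𝔼 w (a_s + (r₀ + r₁ s) G)`, with `G` an independent Gaussian. -/
def Jw (μ : Measure (E n)) (w : E n → ℝ) (r0 r1 s : ℝ) : ℝ :=
  ∫ g, Ex μ s (Fw μ w r0 r1 g) ∂(stdGaussian n)

lemma Cmp.Jw_cont (h : Cmp μ R) (hw : Gm f w L D δ) (r0 r1 : ℝ) {T : ℝ} (hT : 0 ≤ T) :
    ContinuousOn (Jw μ w r0 r1) (Set.Icc 0 T) := by
  obtain ⟨C, hC0, hS, -, -⟩ := h.bounds hw r0 r1 hT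
  refine continuousOn_of_dominated (bound := fun g => C * (1 + ‖g‖)) (fun s hs => ?_) (fun s hs => ?_)
    (one_add_norm_integrable C) (Filter.Eventually.of_forall fun g => h.cont_Ex (hS g))
  · exact (h.trip_ex (h.cont_Fw hw.sm r0 r1) (C := C) fun g z hz =>
      (hS g).b0 z (hz ▸ hs.1) (hz ▸ hs.2)).aestronglyMeasurable
  · exact Filter.Eventually.of_forall fun g => h.Ex_abs_le fun z hz =>
      (hS g).b0 z (hz ▸ hs.1) (hz ▸ hs.2)

lemma Cmp.Jw_deriv (h : Cmp μ R) (hw : Gm f w L D δ) (r0 r1 : ℝ) {s : ℝ} (hs : 0 < s) :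
    HasDerivAt (Jw μ w r0 r1)
      (Ex μ s fun z => ∫ g, Gn μ (Fw μ w r0 r1 g) z ∂(stdGaussian n)) s := by
  obtain ⟨C, hC0, hS, -, hG⟩ := h.bounds hw r0 r1 (T := s + 1) (by linarith)
  have hG' := h.cont_Gn hw.sm r0 r1
  rw [← h.swap hG' (C := C) (fun g z _ => hG g z)]
  have hm : ∀ u ∈ Set.Ioo 0 (s + 1), Integrable (fun g => Ex μ u (Fw μ w r0 r1 g)) (stdGaussian n) :=
    fun u hu => h.trip_ex (h.cont_Fw hw.sm r0 r1) (C := C) fun g z hz =>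
      (hS g).b0 z (hz ▸ hu.1.le) (hz ▸ hu.2.le)
  have hmem : Set.Ioo 0 (s + 1) ∈ nhds s := isOpen_Ioo.mem_nhds ⟨hs, by linarith⟩
  refine (hasDerivAt_integral_of_dominated_loc_of_deriv_le (μ := stdGaussian n)
    (F := fun u g => Ex μ u (Fw μ w r0 r1 g)) (F' := fun u g => Ex μ u (Gn μ (Fw μ w r0 r1 g)))
    (x₀ := s) (bound := fun g => C * (1 + ‖g‖)) hmem ?_ (hm s ⟨hs, by linarith⟩) ?_ ?_
    (one_add_norm_integrable C) ?_).2
  · filter_upwards [hmem] with u hu using (hm u hu).aestronglyMeasurable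
  · exact (h.trip_ex hG' (C := C) (fun g z _ => hG g z)).aestronglyMeasurable
  · exact Filter.Eventually.of_forall fun g u hu => h.Ex_abs_le fun z _ => hG g z
  · exact Filter.Eventually.of_forall fun g u hu => h.kolm (hS g) hu.1 hu.2

end Jf
end GaugeLog

namespace GaugeLog
open scoped ContDiff

/-! ### Derivative bounds for the interpolation -/

section Low
variable {n : ℕ} {μ : Measure (E n)} {R : ℝ} {f w : E n → ℝ} {L D δ : ℝ} {p : E n → ℝ} {M : ℝ}

/-- The Gaussian average of the Hessian of `w` around `x` at scale `ρ`. -/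
def Hs (w : E n → ℝ) (x : E n) (ρ : ℝ) (i j : Fin n) : ℝ :=
  ∫ g, dd (ei i) (dd (ei j) w) (x + ρ • g) ∂(stdGaussian n)

lemma Gm.gr_f (hw : Gm f w L D δ) : Gr 1 f :=
  Gr_of_bound (gauge_cont hw.gauge) (C := L) fun x => by
    rw [abs_of_nonneg (hw.gauge.1 x)]
    have := hw.lin x; have := hw.L0; linarith

lemma Gm.int_f (hw : Gm f w L D δ) : Integrable f (stdGaussian n) := gauss_gr hw.gr_f.up

lemma bdd_gauss {F : E n → ℝ} (hc : Continuous F) {C : ℝ} (h : ∀ x, |F x| ≤ C) :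
    Integrable F (stdGaussian n) :=
  Integrable.of_bound hc.aestronglyMeasurable C (Filter.Eventually.of_forall h)

lemma cont_aff (x : E n) (ρ : ℝ) : Continuous fun g : E n => x + ρ • g := by fun_prop

lemma Gm.int_hess (hw : Gm f w L D δ) (x : E n) (ρ : ℝ) (i j : Fin n) :
    Integrable (fun g => dd (ei i) (dd (ei j) w) (x + ρ • g)) (stdGaussian n) :=
  bdd_gauss (((hw.sm.dd _).dd _).continuous.comp (cont_aff x ρ)) fun _ => hw.g2 i j _

lemma Gm.hs_psd (hw : Gm f w L D δ) (x : E n) (ρ : ℝ) (b : E n) :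
    0 ≤ ∑ i, ∑ j, Hs w x ρ i j * b i * b j := by
  have h1 : ∑ i, ∑ j, Hs w x ρ i j * b i * b j
      = ∫ g, ∑ i, ∑ j, dd (ei i) (dd (ei j) w) (x + ρ • g) * b i * b j ∂(stdGaussian n) := by
    rw [integral_finsetSum _ fun i _ => integrable_finsetSum _ fun j _ =>
      ((hw.int_hess x ρ i j).mul_const _).mul_const _]
    refine Finset.sum_congr rfl fun i _ => ?_
    rw [integral_finsetSum _ fun j _ => ((hw.int_hess x ρ i j).mul_const _).mul_const _]
    refine Finset.sum_congr rfl fun j _ => ?_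
    rw [integral_mul_const, integral_mul_const]; rfl
  rw [h1]
  refine integral_nonneg fun g => ?_
  have := convex_hess hw.sm hw.cvx b (x + ρ • g)
  rw [← hess_eq hw.sm] at this
  refine this.trans (le_of_eq ?_)
  refine Finset.sum_congr rfl fun i _ => Finset.sum_congr rfl fun j _ => by ring

/-- Gaussian integration by parts for the averaged Laplacian. -/
lemma Gm.trace_ibp (hw : Gm f w L D δ) (x : E n) (ρ : ℝ) :
    ∫ g, ∑ j, g j * dd (ei j) w (x + ρ • g) ∂(stdGaussian n) = ρ * ∑ j, Hs w x ρ j j := by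
  have hc : ∀ j, Continuous fun g : E n => dd (ei j) w (x + ρ • g) := fun j =>
    (hw.sm.dd _).continuous.comp (cont_aff x ρ)
  have hi : ∀ j, Integrable (fun g : E n => g j * dd (ei j) w (x + ρ • g)) (stdGaussian n) :=
    fun j => (one_add_norm_integrable L).mono' ((coord_cont j).mul (hc j)).aestronglyMeasurable
      (Filter.Eventually.of_forall fun g => by
        refine (abs_mul_le (abs_coord_le g j) (hw.g1 j _)).trans ?_
        have := hw.L0
        nlinarith [norm_nonneg g])
  rw [integral_finsetSum _ fun j _ => hi j, Finset.mul_sum]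
  refine Finset.sum_congr rfl fun j _ => ?_
  have hK : Sm fun g : E n => dd (ei j) w (x + ρ • g) :=
    ContDiff.comp (hw.sm.dd (ei j)) (by fun_prop)
  have hd : dd (ei j) (fun g : E n => dd (ei j) w (x + ρ • g))
      = fun g => ρ * dd (ei j) (dd (ei j) w) (x + ρ • g) := by
    funext g
    have h1 : HasFDerivAt (fun g : E n => x + ρ • g) (ρ • ContinuousLinearMap.id ℝ (E n)) g :=
      ((hasFDerivAt_id g).const_smul ρ).const_add x
    have h2 := ((hw.sm.dd (ei j)).differentiable (x + ρ • g)).hasFDerivAt.comp g h1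
    have h3 := h2.fderiv
    rw [dd]
    change (fderiv ℝ (dd (ei j) w ∘ fun g : E n => x + ρ • g) g) (ei j) = _
    rw [h3]
    simp [dd]
  have h0 := hw.L0
  have h00 := hw.D0
  have := gauss_ibp hK (Gr_of_bound (hc j) (C := L) fun g => (hw.g1 j _).trans (by
    nlinarith [norm_nonneg g])) (ei j) (by
      rw [hd]
      refine Gr_of_bound (C := |ρ| * D) (continuous_const.mul
        (((hw.sm.dd _).dd _).continuous.comp (cont_aff x ρ))) fun g => ?_
      refine (abs_mul_le le_rfl (hw.g2 j j _)).trans ?_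
      have : 0 ≤ |ρ| * D := by positivity
      nlinarith [norm_nonneg g])
  rw [hd, integral_const_mul] at this
  rw [Hs, ← this]
  congr 1; funext g
  rw [real_inner_comm, inner_ei]

lemma Gm.dd_sum_le (hw : Gm f w L D δ) (g x : E n) : ∑ j, g j * dd (ei j) w x ≤ f g := by
  rw [← dd_eq_sum]; exact hw.grad g x

/-- The averaged Laplacian is controlled by the Gaussian mean of the gauge. -/
lemma Gm.trace_le (hw : Gm f w L D δ) (x : E n) (ρ : ℝ) :
    ρ * ∑ j, Hs w x ρ j j ≤ ∫ g, f g ∂(stdGaussian n) := by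
  rw [← hw.trace_ibp]
  refine integral_mono ?_ hw.int_f fun g => hw.dd_sum_le g _
  refine integrable_finsetSum _ fun j _ => (one_add_norm_integrable L).mono'
    ((coord_cont j).mul ((hw.sm.dd _).continuous.comp (cont_aff x ρ))).aestronglyMeasurable
      (Filter.Eventually.of_forall fun g => by
        refine (abs_mul_le (abs_coord_le g j) (hw.g1 j _)).trans ?_
        have := hw.L0
        nlinarith [norm_nonneg g])

lemma Gm.trace_nonneg (hw : Gm f w L D δ) (x : E n) (ρ : ℝ) : 0 ≤ ∑ j, Hs w x ρ j j := by
  refine Finset.sum_nonneg fun j _ => integral_nonneg fun g => ?_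
  exact convex_hess hw.sm hw.cvx (ei j) _

lemma Gm.int_quad (hw : Gm f w L D δ) (x : E n) (ρ : ℝ) (Q : Fin n → Fin n → ℝ) :
    ∫ g, ∑ i, ∑ j, dd (ei i) (dd (ei j) w) (x + ρ • g) * Q i j ∂(stdGaussian n)
      = ∑ i, ∑ j, Hs w x ρ i j * Q i j := by
  rw [integral_finsetSum _ fun i _ => integrable_finsetSum _ fun j _ =>
      (hw.int_hess x ρ i j).mul_const _]
  refine Finset.sum_congr rfl fun i _ => ?_
  rw [integral_finsetSum _ fun j _ => (hw.int_hess x ρ i j).mul_const _]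
  refine Finset.sum_congr rfl fun j _ => ?_
  rw [integral_mul_const]; rfl

/-- The barycenter of the tilted measure. -/
def bar (μ : Measure (E n)) (z : V n) : E n := vc (av μ) z

lemma vc_yv (r0 r1 : ℝ) (g : E n) (z : V n) :
    vc (yv μ r0 r1 g) z = bar μ z + (r0 + r1 * z.1) • g := by
  ext j; simp [vc, yv, bar]

/-- The integrand of `J'`. -/
def In (μ : Measure (E n)) (w : E n → ℝ) (r0 r1 : ℝ) (z : V n) : ℝ :=
  ∫ g, Gn μ (Fw μ w r0 r1 g) z ∂(stdGaussian n)

lemma Cmp.In_eq (h : Cmp μ R) (hw : Gm f w L D δ) (r0 r1 : ℝ) (z : V n) :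
    In μ w r0 r1 z = 1 / 2 * ∑ i, ∑ j, Hs w (bar μ z) (r0 + r1 * z.1) i j * (Am μ z * Am μ z) i j
      + r1 * ((r0 + r1 * z.1) * ∑ j, Hs w (bar μ z) (r0 + r1 * z.1) j j) := by
  set ρ := r0 + r1 * z.1
  set x := bar μ z
  have e : ∀ g, Gn μ (Fw μ w r0 r1 g) z = 1 / 2 * (∑ i, ∑ j,
      dd (ei i) (dd (ei j) w) (x + ρ • g) * (Am μ z * Am μ z) i j)
      + r1 * ∑ j, g j * dd (ei j) w (x + ρ • g) := fun g => by
    rw [h.Gn_Fw hw.sm, Tw, vc_yv]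
  have i1 : Integrable (fun g => ∑ i, ∑ j,
      dd (ei i) (dd (ei j) w) (x + ρ • g) * (Am μ z * Am μ z) i j) (stdGaussian n) :=
    integrable_finsetSum _ fun i _ => integrable_finsetSum _ fun j _ =>
      (hw.int_hess x ρ i j).mul_const _
  have i2 : Integrable (fun g : E n => ∑ j, g j * dd (ei j) w (x + ρ • g)) (stdGaussian n) :=
    integrable_finsetSum _ fun j _ => (one_add_norm_integrable L).mono'
    ((coord_cont j).mul ((hw.sm.dd _).continuous.comp (cont_aff x ρ))).aestronglyMeasurable
      (Filter.Eventually.of_forall fun g => by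
        refine (abs_mul_le (abs_coord_le g j) (hw.g1 j _)).trans ?_
        have := hw.L0
        nlinarith [norm_nonneg g])
  rw [In]
  simp only [e]
  rw [integral_add (i1.const_mul _) (i2.const_mul _), integral_const_mul, integral_const_mul,
    hw.trace_ibp]
  congr 2
  exact hw.int_quad x ρ fun i j => (Am μ z * Am μ z) i j

lemma Cmp.In_cont (h : Cmp μ R) (hw : Gm f w L D δ) (r0 r1 : ℝ) :
    Continuous (In μ w r0 r1) ∧ ∃ C, ∀ z, |In μ w r0 r1 z| ≤ C := by
  obtain ⟨C, hC0, -, -, hG⟩ := h.bounds hw r0 r1 (T := 0) le_rfl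
  have hc := h.cont_Gn hw.sm r0 r1
  constructor
  · refine continuous_of_dominated (bound := fun g => C * (1 + ‖g‖)) (fun z => ?_)
      (fun z => Filter.Eventually.of_forall fun g => hG g z) (one_add_norm_integrable C)
      (Filter.Eventually.of_forall fun g => ?_)
    · exact (hc.comp (continuous_id.prodMk continuous_const)).aestronglyMeasurable
    · exact hc.comp (continuous_const.prodMk continuous_id)
  · refine ⟨∫ g : E n, C * (1 + ‖g‖) ∂(stdGaussian n), fun z => ?_⟩
    rw [In, ← Real.norm_eq_abs]
    exact norm_integral_le_of_norm_le (one_add_norm_integrable C)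
      (Filter.Eventually.of_forall fun g => hG g z)

lemma gauss_mean_nonneg (hf : IsGauge f) : 0 ≤ ∫ g, f g ∂(stdGaussian n) :=
  integral_nonneg fun g => hf.1 g

/-- Along the shrinking scale `√t/2 - s/(4√t)` the interpolation does not decrease too fast. -/
lemma LCM.Jw_lower (h : LCM μ R p M) (hN : Near μ) (hn : 2 ≤ n) (hw : Gm f w L D δ) {t : ℝ}
    (ht : 0 < t) (ht1 : 16 * C1 * log (n + 1) * √t ≤ 1) :
    -(√t / 8 * ∫ g, f g ∂(stdGaussian n)) ≤
      Jw μ w (√t / 2) (-(1 / (4 * √t))) t - Jw μ w (√t / 2) (-(1 / (4 * √t))) 0 := by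
  have hC := h.cmp
  set r0 := √t / 2
  set r1 := -(1 / (4 * √t)) with hr1
  set G := ∫ g, f g ∂(stdGaussian n)
  have hG : 0 ≤ G := gauss_mean_nonneg hw.gauge
  have hst : 0 < √t := Real.sqrt_pos.2 ht
  have hst2 : √t * √t = t := Real.mul_self_sqrt ht.le
  have hd : ∀ s ∈ Set.Ioo 0 t, -(1 / (8 * √t) * G) ≤ deriv (Jw μ w r0 r1) s := by
    intro s hs
    rw [(hC.Jw_deriv hw r0 r1 hs.1).deriv]
    change _ ≤ Ex μ s (In μ w r0 r1)
    have hs1 : 16 * C1 * log (n + 1) * √s ≤ 1 := by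
      refine le_trans ?_ ht1
      have : √s ≤ √t := Real.sqrt_le_sqrt hs.2.le
      have h3 : 0 ≤ log ((n : ℝ) + 1) := Real.log_nonneg (by linarith [Nat.cast_nonneg (α := ℝ) n])
      have := C1_pos
      gcongr
    obtain ⟨q, hev, hq, -⟩ := h.decay hN hn hs.1 hs1
    obtain ⟨hIc, C, hIb⟩ := hC.In_cont hw r0 r1
    have h1 : Ex μ s (fun z => -(G / √t) * Ph μ q z) ≤ Ex μ s (In μ w r0 r1) := by
      refine hC.Ex_mono (C := |-(G / √t)| * 1) (D := C)
        ((hC.bs_Ph hev).sm.continuous.const_mul _) hIc (fun z _ => ?_) (fun z _ => hIb z) ?_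
      · refine abs_mul_le le_rfl ?_
        rw [abs_of_nonneg (Ph_nonneg hev z)]
        exact Ph_le_one hev z
      · intro z hz
        rw [hC.In_eq hw]
        have hz1 : 0 < z.1 := hz ▸ hs.1
        have hb := (h.trace_bounds hz1 hev (hw.hs_psd (bar μ z) (r0 + r1 * z.1))).1
        have htr := hw.trace_le (bar μ z) (r0 + r1 * z.1)
        have hnn := hw.trace_nonneg (bar μ z) (r0 + r1 * z.1)
        set Tr := ∑ j, Hs w (bar μ z) (r0 + r1 * z.1) j j
        have hP := Ph_nonneg (μ := μ) hev z
        set φ := Ph μ q z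
        have hρ : r0 + r1 * z.1 = √t / 2 - s / (4 * √t) := by
          rw [hz, hr1]; simp only [r0]; ring
        have hsle : s / (4 * √t) ≤ √t / 4 := by
          rw [div_le_div_iff₀ (by positivity) (by positivity)]
          nlinarith [hs.2]
        have hsge : 0 ≤ s / (4 * √t) := by have := hs.1; positivity
        have hρ1 : √t / 4 ≤ r0 + r1 * z.1 := by rw [hρ]; linarith
        have hρ2 : r0 + r1 * z.1 ≤ √t / 2 := by rw [hρ]; linarith
        set ρ := r0 + r1 * z.1
        have hrr : -(1 / 8) ≤ r1 * ρ := by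
          rw [hr1]
          have : 1 / (4 * √t) * ρ ≤ 1 / (4 * √t) * (√t / 2) :=
            mul_le_mul_of_nonneg_left hρ2 (by positivity)
          have e : 1 / (4 * √t) * (√t / 2) = 1 / 8 := by field_simp; norm_num
          linarith
        have hTr : √t / 4 * Tr ≤ G := (mul_le_mul_of_nonneg_right hρ1 hnn).trans htr
        have hTr' : Tr ≤ 4 * (G / √t) := by
          have : Tr = (√t / 4 * Tr) * (4 / √t) := by field_simp
          rw [this]
          have h5 := mul_le_mul_of_nonneg_right hTr (show 0 ≤ 4 / √t by positivity)
          refine h5.trans (le_of_eq (by ring))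
        -- `½ Tr (A² D²w)` is at least `(1/8 - Ph/4) Tr D²w`, and `1/8` pays for the shrinking scale
        have k1 : -(1 / 8) * Tr ≤ r1 * ρ * Tr := mul_le_mul_of_nonneg_right hrr hnn
        have k2 : φ * Tr ≤ φ * (4 * (G / √t)) := mul_le_mul_of_nonneg_left hTr' hP
        nlinarith
    rw [Ex_const_mul] at h1
    refine le_trans ?_ h1
    have h2 : 0 ≤ G / √t := by positivity
    have e : 1 / (8 * √t) * G = G / √t * (1 / 8) := by field_simp
    rw [e]
    nlinarith
  have hcont := hC.Jw_cont hw r0 r1 ht.le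
  have := Convex.mul_sub_le_image_sub_of_le_deriv (convex_Icc 0 t) hcont
    (by
      rw [interior_Icc]
      exact fun s hs => (hC.Jw_deriv hw r0 r1 hs.1).differentiableAt.differentiableWithinAt)
    (by rw [interior_Icc]; exact hd) 0 (Set.left_mem_Icc.2 ht.le) t (Set.right_mem_Icc.2 ht.le) ht.le
  refine le_trans (le_of_eq ?_) this
  rw [sub_zero]
  have e : 1 / (8 * √t) * t = √t / 8 := by
    rw [div_mul_eq_mul_div, one_mul, div_eq_div_iff (by positivity) (by norm_num)]
    linear_combination -8 * hst2
  rw [neg_mul, mul_right_comm, e]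

/-- At the constant scale `√t` the interpolation does not increase too fast. -/
lemma LCM.Jw_upper (h : LCM μ R p M) (hN : Near μ) (hn : 2 ≤ n) (hw : Gm f w L D δ) {t : ℝ}
    (ht : 0 < t) (ht1 : 16 * C1 * log (n + 1) * √t ≤ 1) :
    Jw μ w (√t) 0 t - Jw μ w (√t) 0 0 ≤ (1 + C2) * √t * ∫ g, f g ∂(stdGaussian n) := by
  have hC := h.cmp
  set G := ∫ g, f g ∂(stdGaussian n)
  have hG : 0 ≤ G := gauss_mean_nonneg hw.gauge
  have hst : 0 < √t := Real.sqrt_pos.2 ht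
  have hst2 : √t * √t = t := Real.mul_self_sqrt ht.le
  have hd : ∀ s ∈ Set.Ioo 0 t, deriv (Jw μ w (√t) 0) s ≤ (1 + C2) * (G / √t) := by
    intro s hs
    rw [(hC.Jw_deriv hw (√t) 0 hs.1).deriv]
    change Ex μ s (In μ w (√t) 0) ≤ _
    have hs1 : 16 * C1 * log (n + 1) * √s ≤ 1 := by
      refine le_trans ?_ ht1
      have : √s ≤ √t := Real.sqrt_le_sqrt hs.2.le
      have h3 : 0 ≤ log ((n : ℝ) + 1) := Real.log_nonneg (by linarith [Nat.cast_nonneg (α := ℝ) n])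
      have := C1_pos
      gcongr
    obtain ⟨q, hev, -, hq⟩ := h.decay hN hn hs.1 hs1
    obtain ⟨hIc, C, hIb⟩ := hC.In_cont hw (√t) 0
    have hs0 := hs.1
    have hGt : 0 ≤ G / √t := by positivity
    have hPb : ∀ z : V n, |Ph μ q z| ≤ 1 := fun z => by
      rw [abs_of_nonneg (Ph_nonneg hev z)]; exact Ph_le_one hev z
    have h1 : Ex μ s (In μ w (√t) 0) ≤ Ex μ s (fun z => G / √t + G / √t / s ^ 2 * Ph μ q z) := by
      refine hC.Ex_mono (C := C) (D := G / √t + |G / √t / s ^ 2| * 1) hIc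
        (continuous_const.add ((hC.bs_Ph hev).sm.continuous.const_mul _)) (fun z _ => hIb z)
        (fun z _ => ?_) ?_
      · refine (abs_add_le _ _).trans (add_le_add (abs_of_nonneg hGt).le
          (abs_mul_le le_rfl (hPb z)))
      · intro z hz
        rw [hC.In_eq hw]
        have hz1 : 0 < z.1 := hz ▸ hs.1
        have e0 : √t + 0 * z.1 = √t := by ring
        rw [e0]
        have hb := (h.trace_bounds hz1 hev (hw.hs_psd (bar μ z) (√t))).2
        have htr := hw.trace_le (bar μ z) (√t)
        set Tr := ∑ j, Hs w (bar μ z) (√t) j j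
        have hP := Ph_nonneg (μ := μ) hev z
        set φ := Ph μ q z
        have hTr' : Tr ≤ G / √t := by rw [le_div_iff₀ hst]; linarith
        rw [hz] at hb
        have k0 : 0 ≤ 2 + 2 * φ / s ^ 2 := by positivity
        have k2 := mul_le_mul_of_nonneg_left hTr' k0
        have e1 : (2 + 2 * φ / s ^ 2) * (G / √t) = 2 * (G / √t + G / √t / s ^ 2 * φ) := by
          field_simp
        rw [e1] at k2
        change _ ≤ G / √t + G / √t / s ^ 2 * φ
        linarith
    refine h1.trans ?_
    have e2 : Ex μ s (fun z => G / √t + G / √t / s ^ 2 * Ph μ q z)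
        = G / √t + G / √t / s ^ 2 * Ex μ s (Ph μ q) := by
      have := hC.prob
      rw [Ex, integral_add (integrable_const _) ((hC.ex_integrable (hC.bs_Ph hev).sm.continuous
        (fun z _ => hPb z)).const_mul _), integral_const_mul]
      simp [Ex]
    rw [e2]
    have k3 := mul_le_mul_of_nonneg_left hq (show 0 ≤ G / √t / s ^ 2 by positivity)
    have e3 : G / √t / s ^ 2 * (C2 * s ^ 2) = C2 * (G / √t) := by field_simp
    linarith
  have hcont := hC.Jw_cont hw (√t) 0 ht.le
  have := Convex.image_sub_le_mul_sub_of_deriv_le (convex_Icc 0 t) hcont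
    (by
      rw [interior_Icc]
      exact fun s hs => (hC.Jw_deriv hw (√t) 0 hs.1).differentiableAt.differentiableWithinAt)
    (by rw [interior_Icc]; exact hd) 0 (Set.left_mem_Icc.2 ht.le) t (Set.right_mem_Icc.2 ht.le) ht.le
  refine le_trans this (le_of_eq ?_)
  rw [sub_zero]
  have e : G / √t * t = √t * G := by
    rw [div_mul_eq_mul_div, div_eq_iff hst.ne']
    linear_combination -G * hst2
  rw [mul_assoc, e]; ring

end Low
end GaugeLog

namespace GaugeLog
open scoped ContDiff

/-! ### Comparison for bounded log-concave measures of bounded support -/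

section Fin1
variable {n : ℕ} {μ : Measure (E n)} {R : ℝ} {f w : E n → ℝ} {L D δ : ℝ} {p : E n → ℝ} {M : ℝ}

lemma Gm.add_le (hw : Gm f w L D δ) (x h : E n) : w (x + h) ≤ w x + f h := by
  have h1 := convex_grad hw.sm hw.cvx (x + h) (-h)
  rw [dd_neg_dir, add_neg_cancel_right] at h1
  linarith [hw.grad h (x + h)]

lemma Gm.gr_neg (hw : Gm f w L D δ) : Gr 1 fun x => f (-x) :=
  Gr_of_bound ((gauge_cont hw.gauge).comp continuous_neg) (C := L) fun x => by
    rw [abs_of_nonneg (hw.gauge.1 _)]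
    have := hw.lin (-x); rw [norm_neg] at this; have := hw.L0; linarith

lemma gauss_neg (F : E n → ℝ) : ∫ g, F (-g) ∂(stdGaussian n) = ∫ g, F g ∂(stdGaussian n) := by
  rw [int_gauss, int_gauss]
  rw [← integral_neg_eq_self (fun g => F g * gd n g)]
  congr 1; funext g
  congr 1
  simp [gd]

lemma Cmp.bar_bdd (h : Cmp μ R) (hw : Gm f w L D δ) :
    Continuous (fun z => w (bar μ z)) ∧ ∀ t, 0 ≤ t → ∃ C, ∀ z : V n, z.1 = t → |w (bar μ z)| ≤ C := by
  have e : ∀ z, Fw μ w 0 0 0 z = w (bar μ z) := fun z => by rw [Fw, vc_yv]; simp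
  refine ⟨?_, fun t ht => ?_⟩
  · have := (h.sm_Fw hw.sm 0 0 0).continuous
    exact this.congr e
  · obtain ⟨C, -, hS, -⟩ := h.bounds hw 0 0 ht
    refine ⟨C * (1 + ‖(0 : E n)‖), fun z hz => ?_⟩
    rw [← e]
    exact (hS 0).b0 z (hz ▸ ht) hz.le

lemma Cmp.Ex_add_const (h : Cmp μ R) {F : V n → ℝ} (hF : Continuous F) {t C : ℝ}
    (hC : ∀ z : V n, z.1 = t → |F z| ≤ C) (c : ℝ) : Ex μ t (fun z => F z + c) = Ex μ t F + c := by
  have := h.prob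
  rw [Ex, integral_add (h.ex_integrable hF hC) (integrable_const _)]
  simp [Ex]

lemma gauge_smul_int (hw : Gm f w L D δ) {r : ℝ} (hr : 0 ≤ r) :
    Integrable (fun g => f (r • g)) (stdGaussian n) ∧
      ∫ g, f (r • g) ∂(stdGaussian n) = r * ∫ g, f g ∂(stdGaussian n) := by
  simp only [hw.gauge.2.2 r hr]
  exact ⟨hw.int_f.const_mul r, integral_const_mul _ _⟩

lemma gauge_smul_neg (hw : Gm f w L D δ) {r : ℝ} (hr : 0 ≤ r) :
    Integrable (fun g => f (-(r • g))) (stdGaussian n) ∧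
      ∫ g, f (-(r • g)) ∂(stdGaussian n) = r * ∫ g, f g ∂(stdGaussian n) := by
  have e : ∀ g : E n, f (-(r • g)) = r * f (-g) := fun g => by
    rw [← smul_neg, hw.gauge.2.2 r hr]
  simp only [e]
  refine ⟨(gauss_gr hw.gr_neg.up).const_mul r, ?_⟩
  rw [integral_const_mul, gauss_neg f]

lemma Cmp.ex_Fw_int (h : Cmp μ R) (hw : Gm f w L D δ) (r0 r1 : ℝ) {t : ℝ} (ht : 0 ≤ t) :
    Integrable (fun g => Ex μ t (Fw μ w r0 r1 g)) (stdGaussian n) := by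
  obtain ⟨C, -, hS, -⟩ := h.bounds hw r0 r1 ht
  exact h.trip_ex (h.cont_Fw hw.sm r0 r1) (C := C) fun g z hz =>
      (hS g).b0 z (hz ▸ ht) hz.le

/-- `J` is at most the value without the Gaussian perturbation, plus the Gaussian mean. -/
lemma Cmp.Jw_le (h : Cmp μ R) (hw : Gm f w L D δ) (r0 r1 : ℝ) {t : ℝ} (ht : 0 ≤ t)
    (hr : 0 ≤ r0 + r1 * t) :
    Jw μ w r0 r1 t ≤ Ex μ t (fun z => w (bar μ z)) + (r0 + r1 * t) * ∫ g, f g ∂(stdGaussian n) := by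
  obtain ⟨C, -, hS, -⟩ := h.bounds hw r0 r1 ht
  obtain ⟨hc, hb⟩ := h.bar_bdd hw
  obtain ⟨C', hb⟩ := hb t ht
  obtain ⟨i1, e1⟩ := gauge_smul_int hw hr
  rw [← e1, Jw]
  have e2 : Ex μ t (fun z => w (bar μ z)) = ∫ _ : E n, Ex μ t (fun z => w (bar μ z)) ∂(stdGaussian n) := by
    simp
  rw [e2, ← integral_add (integrable_const _) i1]
  refine integral_mono (h.ex_Fw_int hw r0 r1 ht) ((integrable_const _).add i1) fun g => ?_
  change Ex μ t (Fw μ w r0 r1 g) ≤ Ex μ t (fun z => w (bar μ z)) + f ((r0 + r1 * t) • g)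
  rw [← h.Ex_add_const hc hb]
  refine h.Ex_mono (h.sm_Fw hw.sm r0 r1 g).continuous (hc.add continuous_const)
    (fun z hz => (hS g).b0 z (hz ▸ ht) hz.le)
    (D := C' + |f ((r0 + r1 * t) • g)|) (fun z hz => (abs_add_le _ _).trans
      (add_le_add (hb z hz) le_rfl)) fun z hz => ?_
  rw [Fw, vc_yv, hz]
  exact hw.add_le _ _

/-- The reverse comparison, by the symmetry of the Gaussian. -/
lemma Cmp.le_Jw (h : Cmp μ R) (hw : Gm f w L D δ) (r0 r1 : ℝ) {t : ℝ} (ht : 0 ≤ t)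
    (hr : 0 ≤ r0 + r1 * t) :
    Ex μ t (fun z => w (bar μ z)) ≤ Jw μ w r0 r1 t + (r0 + r1 * t) * ∫ g, f g ∂(stdGaussian n) := by
  obtain ⟨C, -, hS, -⟩ := h.bounds hw r0 r1 ht
  obtain ⟨hc, hb⟩ := h.bar_bdd hw
  obtain ⟨C', hb⟩ := hb t ht
  obtain ⟨i1, e1⟩ := gauge_smul_neg hw hr
  rw [← e1, Jw]
  have e2 : Ex μ t (fun z => w (bar μ z)) = ∫ _ : E n, Ex μ t (fun z => w (bar μ z)) ∂(stdGaussian n) := by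
    simp
  have i2 := h.ex_Fw_int hw r0 r1 ht
  rw [e2, ← integral_add i2 i1]
  refine integral_mono (integrable_const _) (i2.add i1) fun g => ?_
  change Ex μ t (fun z => w (bar μ z)) ≤ Ex μ t (Fw μ w r0 r1 g) + f (-((r0 + r1 * t) • g))
  have hbF : ∀ z : V n, z.1 = t → |Fw μ w r0 r1 g z| ≤ C * (1 + ‖g‖) :=
    fun z hz => (hS g).b0 z (hz ▸ ht) hz.le
  have hcF := (h.sm_Fw hw.sm r0 r1 g).continuous
  rw [← h.Ex_add_const hcF hbF]
  refine h.Ex_mono hc (hcF.add continuous_const) hb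
    (D := C * (1 + ‖g‖) + |f (-((r0 + r1 * t) • g))|) (fun z hz => (abs_add_le _ _).trans
      (add_le_add (hbF z hz) le_rfl)) fun z hz => ?_
  change _ ≤ Fw μ w r0 r1 g z + _
  rw [Fw, vc_yv, hz]
  have := hw.add_le (bar μ z + (r0 + r1 * t) • g) (-((r0 + r1 * t) • g))
  rwa [add_neg_cancel_right] at this

lemma Gm.int_w (hw : Gm f w L D δ) (x : E n) (r : ℝ) :
    Integrable (fun g => w (x + r • g)) (stdGaussian n) := by
  refine (one_add_norm_integrable (δ + L * (‖x‖ + |r|))).mono'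
    (hw.sm.continuous.comp (cont_aff x r)).aestronglyMeasurable (Filter.Eventually.of_forall fun g => ?_)
  have hδ : 0 ≤ δ := (abs_nonneg _).trans (hw.near 0)
  refine (hw.abs_bound _).trans ?_
  have h1 : ‖x + r • g‖ ≤ ‖x‖ + |r| * ‖g‖ := (norm_add_le _ _).trans (by rw [norm_smul]; rfl)
  have h2 := mul_le_mul_of_nonneg_left h1 hw.L0
  have hL := hw.L0
  have h3 : 0 ≤ δ * ‖g‖ + L * (‖x‖ * ‖g‖ + |r|) := by positivity
  nlinarith

lemma Cmp.Jw_zero (h : Cmp μ R) (r0 r1 : ℝ) :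
    Jw μ w r0 r1 0 = ∫ g, w (bar μ 0 + r0 • g) ∂(stdGaussian n) := by
  rw [Jw]
  congr 1; funext g
  rw [h.Ex_zero, Fw, vc_yv]
  simp

lemma Cmp.Jw_zero_ge (h : Cmp μ R) (hw : Gm f w L D δ) {r0 : ℝ} (hr : 0 ≤ r0) (r1 : ℝ) :
    r0 * (∫ g, f g ∂(stdGaussian n)) - f (-bar μ 0) - δ ≤ Jw μ w r0 r1 0 := by
  obtain ⟨i1, e1⟩ := gauge_smul_int hw hr
  rw [h.Jw_zero, ← e1]
  have e2 : f (-bar μ 0) + δ = ∫ _ : E n, (f (-bar μ 0) + δ) ∂(stdGaussian n) := by simp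
  rw [sub_sub, e2, ← integral_sub i1 (integrable_const _)]
  refine integral_mono (i1.sub (integrable_const _)) (hw.int_w _ _) fun g => ?_
  change f (r0 • g) - (f (-bar μ 0) + δ) ≤ w (bar μ 0 + r0 • g)
  have h1 := gauge_add hw.gauge (bar μ 0 + r0 • g) (-bar μ 0)
  have h2 := abs_le.1 (hw.near (bar μ 0 + r0 • g))
  rw [add_neg_cancel_comm] at h1
  linarith

lemma Cmp.Jw_zero_le (h : Cmp μ R) (hw : Gm f w L D δ) {r0 : ℝ} (hr : 0 ≤ r0) (r1 : ℝ) :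
    Jw μ w r0 r1 0 ≤ f (bar μ 0) + δ + r0 * (∫ g, f g ∂(stdGaussian n)) := by
  obtain ⟨i1, e1⟩ := gauge_smul_int hw hr
  rw [h.Jw_zero, ← e1]
  have e2 : f (bar μ 0) + δ = ∫ _ : E n, (f (bar μ 0) + δ) ∂(stdGaussian n) := by simp
  rw [e2, ← integral_add (integrable_const _) i1]
  refine integral_mono (hw.int_w _ _) ((integrable_const _).add i1) fun g => ?_
  change w (bar μ 0 + r0 • g) ≤ (f (bar μ 0) + δ) + f (r0 • g)
  have h1 := hw.add_le (bar μ 0) (r0 • g)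
  have h2 := abs_le.1 (hw.near (bar μ 0))
  linarith

/-- Jensen's inequality for the tilted measures. -/
lemma Cmp.jensen_bar (h : Cmp μ R) (hw : Gm f w L D δ) {t : ℝ} (ht : 0 ≤ t) :
    Ex μ t (fun z => w (bar μ z)) ≤ ∫ x, w x ∂μ := by
  have := h.prob
  have hcw := hw.sm.continuous
  have e : ∫ x, w x ∂μ = Ex μ t (fun z => mt μ w z) := by
    have h1 := h.disint hcw (G := fun _ => 1) continuous_const ht (C := 1) (fun _ _ => by simp)
    simp only [mul_one] at h1
    rw [← h1, integral_fun_fst]; simp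
  rw [e]
  obtain ⟨hc, hb⟩ := h.bar_bdd hw
  obtain ⟨C', hb⟩ := hb t ht
  obtain ⟨C, hC⟩ := ((h.bs_mt hcw).bk 0).bdd
  refine h.Ex_mono hc (h.bs_mt hcw).sm.continuous hb (fun z _ => hC z) fun z _ => ?_
  have hj : ∀ j : Fin n, Continuous fun x : E n => dd (ei j) w (bar μ z) * (x j - av μ j z) :=
    fun j => by fun_prop
  have h1 : mt μ (fun x => w (bar μ z) + ∑ j, dd (ei j) w (bar μ z) * (x j - av μ j z)) z
      = w (bar μ z) := by
    rw [h.mt_add continuous_const (continuous_finsetSum _ fun j _ => hj j), h.mt_const,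
      h.mt_sum _ hj]
    simp only [mt_const_mul]
    have : ∀ j, mt μ (fun x => x j - av μ j z) z = 0 := fun j => by
      rw [h.mt_sub (coord_cont j) continuous_const, h.mt_const]
      exact sub_self _
    simp [this]
  rw [← h1]
  refine h.mt_mono (continuous_const.add (continuous_finsetSum _ fun j _ => hj j)) hcw
    (fun x _ => ?_) z
  have h2 := convex_grad hw.sm hw.cvx (bar μ z) (x - bar μ z)
  rw [dd_eq_sum, add_sub_cancel] at h2
  have e3 : ∑ j, dd (ei j) w (bar μ z) * (x j - av μ j z)
      = ∑ j, (x - bar μ z) j * dd (ei j) w (bar μ z) :=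
    Finset.sum_congr rfl fun j _ => mul_comm _ _
  change w (bar μ z) + ∑ j, dd (ei j) w (bar μ z) * (x j - av μ j z) ≤ w x
  rw [e3]
  exact h2

/-- Comparison of `X` with the barycenter, via the observation `θ = tX + √t G`. -/
lemma Cmp.static (h : Cmp μ R) (hw : Gm f w L D δ) {t : ℝ} (ht : 0 < t) :
    t * ∫ x, f x ∂μ ≤ 2 * δ + t * (Ex μ t (fun z => w (bar μ z)) + δ)
      + 2 * √t * ∫ g, f g ∂(stdGaussian n) := by
  have := h.prob
  have hcf := gauge_cont hw.gauge
  have hst : 0 ≤ √t := Real.sqrt_nonneg t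
  have ifμ : Integrable f μ := h.integrable hcf
  have hcG : ∀ j, Continuous fun z : V n => dd (ei j) w z.2 := fun j =>
    (hw.sm.dd _).continuous.comp continuous_snd
  have ix : ∀ j, Integrable (fun q : E n × E n => q.1 j * dd (ei j) w (pt t q).2)
      (μ.prod (stdGaussian n)) := fun j => by
    refine Integrable.of_bound (C := R * L) ?_ ?_
    · exact Continuous.aestronglyMeasurable (((coord_cont j).comp continuous_fst).mul
        ((hcG j).comp (pt_cont t)))
    · filter_upwards [h.sfst] with q hq
      exact abs_mul_le ((abs_coord_le _ _).trans hq) (hw.g1 j _)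
  have hpt : ∀ q : E n × E n, t * f q.1 ≤ 2 * δ + t * ∑ j, q.1 j * dd (ei j) w (pt t q).2
      + (√t * f q.2 + √t * f (-q.2)) := by
    intro q
    have e1 : (pt t q).2 = t • q.1 + √t • q.2 := rfl
    set y := (pt t q).2
    have k1 := gauge_add hw.gauge y (-(√t • q.2))
    rw [← sub_eq_add_neg, e1, add_sub_cancel_right, hw.gauge.2.2 t ht.le, ← e1, ← smul_neg,
      hw.gauge.2.2 _ hst] at k1
    have k2 := abs_le.1 (hw.near y)
    have k3 := convex_grad hw.sm hw.cvx y (-y)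
    rw [dd_neg_dir, add_neg_cancel, dd_eq_sum] at k3
    have k4 := abs_le.1 (hw.near 0)
    rw [gauge_zero hw.gauge] at k4
    have k5 : ∑ j, y j * dd (ei j) w y = t * ∑ j, q.1 j * dd (ei j) w y
        + √t * ∑ j, q.2 j * dd (ei j) w y := by
      rw [Finset.mul_sum, Finset.mul_sum, ← Finset.sum_add_distrib]
      refine Finset.sum_congr rfl fun j _ => ?_
      have : y j = t * q.1 j + √t * q.2 j := by rw [e1]; simp
      rw [this]; ring
    have k6 := mul_le_mul_of_nonneg_left (hw.dd_sum_le q.2 y) hst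
    linarith
  have i0 : Integrable (fun q : E n × E n => t * f q.1) (μ.prod (stdGaussian n)) :=
    (ifμ.comp_fst (stdGaussian n)).const_mul t
  have i1 : Integrable (fun q : E n × E n => t * ∑ j, q.1 j * dd (ei j) w (pt t q).2)
      (μ.prod (stdGaussian n)) := (integrable_finsetSum _ fun j _ => ix j).const_mul t
  have i2 : Integrable (fun q : E n × E n => √t * f q.2) (μ.prod (stdGaussian n)) :=
    (hw.int_f.comp_snd μ).const_mul _
  have i3 : Integrable (fun q : E n × E n => √t * f (-q.2)) (μ.prod (stdGaussian n)) :=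
    ((gauss_gr hw.gr_neg.up).comp_snd μ).const_mul _
  have hI := integral_mono i0 (((integrable_const (2 * δ)).add i1).add (i2.add i3)) hpt
  have e0 : ∫ q : E n × E n, t * f q.1 ∂(μ.prod (stdGaussian n)) = t * ∫ x, f x ∂μ := by
    rw [integral_const_mul, integral_fun_fst]; simp
  have e2 : ∫ q : E n × E n, √t * f q.2 ∂(μ.prod (stdGaussian n))
      = √t * ∫ g, f g ∂(stdGaussian n) := by
    rw [integral_const_mul, integral_fun_snd]; simp
  have e3 : ∫ q : E n × E n, √t * f (-q.2) ∂(μ.prod (stdGaussian n))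
      = √t * ∫ g, f g ∂(stdGaussian n) := by
    rw [integral_const_mul, integral_fun_snd (fun g : E n => f (-g)), gauss_neg f]; simp
  have e5 : ∫ q : E n × E n, t * ∑ j, q.1 j * dd (ei j) w (pt t q).2 ∂(μ.prod (stdGaussian n))
      = t * ∑ j, ∫ q : E n × E n, q.1 j * dd (ei j) w (pt t q).2 ∂(μ.prod (stdGaussian n)) := by
    rw [integral_const_mul, integral_finsetSum _ fun j _ => ix j]
  rw [e0] at hI
  have hI2 : t * ∫ x, f x ∂μ ≤ 2 * δ + t * (∑ j, ∫ q : E n × E n, q.1 j * dd (ei j) w (pt t q).2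
      ∂(μ.prod (stdGaussian n))) + 2 * √t * ∫ g, f g ∂(stdGaussian n) := by
    refine hI.trans (le_of_eq ?_)
    rw [integral_add' ((integrable_const (2 * δ)).add i1) (i2.add i3),
      integral_add' (integrable_const (2 * δ)) i1, integral_add' i2 i3, e2, e3, e5]
    simp
    ring
  refine hI2.trans ?_
  have hB : ∀ j, ∀ z : V n, z.1 = t → |dd (ei j) w z.2| ≤ L := fun j z _ => hw.g1 j _
  have e4 : ∑ j, ∫ q : E n × E n, q.1 j * dd (ei j) w (pt t q).2 ∂(μ.prod (stdGaussian n))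
      = Ex μ t (fun z => ∑ j, av μ j z * dd (ei j) w z.2) := by
    rw [Ex, integral_finsetSum]
    · refine Finset.sum_congr rfl fun j _ => ?_
      exact h.disint (coord_cont j) (hcG j) ht.le (hB j)
    · intro j _
      obtain ⟨C, hC⟩ := ((h.bs_av j).bk 0).bdd
      exact h.ex_integrable (F := fun z => av μ j z * dd (ei j) w z.2)
        ((h.bs_av j).sm.continuous.mul (hcG j)) fun z hz => abs_mul_le (hC z) (hB j z hz)
  rw [e4]
  obtain ⟨hc, hb⟩ := h.bar_bdd hw
  obtain ⟨C', hb⟩ := hb t ht.le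
  rw [← h.Ex_add_const hc hb]
  obtain ⟨B, hB0, hBb⟩ := Bs.unif h.bs_av
  have key : Ex μ t (fun z => ∑ j, av μ j z * dd (ei j) w z.2) ≤ Ex μ t (fun z => w (bar μ z) + δ) := by
    refine h.Ex_mono (continuous_finsetSum _ fun j _ => (h.bs_av j).sm.continuous.mul (hcG j))
      (hc.add continuous_const) (fun z hz => abs_sum_le fun j => abs_mul_le (hBb j z) (hB j z hz))
      (D := C' + |δ|) (fun z hz => (abs_add_le _ _).trans (add_le_add (hb z hz) le_rfl)) fun z _ => ?_
    have k1 := hw.dd_sum_le (bar μ z) z.2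
    have k2 := abs_le.1 (hw.near (bar μ z))
    change ∑ j, (bar μ z) j * dd (ei j) w z.2 ≤ w (bar μ z) + δ
    linarith
  have := mul_le_mul_of_nonneg_left key ht.le
  linarith

/-- The interpolation starts at a Gaussian of scale `√t / 2` around the mean of `μ` and ends at
`a_t` plus a Gaussian of scale `√t / 4`. The gain is not lost along the way by `LCM.Jw_lower`, and
`a_t` is dominated by `X` by Jensen. -/
lemma LCM.lower (h : LCM μ R p M) (hN : Near μ) (hn : 2 ≤ n) (hf : IsGauge f) {t : ℝ}
    (ht : 0 < t) (ht1 : 16 * C1 * log (n + 1) * √t ≤ 1) :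
    √t / 8 * (∫ g, f g ∂(stdGaussian n)) - f (-bar μ 0) ≤ ∫ x, f x ∂μ := by
  have hC := h.cmp
  have := hC.prob
  refine le_of_forall_pos_le_add fun ε hε => ?_
  obtain ⟨w, L, D, hw⟩ := gauge_smooth hf (half_pos hε)
  have hst : 0 < √t := Real.sqrt_pos.2 ht
  have hst2 : √t * √t = t := Real.mul_self_sqrt ht.le
  have e : √t / 2 + -(1 / (4 * √t)) * t = √t / 4 := by
    have : 1 / (4 * √t) * t = √t / 4 := by
      rw [div_mul_eq_mul_div, one_mul, div_eq_div_iff (by positivity) (by norm_num)]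
      linear_combination -4 * hst2
    rw [neg_mul, this]; ring
  have k1 := h.Jw_lower hN hn hw ht ht1
  have k2 := hC.Jw_le hw (√t / 2) (-(1 / (4 * √t))) ht.le (by rw [e]; positivity)
  have k3 := hC.Jw_zero_ge hw (show 0 ≤ √t / 2 by positivity) (-(1 / (4 * √t)))
  have k4 := hC.jensen_bar hw ht.le
  rw [e] at k2
  have k5 : ∫ x, w x ∂μ ≤ (∫ x, f x ∂μ) + ε / 2 := by
    have i1 := hC.integrable (gauge_cont hf)
    have : (∫ x, f x ∂μ) + ε / 2 = ∫ x, (f x + ε / 2) ∂μ := by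
      rw [integral_add i1 (integrable_const _)]; simp
    rw [this]
    refine integral_mono (hC.integrable hw.sm.continuous) (i1.add (integrable_const _)) fun x => ?_
    have := abs_le.1 (hw.near x)
    change w x ≤ f x + ε / 2
    linarith
  linarith

/-- `X` is compared with the barycenter `a_t`, and `a_t` with a Gaussian of scale `√t` around the mean
of `μ`. -/
lemma LCM.upper (h : LCM μ R p M) (hN : Near μ) (hn : 2 ≤ n) (hf : IsGauge f) {t : ℝ}
    (ht : 0 < t) (ht1 : 16 * C1 * log (n + 1) * √t ≤ 1) :
    ∫ x, f x ∂μ ≤ f (bar μ 0) + ((3 + C2) * √t + 2 / √t) * ∫ g, f g ∂(stdGaussian n) := by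
  have hC := h.cmp
  refine le_of_forall_pos_le_add fun ε hε => ?_
  have hδ : 0 < ε / (2 / t + 2) := by positivity
  obtain ⟨w, L, D, hw⟩ := gauge_smooth hf hδ
  set δ := ε / (2 / t + 2) with hδ'
  have hst : 0 < √t := Real.sqrt_pos.2 ht
  have hst2 : √t * √t = t := Real.mul_self_sqrt ht.le
  have k1 := h.Jw_upper hN hn hw ht ht1
  have k2 := hC.le_Jw hw (√t) 0 ht.le (by linarith)
  have k3 := hC.Jw_zero_le hw hst.le 0
  have k4 := hC.static hw ht
  rw [zero_mul, add_zero] at k2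
  set G := ∫ g, f g ∂(stdGaussian n)
  have k5 : Ex μ t (fun z => w (bar μ z)) ≤ f (bar μ 0) + δ + (3 + C2) * √t * G := by linarith
  have k6 : ∫ x, f x ∂μ ≤ (2 * δ + t * (Ex μ t (fun z => w (bar μ z)) + δ) + 2 * √t * G) / t := by
    rw [le_div_iff₀ ht]; linarith
  refine k6.trans ?_
  have e1 : (2 * δ + t * (Ex μ t (fun z => w (bar μ z)) + δ) + 2 * √t * G) / t
      = δ * (2 / t) + (Ex μ t (fun z => w (bar μ z)) + δ) + 2 / √t * G := by
    have : √t / t = 1 / √t := by rw [div_eq_div_iff ht.ne' hst.ne']; linarith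
    have e2 : 2 * √t * G / t = 2 / √t * G := by
      calc 2 * √t * G / t = 2 * G * (√t / t) := by ring
        _ = _ := by rw [this]; ring
    rw [add_div, add_div, e2]
    field_simp
  rw [e1]
  have e3 : δ * (2 / t) + 2 * δ = ε := by rw [hδ']; field_simp
  linarith

end Fin1
end GaugeLog

namespace GaugeLog
open scoped ContDiff

/-! ### Truncation of a general log-concave measure -/

section Fin2
open Filter Topology
variable {n : ℕ} {μ : Measure (E n)} {f : E n → ℝ} {p : E n → ℝ}

lemma int_dens (hp : Measurable p) (h0 : ∀ x, 0 ≤ p x) (φ : E n → ℝ) :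
    ∫ x, φ x ∂(volume.withDensity fun x => ENNReal.ofReal (p x)) = ∫ x, p x * φ x := by
  rw [integral_withDensity_eq_integral_toReal_smul (by fun_prop) (by simp)]
  exact integral_congr_ae (.of_forall fun x => by simp [ENNReal.toReal_ofReal (h0 x)])

lemma integrable_dens (hp : Measurable p) (h0 : ∀ x, 0 ≤ p x) {φ : E n → ℝ}
    (h : Integrable φ (volume.withDensity fun x => ENNReal.ofReal (p x))) :
    Integrable fun x => p x * φ x := by
  rw [integrable_withDensity_iff_integrable_smul' (by fun_prop) (by simp)] at h
  refine h.congr (.of_forall fun x => ?_)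
  simp [ENNReal.toReal_ofReal (h0 x)]

/-- The density `p` capped at height `k` and cut off outside the ball of radius `k`. -/
def Tr (p : E n → ℝ) (k : ℕ) (x : E n) : ℝ := if ‖x‖ ≤ k then min (p x) k else 0

/-- The mass of the truncated density. -/
def ms (p : E n → ℝ) (k : ℕ) : ℝ := ∫ x, Tr p k x

/-- The normalized truncation of the measure with density `p`. -/
def muk (p : E n → ℝ) (k : ℕ) : Measure (E n) :=
  volume.withDensity fun x => ENNReal.ofReal (Tr p k x / ms p k)

lemma Tr_nonneg (h0 : ∀ x, 0 ≤ p x) (k : ℕ) (x : E n) : 0 ≤ Tr p k x := by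
  rw [Tr]; split_ifs
  · exact le_min (h0 x) (Nat.cast_nonneg k)
  · exact le_rfl

lemma Tr_le (h0 : ∀ x, 0 ≤ p x) (k : ℕ) (x : E n) : Tr p k x ≤ p x := by
  rw [Tr]; split_ifs
  · exact min_le_left _ _
  · exact h0 x

lemma Tr_le_k (k : ℕ) (x : E n) : Tr p k x ≤ k := by
  rw [Tr]; split_ifs
  · exact min_le_right _ _
  · exact Nat.cast_nonneg k

lemma Tr_meas (hp : Measurable p) (k : ℕ) : Measurable (Tr p k) :=
  Measurable.ite (measurableSet_le measurable_norm measurable_const)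
    (hp.min measurable_const) measurable_const

lemma Tr_tendsto (x : E n) : Tendsto (fun k => Tr p k x) atTop (𝓝 (p x)) := by
  refine tendsto_const_nhds.congr' ?_
  filter_upwards [eventually_ge_atTop ⌈max ‖x‖ (p x)⌉₊] with k hk
  have := (Nat.le_ceil _).trans (Nat.cast_le (α := ℝ).2 hk)
  rw [Tr, if_pos ((le_max_left _ _).trans this), min_eq_left ((le_max_right _ _).trans this)]

lemma Tr_lc (hp : IsLogConcaveDensity p) (k : ℕ) {m : ℝ} (hm : 0 < m) :
    IsLogConcaveDensity fun x => Tr p k x / m := by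
  have h0 := Tr_nonneg hp.1 k
  refine ⟨fun x => div_nonneg (h0 x) hm.le, fun x y t ht ht1 => ?_⟩
  have ht' : 0 ≤ 1 - t := by linarith
  have e : (Tr p k x / m) ^ t * (Tr p k y / m) ^ (1 - t)
      = (Tr p k x ^ t * Tr p k y ^ (1 - t)) / m := by
    rw [div_rpow (h0 x) hm.le, div_rpow (h0 y) hm.le, div_mul_div_comm, ← rpow_add hm]
    simp
  rw [e]
  refine div_le_div_of_nonneg_right ?_ hm.le
  rcases ht.eq_or_lt with rfl | ht2
  · simp
  rcases ht1.eq_or_lt with rfl | ht3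
  · simp
  by_cases hx : ‖x‖ ≤ k
  swap
  · have : Tr p k x = 0 := if_neg hx
    rw [this, zero_rpow ht2.ne', zero_mul]; exact h0 _
  by_cases hy : ‖y‖ ≤ k
  swap
  · have : Tr p k y = 0 := if_neg hy
    rw [this, zero_rpow (by linarith), mul_zero]; exact h0 _
  have hz : ‖t • x + (1 - t) • y‖ ≤ k := by
    refine (norm_add_le _ _).trans ?_
    rw [norm_smul, norm_smul, Real.norm_of_nonneg ht, Real.norm_of_nonneg ht']
    nlinarith
  have hxk := h0 x
  have hyk := h0 y
  rw [show Tr p k (t • x + (1 - t) • y) = min (p (t • x + (1 - t) • y)) k from if_pos hz]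
  refine le_min ?_ ?_
  · refine le_trans ?_ (hp.2 x y t ht ht1)
    exact mul_le_mul (rpow_le_rpow hxk (Tr_le hp.1 k x) ht)
      (rpow_le_rpow hyk (Tr_le hp.1 k y) ht') (rpow_nonneg hyk _) (rpow_nonneg (hp.1 x) _)
  · have hk : (0 : ℝ) ≤ k := Nat.cast_nonneg k
    have : (k : ℝ) = (k : ℝ) ^ t * (k : ℝ) ^ (1 - t) := by
      rw [← rpow_add_of_nonneg hk ht ht']; simp
    rw [this]
    exact mul_le_mul (rpow_le_rpow hxk (Tr_le_k k x) ht)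
      (rpow_le_rpow hyk (Tr_le_k k y) ht') (rpow_nonneg hyk _) (rpow_nonneg hk _)

lemma Tr_tendsto_int (hp : Measurable p) (h0 : ∀ x, 0 ≤ p x) {φ : E n → ℝ} (hφ : Measurable φ)
    (h : Integrable (fun x => p x * φ x)) :
    Tendsto (fun k => ∫ x, Tr p k x * φ x) atTop (𝓝 (∫ x, p x * φ x)) := by
  refine tendsto_integral_of_dominated_convergence (fun x => ‖p x * φ x‖) (fun k => ?_) h.norm
    (fun k => .of_forall fun x => ?_) (.of_forall fun x => (Tr_tendsto x).mul_const _)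
  · exact ((Tr_meas hp k).mul hφ).aestronglyMeasurable
  · rw [norm_mul, norm_mul]
    refine mul_le_mul_of_nonneg_right ?_ (norm_nonneg _)
    rw [Real.norm_of_nonneg (Tr_nonneg h0 k x), Real.norm_of_nonneg (h0 x)]
    exact Tr_le h0 k x

/-- The normalized truncations are covered by the compactly supported case. -/
lemma muk_lcm (hp : Measurable p) (hlc : IsLogConcaveDensity p) (hi : Integrable p) {k : ℕ}
    (hm : 0 < ms p k) :
    LCM (muk p k) k (fun x => Tr p k x / ms p k) (k / ms p k) := by
  have h0 := Tr_nonneg hlc.1 k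
  have hTm := Tr_meas hp k
  have hTi : Integrable (Tr p k) := hi.mono' hTm.aestronglyMeasurable (.of_forall fun x => by
    rw [Real.norm_of_nonneg (h0 x)]; exact Tr_le hlc.1 k x)
  refine ⟨⟨⟨?_⟩, ?_⟩, ⟨hTm.div_const _, Tr_lc hlc k hm,
    fun x => div_le_div_of_nonneg_right (Tr_le_k k x) hm.le, ?_⟩, rfl⟩
  · rw [muk, withDensity_apply _ MeasurableSet.univ, Measure.restrict_univ,
      ← ofReal_integral_eq_lintegral_ofReal (hTi.div_const _)
        (.of_forall fun x => div_nonneg (h0 x) hm.le), integral_div]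
    change ENNReal.ofReal (ms p k / ms p k) = 1
    rw [div_self hm.ne']; simp
  · rw [muk, ae_withDensity_iff (by fun_prop)]
    refine .of_forall fun x hx => ?_
    by_contra hc
    exact hx (by simp [Tr, hc])
  · by_contra! hc
    have : ∀ x, Tr p k x = 0 := fun x => by
      have := hc x
      rw [div_le_iff₀ hm, zero_mul] at this
      exact le_antisymm this (h0 x)
    rw [ms] at hm
    simp [this] at hm

lemma muk_int (hp : Measurable p) (h0 : ∀ x, 0 ≤ p x) {k : ℕ} (hm : 0 < ms p k) (φ : E n → ℝ) :
    ∫ x, φ x ∂(muk p k) = (∫ x, Tr p k x * φ x) / ms p k := by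
  rw [muk, int_dens ((Tr_meas hp k).div_const _) fun x => div_nonneg (Tr_nonneg h0 k x) hm.le,
    ← integral_div]
  exact integral_congr_ae (.of_forall fun x => by simp; ring)

lemma mt_zero [IsProbabilityMeasure μ] (φ : E n → ℝ) : mt μ φ 0 = ∫ x, φ x ∂μ := by
  simp [mt, Zt, Nt]

/-- A covariance matrix with entries close to those of the identity satisfies `Near`. -/
lemma near_of_entries {ε : ℝ} (hε : ε * n ≤ kap)
    (h : ∀ i j, |Am μ 0 i j - if i = j then 1 else 0| ≤ ε) : Near μ := by
  intro b
  have e : (∑ i, ∑ j, b i * b j * Am μ 0 i j) - ‖b‖ ^ 2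
      = ∑ i, ∑ j, b i * b j * (Am μ 0 i j - if i = j then 1 else 0) := by
    rw [EuclideanSpace.real_norm_sq_eq]
    simp only [mul_sub, Finset.sum_sub_distrib, mul_ite, mul_one, mul_zero, Finset.sum_ite_eq,
      Finset.mem_univ, if_true, pow_two]
  rw [e]
  have h1 : |∑ i, ∑ j, b i * b j * (Am μ 0 i j - if i = j then 1 else 0)|
      ≤ ∑ i, ∑ j, (b i ^ 2 + b j ^ 2) / 2 * ε := by
    refine (Finset.abs_sum_le_sum_abs _ _).trans (Finset.sum_le_sum fun i _ => ?_)
    refine (Finset.abs_sum_le_sum_abs _ _).trans (Finset.sum_le_sum fun j _ => ?_)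
    rw [abs_mul]
    refine mul_le_mul ?_ (h i j) (abs_nonneg _) (by positivity)
    rw [abs_le]; constructor <;> nlinarith [sq_nonneg (b i + b j), sq_nonneg (b i - b j)]
  refine h1.trans ?_
  have h2 : ∑ i, ∑ j, (b i ^ 2 + b j ^ 2) / 2 * ε = ε * n * ‖b‖ ^ 2 := by
    simp only [← Finset.sum_mul, ← Finset.sum_div, Finset.sum_add_distrib, Finset.sum_const,
      Finset.card_univ, Fintype.card_fin, nsmul_eq_mul, ← Finset.mul_sum,
      EuclideanSpace.real_norm_sq_eq]
    ring
  rw [h2]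
  exact mul_le_mul_of_nonneg_right hε (by positivity)

/-- Weak convergence of the truncations, in the form of convergence of integrals. -/
lemma muk_tendsto (hp : Measurable p) (hlc : IsLogConcaveDensity p)
    (hμ : μ = volume.withDensity fun x => ENNReal.ofReal (p x)) [IsProbabilityMeasure μ] :
    Integrable p ∧ (∀ᶠ k in atTop, 0 < ms p k) ∧ ∀ φ : E n → ℝ, Measurable φ → Integrable φ μ →
      Tendsto (fun k => ∫ x, φ x ∂(muk p k)) atTop (𝓝 (∫ x, φ x ∂μ)) := by
  have key : ∀ φ : E n → ℝ, Measurable φ → Integrable φ μ →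
      Tendsto (fun k => ∫ x, Tr p k x * φ x) atTop (𝓝 (∫ x, φ x ∂μ)) := fun φ hm hi => by
    have i1 : Integrable fun x => p x * φ x := integrable_dens hp hlc.1 (by rw [← hμ]; exact hi)
    have := Tr_tendsto_int hp hlc.1 hm i1
    rwa [← int_dens hp hlc.1, ← hμ] at this
  have hip : Integrable p := by
    have := integrable_dens hp hlc.1 (φ := fun _ => 1) (by rw [← hμ]; exact integrable_const _)
    simpa using this
  have h1 : Tendsto (fun k => ms p k) atTop (𝓝 1) := by
    have := key (fun _ => 1) measurable_const (integrable_const _)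
    simpa [ms] using this
  have hev : ∀ᶠ k in atTop, 0 < ms p k := h1.eventually (lt_mem_nhds one_pos)
  refine ⟨hip, hev, fun φ hm hi => ?_⟩
  have h2 := (key φ hm hi).div h1 one_ne_zero
  rw [div_one] at h2
  refine h2.congr' ?_
  filter_upwards [hev] with k hk
  exact (muk_int hp hlc.1 hk φ).symm

/-- Both halves of the comparison, with explicit constants. -/
theorem comparison (hn : 2 ≤ n) [IsProbabilityMeasure μ] (hl : IsLogConcaveMeasure μ)
    (hi : IsIsotropicMeasure μ) (hf : IsGauge f) {t : ℝ}
    (ht : 0 < t) (ht1 : 16 * C1 * log (n + 1) * √t ≤ 1) :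
    √t / 8 * (∫ g, f g ∂(stdGaussian n)) ≤ ∫ x, f x ∂μ ∧
    ∫ x, f x ∂μ ≤ ((3 + C2) * √t + 2 / √t) * ∫ g, f g ∂(stdGaussian n) := by
  obtain ⟨p, hp, hlc, hμ⟩ := hl
  obtain ⟨hip, hev, hconv⟩ := muk_tendsto hp hlc hμ
  have hcm : ∀ i : Fin n, Measurable fun x : E n => x i := fun i => (coord_cont i).measurable
  -- a second moment equal to `1` cannot come from the junk value of a divergent integral
  have isq : ∀ i, MemLp (fun x : E n => x i) 2 μ := fun i => by
    rw [memLp_two_iff_integrable_sq (hcm i).aestronglyMeasurable]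
    by_contra hc
    have h1 := hi.2 i i
    simp only [if_true, ← pow_two] at h1
    rw [integral_undef hc] at h1
    exact zero_ne_one h1
  have i1 : ∀ i, Integrable (fun x : E n => x i) μ := fun i => (isq i).integrable one_le_two
  have i2 : ∀ i j, Integrable (fun x : E n => x i * x j) μ := fun i j =>
    (isq i).integrable_mul (isq j)
  have hcf := gauge_cont hf
  have ifμ : Integrable f μ := by
    obtain ⟨L, hL0, hL⟩ := gauge_le hf
    refine Integrable.mono' (g := fun x : E n => L * ∑ j, |x j|)
      ((integrable_finsetSum _ fun j _ => (i1 j).abs).const_mul L) hcf.aestronglyMeasurable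
      (.of_forall fun x => ?_)
    rw [Real.norm_of_nonneg (hf.1 x)]
    exact (hL x).trans (mul_le_mul_of_nonneg_left (norm_le_sum x) hL0)
  have hprob : ∀ᶠ k in atTop, IsProbabilityMeasure (muk p k) :=
    hev.mono fun k hk => (muk_lcm hp hlc hip hk).cmp.prob
  have tav : ∀ i, Tendsto (fun k => av (muk p k) i 0) atTop (𝓝 0) := fun i => by
    have h1 := hconv _ (hcm i) (i1 i)
    rw [hi.1 i] at h1
    refine h1.congr' (hprob.mono fun k hk => ?_)
    exact (mt_zero _).symm
  have tAm : ∀ i j, Tendsto (fun k => Am (muk p k) 0 i j - if i = j then 1 else 0) atTop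
      (𝓝 0) := fun i j => by
    have h1 := hconv (fun x => x i * x j) ((hcm i).mul (hcm j)) (i2 i j)
    rw [hi.2 i j] at h1
    have h2 := (h1.sub ((tav i).mul (tav j))).sub_const (if i = j then (1 : ℝ) else 0)
    simp only [mul_zero, sub_zero, sub_self] at h2
    refine h2.congr' (hprob.mono fun k hk => ?_)
    simp only [Am_apply, mt_zero]
  have hnear : ∀ᶠ k in atTop, Near (muk p k) := by
    have hn0 : (0 : ℝ) < n := by positivity
    have hε : 0 < kap / n := div_pos kap_pos hn0
    have : ∀ᶠ k in atTop, ∀ i j, |Am (muk p k) 0 i j - if i = j then 1 else 0| ≤ kap / n := by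
      rw [eventually_all]; intro i; rw [eventually_all]; intro j
      have h1 := (tAm i j).abs
      rw [abs_zero] at h1
      exact (h1.eventually (gt_mem_nhds hε)).mono fun k hk => hk.le
    refine this.mono fun k hk => near_of_entries (le_of_eq ?_) hk
    field_simp
  have tbar : Tendsto (fun k => bar (muk p k) 0) atTop (𝓝 0) := by
    have h1 : Tendsto (fun k => fun j => av (muk p k) j 0) atTop (𝓝 (0 : Fin n → ℝ)) :=
      tendsto_pi_nhds.2 tav
    have h2 := ((PiLp.continuous_toLp 2 fun _ : Fin n => ℝ).tendsto 0).comp h1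
    exact h2
  have tf1 : Tendsto (fun k => f (bar (muk p k) 0)) atTop (𝓝 0) := by
    have := (hcf.tendsto 0).comp tbar
    rwa [gauge_zero hf] at this
  have tf2 : Tendsto (fun k => f (-bar (muk p k) 0)) atTop (𝓝 0) := by
    have := (hcf.tendsto (-0)).comp tbar.neg
    rwa [neg_zero, gauge_zero hf] at this
  have tf := hconv f hcf.measurable ifμ
  constructor
  · have h1 := tf2.const_sub (√t / 8 * (∫ g, f g ∂(stdGaussian n)))
    rw [sub_zero] at h1
    refine le_of_tendsto_of_tendsto h1 tf ?_
    filter_upwards [hev, hnear] with k hk hN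
    exact (muk_lcm hp hlc hip hk).lower hN hn hf ht ht1
  · have h1 := tf1.add_const (((3 + C2) * √t + 2 / √t) * ∫ g, f g ∂(stdGaussian n))
    rw [zero_add] at h1
    refine le_of_tendsto_of_tendsto tf h1 ?_
    filter_upwards [hev, hnear] with k hk hN
    exact (muk_lcm hp hlc hip hk).upper hN hn hf ht ht1

end Fin2
end GaugeLog

open GaugeLog in
/-- Any isotropic log-concave random vector is sandwiched between Gaussians in the gauge
order, up to `log(n+1)` factors:
`(c / log(n+1)) E‖G‖ ≤ E‖X‖ ≤ C log(n+1) E‖G‖` for every gauge function `‖·‖`. -/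
theorem gauge_comparison_log :
    ∃ c C : ℝ, 0 < c ∧ 0 < C ∧
      ∀ n : ℕ, 2 ≤ n → ∀ μ : Measure (EuclideanSpace ℝ (Fin n)),
        IsProbabilityMeasure μ → IsLogConcaveMeasure μ → IsIsotropicMeasure μ →
        ∀ f : EuclideanSpace ℝ (Fin n) → ℝ, IsGauge f →
          c / Real.log (n + 1) * ∫ x, f x ∂(stdGaussian n) ≤ ∫ x, f x ∂μ ∧
            ∫ x, f x ∂μ ≤ C * Real.log (n + 1) * ∫ x, f x ∂(stdGaussian n) := by
  have h1 := C1_pos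
  have h2 : 0 ≤ C2 := by rw [C2]; positivity
  refine ⟨1 / (128 * C1), (3 + C2) / (16 * C1) + 32 * C1, by positivity, by positivity,
    fun n hn μ hμ hl hi f hf => ?_⟩
  have hlog : 1 ≤ Real.log (n + 1) := by
    rw [Real.le_log_iff_exp_le (by positivity)]
    have : (2 : ℝ) ≤ n := by exact_mod_cast hn
    linarith [Real.exp_one_lt_d9]
  set ℓ := Real.log (n + 1)
  have hℓ : 0 < ℓ := by linarith
  -- `s ^ 2` is the time up to which the covariance stays comparable to the identity
  set s : ℝ := 1 / (16 * C1 * ℓ) with hs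
  have hs0 : 0 < s := by positivity
  have hsq : √(s ^ 2) = s := Real.sqrt_sq hs0.le
  have hG : 0 ≤ ∫ x, f x ∂(stdGaussian n) := integral_nonneg hf.1
  have key := comparison hn hl hi hf (t := s ^ 2) (by positivity) (by
    rw [hsq]; change 16 * C1 * ℓ * s ≤ 1
    rw [hs]; field_simp; exact le_rfl)
  rw [hsq] at key
  refine ⟨le_trans (le_of_eq ?_) key.1, key.2.trans (mul_le_mul_of_nonneg_right ?_ hG)⟩
  · congr 1; rw [hs]; field_simp; norm_num
  · have e1 : 2 / s = 32 * C1 * ℓ := by rw [hs]; field_simp; norm_num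
    have e2 : (3 + C2) * s ≤ (3 + C2) / (16 * C1) * ℓ := by
      have : s ≤ 1 / (16 * C1) * ℓ := by
        calc s ≤ 1 / (16 * C1) := by
              rw [hs]
              exact one_div_le_one_div_of_le (by positivity) (le_mul_of_one_le_right (by positivity) hlog)
          _ ≤ _ := le_mul_of_one_le_right (by positivity) hlog
      calc (3 + C2) * s ≤ (3 + C2) * (1 / (16 * C1) * ℓ) :=
            mul_le_mul_of_nonneg_left this (by positivity)
        _ = _ := by ring
    rw [e1]; linarith

end
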